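/- Let m, n ≥ 2. Let v₁, ..., vₙ ∈ ℝⁿ be linearly independent and let F : ℝⁿ → ℝᵐ be an injection that maps each line in ℒ(v₁, ..., vₙ) onto a line. Then there exists a basis u₁, ..., uₙ of ℝⁿ (one may take uᵢ = vᵢ) such that for every x = Σᵢ αᵢuᵢ, F(x) = Σ_{δ ∈ {0,1}ⁿ} u_δ ∏ᵢ fᵢ(αᵢ)^{δᵢ}, where u_δ ∈ ℝᵐ for each δ ∈ {0,1}ⁿ, and f₁, ..., fₙ : ℝ → ℝ are bijections with fᵢ(0) = 0 and fᵢ(1) = 1 for i = 1, ..., n. Moreover m ≥ n, and if m = n then F is a bijection. -/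

import Mathlib

/-- The line through `a` in direction `b`. -/
def lineThru {k : ℕ} (a b : Fin k → ℝ) : Set (Fin k → ℝ) :=
  {x | ∃ t : ℝ, x = a + t • b}

/-- A subset of `ℝᵏ` is a line if it is of the form `a + ℝ b` with `b ≠ 0`. -/
def IsLine {k : ℕ} (s : Set (Fin k → ℝ)) : Prop :=
  ∃ a b : Fin k → ℝ, b ≠ 0 ∧ s = lineThru a b


open Polynomial
set_option linter.all false
set_option linter.unusedSectionVars false
set_option linter.unusedSimpArgs false

namespace BBR

/-- pseudo-division -/
theorem pseudo_div {A : Type*} [CommRing A] [IsDomain A] (Θ : A[X]) (hd : 0 < Θ.natDegree) :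
    ∀ (d : ℕ) (P : A[X]), P.natDegree ≤ d → ∃ (N : ℕ) (Q S : A[X]),
      C (Θ.leadingCoeff ^ N) * P = Θ * Q + S ∧ S.natDegree < Θ.natDegree := by
  intro d
  induction d with
  | zero =>
    intro P hP
    exact ⟨0, 0, P, by simp, by omega⟩
  | succ d ih =>
    intro P hP
    by_cases h : P.natDegree < Θ.natDegree
    · exact ⟨0, 0, P, by simp, h⟩
    push Not at h
    by_cases h2 : P.natDegree ≤ d
    · exact ih P h2
    have hPd : P.natDegree = d + 1 := by omega
    let T : A[X] := C P.leadingCoeff * X ^ (P.natDegree - Θ.natDegree)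
    have hdeg : (C Θ.leadingCoeff * P - Θ * T).natDegree ≤ d := by
      rw [natDegree_le_iff_coeff_eq_zero]
      intro k hk
      have e1 : (Θ * T).natDegree ≤ d + 1 := by
        refine natDegree_mul_le.trans ?_
        have : T.natDegree ≤ P.natDegree - Θ.natDegree := natDegree_C_mul_X_pow_le _ _
        omega
      have e2 : (C Θ.leadingCoeff * P).natDegree ≤ d + 1 := (natDegree_C_mul_le _ _).trans hP
      by_cases hk2 : d + 1 < k
      · rw [coeff_sub, coeff_eq_zero_of_natDegree_lt (by omega), coeff_eq_zero_of_natDegree_lt (by omega), sub_zero]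
      have hk3 : k = Θ.natDegree + (P.natDegree - Θ.natDegree) := by omega
      have : (Θ * T).coeff k = P.leadingCoeff * Θ.leadingCoeff := by
        simp only [T]
        rw [← mul_assoc, hk3, coeff_mul_X_pow, mul_comm Θ, coeff_C_mul]; rfl
      rw [coeff_sub, this, coeff_C_mul]
      have hk4 : k = P.natDegree := by omega
      rw [hk4]
      rw [coeff_natDegree, mul_comm, sub_self]
    obtain ⟨N, Q, S, h3, h4⟩ := ih _ hdeg
    refine ⟨N + 1, Q + C (Θ.leadingCoeff ^ N) * T, S, ?_, h4⟩
    have : C (Θ.leadingCoeff ^ (N + 1)) * P = C (Θ.leadingCoeff ^ N) * (C Θ.leadingCoeff * P - Θ * T)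
        + C (Θ.leadingCoeff ^ N) * (Θ * T) := by
      rw [pow_succ, C_mul]; ring
    rw [this, h3]; ring

section BL
variable {A R : Type*} [CommRing A] [IsDomain A] [CommRing R] [IsDomain R] [Algebra A R]

def Prim (A : Type*) {R : Type*} [CommRing A] [CommRing R] [Algebra A R] (θ : R) : Prop :=
  ∀ r : R, ∃ a : A, a ≠ 0 ∧ ∃ P : A[X], a • r = aeval θ P

/-- the data of the bijection lemma -/
structure BLData (A : Type*) {R : Type*} [CommRing A] [CommRing R] [Algebra A R] (θ : R)
    (h : A) (Θ : A[X]) : Prop where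
  root : aeval θ Θ = 0
  ne : h ≠ 0
  lc : ∀ b : A →+* ℝ, b h ≠ 0 → b Θ.leadingCoeff ≠ 0
  simple : ∀ b : A →+* ℝ, b h ≠ 0 → ∀ t, (Θ.map b).eval t = 0 → (derivative (Θ.map b)).eval t ≠ 0
  surj : ∀ b : A →+* ℝ, b h ≠ 0 → ∀ t, (Θ.map b).eval t = 0 →
    ∃ x : R →+* ℝ, x.comp (algebraMap A R) = b ∧ x θ = t
  inj : ∀ b : A →+* ℝ, b h ≠ 0 → ∀ x y : R →+* ℝ, x.comp (algebraMap A R) = b →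
    y.comp (algebraMap A R) = b → x θ = y θ → x = y

theorem eval_root {θ : R} (Θ : A[X]) (b : A →+* ℝ) (x : R →+* ℝ)
    (hx : x.comp (algebraMap A R) = b) : x (aeval θ Θ) = (Θ.map b).eval (x θ) := by
  rw [aeval_def, eval_map, hom_eval₂, hx]

theorem exists_BL [CharZero R] [Algebra.IsAlgebraic A R] (hinj : Function.Injective (algebraMap A R))
    (θ : R) (hθ : Prim A θ) (s : Finset R) (hs : Algebra.adjoin A (s : Set R) = ⊤) :
    ∃ h Θ, BLData A θ h Θ := by
  classical
  -- minimal polynomial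
  have hex : ∃ d : ℕ, ∃ Θ : A[X], Θ ≠ 0 ∧ aeval θ Θ = 0 ∧ Θ.natDegree = d := by
    obtain ⟨p, hp, hp2⟩ := Algebra.IsAlgebraic.isAlgebraic (R := A) θ
    exact ⟨_, p, hp, hp2, rfl⟩
  obtain ⟨Θ, hΘ0, hΘr, hΘd⟩ := Nat.find_spec hex
  have hmin : ∀ P : A[X], P.natDegree < Θ.natDegree → aeval θ P = 0 → P = 0 := by
    intro P hP hP2
    by_contra h0
    exact Nat.find_min hex (m := P.natDegree) (by omega) ⟨P, h0, hP2, rfl⟩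
  have hpos : 0 < Θ.natDegree := by
    rcases Nat.eq_zero_or_pos Θ.natDegree with h | h
    · exfalso
      rw [eq_C_of_natDegree_eq_zero h, aeval_C] at hΘr
      have := (map_eq_zero_iff _ hinj).1 hΘr
      apply hΘ0
      rw [eq_C_of_natDegree_eq_zero h, this, C_0]
    · exact h
  -- derivative
  have hchar : CharZero A := by
    refine ⟨fun a b hab => ?_⟩
    have := congrArg (algebraMap A R) hab
    simpa using this
  have hder : aeval θ (derivative Θ) ≠ 0 := by
    intro h0
    have := hmin _ (natDegree_derivative_lt (by omega)) h0
    have := derivative_eq_zero.1 this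
    omega
  obtain ⟨r, hr0, w, hw⟩ := IsAlgebraic.exists_nonzero_dvd (Algebra.IsAlgebraic.isAlgebraic (R := A) (aeval θ (derivative Θ))) (mem_nonZeroDivisors_of_ne_zero hder)
  choose a ha P hP using hθ
  have hlc : Θ.leadingCoeff ≠ 0 := leadingCoeff_ne_zero.2 hΘ0
  let h : A := Θ.leadingCoeff * r * (a w) * ∏ y ∈ s, a y
  have hh : h ≠ 0 := by
    refine mul_ne_zero (mul_ne_zero (mul_ne_zero hlc hr0) (ha _)) (Finset.prod_ne_zero_iff.2 fun y _ => ha y)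
  have hrep : ∀ y : R, ∃ (N : ℕ) (Q : A[X]), h ^ N • y = aeval θ Q := by
    intro y
    have hy : y ∈ Algebra.adjoin A (s : Set R) := by rw [hs]; trivial
    induction hy using Algebra.adjoin_induction with
    | mem y hy =>
      obtain ⟨c, hc⟩ : a y ∣ h := Dvd.dvd.mul_left (Finset.dvd_prod_of_mem a hy) _
      refine ⟨1, C c * P y, ?_⟩
      rw [pow_one, hc, mul_comm, mul_smul, hP, map_mul, aeval_C, Algebra.smul_def]
    | algebraMap c => exact ⟨0, C c, by simp⟩
    | add y z _ _ hy hz =>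
      obtain ⟨N, Q, h1⟩ := hy
      obtain ⟨M, Q', h2⟩ := hz
      refine ⟨N + M, C (h ^ M) * Q + C (h ^ N) * Q', ?_⟩
      simp only [map_add, map_mul, aeval_C, ← h1, ← h2, Algebra.smul_def, map_pow]
      ring
    | mul y z _ _ hy hz =>
      obtain ⟨N, Q, h1⟩ := hy
      obtain ⟨M, Q', h2⟩ := hz
      refine ⟨N + M, Q * Q', ?_⟩
      simp only [map_mul, ← h1, ← h2, Algebra.smul_def, map_pow]
      ring
  have hker : ∀ b : A →+* ℝ, b h ≠ 0 → ∀ t, (Θ.map b).eval t = 0 → ∀ Q : A[X], aeval θ Q = 0 →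
      (Q.map b).eval t = 0 := by
    intro b hb t ht Q hQ
    obtain ⟨N, Q1, S, h1, h2⟩ := pseudo_div Θ hpos _ Q le_rfl
    have hS : aeval θ S = 0 := by
      have := congrArg (aeval θ) h1
      simpa [hQ, hΘr] using this.symm
    rw [hmin S h2 hS, add_zero] at h1
    have h3 := congrArg (fun q : A[X] => (q.map b).eval t) h1
    simp only [Polynomial.map_mul, eval_mul, ht, zero_mul, Polynomial.map_C, eval_C] at h3
    rcases mul_eq_zero.1 h3 with h4 | h4
    · exfalso
      rw [map_pow] at h4
      apply hb
      simp [h, eq_zero_of_pow_eq_zero h4]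
    · exact h4
  refine ⟨h, Θ, hΘr, hh, ?_, ?_, ?_, ?_⟩
  · intro b hb h0
    apply hb; simp [h, h0]
  · intro b hb t ht h0
    have := hker b hb t ht (derivative Θ * P w - C (a w * r)) (by
      rw [map_sub, map_mul, ← hP, aeval_C, map_mul, hw, Algebra.smul_def]; ring)
    rw [Polynomial.map_sub, eval_sub, Polynomial.map_mul, eval_mul, ← derivative_map, h0] at this
    simp only [zero_mul, zero_sub, Polynomial.map_C, eval_C, neg_eq_zero] at this
    rw [map_mul] at this
    apply hb
    simp only [h, map_mul]
    rcases mul_eq_zero.1 this with h4 | h4 <;> simp [h4]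
  · intro b hb t ht
    choose N Q hNQ using hrep
    let x : R → ℝ := fun y => ((Q y).map b).eval t / (b h) ^ (N y)
    have key : ∀ (y : R) (M : ℕ) (S : A[X]), h ^ M • y = aeval θ S → x y * (b h) ^ M = (S.map b).eval t := by
      intro y M S hS
      have := hker b hb t ht (C (h ^ M) * Q y - C (h ^ N y) * S) (by
        simp only [map_sub, map_mul, ← hS, ← hNQ, aeval_C, Algebra.smul_def, map_pow]; ring)
      simp only [Polynomial.map_sub, Polynomial.map_mul, eval_sub, eval_mul, Polynomial.map_C, eval_C] at this
      rw [map_pow, map_pow] at this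
      simp only [x]
      have hb' := pow_ne_zero (N y) hb
      field_simp
      linarith
    have hA : ∀ c : A, x (algebraMap A R c) = b c := by
      intro c
      have := key (algebraMap A R c) 0 (C c) (by simp)
      simpa using this
    refine ⟨{ toFun := x, map_one' := ?_, map_mul' := ?_, map_zero' := ?_, map_add' := ?_ }, ?_, ?_⟩
    · simpa using hA 1
    · intro y z
      have := key (y * z) (N y + N z) (Q y * Q z) (by
        simp only [map_mul, ← hNQ, Algebra.smul_def, map_pow]; ring)
      rw [Polynomial.map_mul, eval_mul, ← key y _ _ (hNQ y), ← key z _ _ (hNQ z)] at this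
      have hb' := pow_ne_zero (N y + N z) hb
      apply mul_right_cancel₀ hb'
      rw [this]; ring
    · simpa using hA 0
    · intro y z
      have := key (y + z) (N y + N z) (C (h ^ N z) * Q y + C (h ^ N y) * Q z) (by
        simp only [map_add, map_mul, aeval_C, ← hNQ, Algebra.smul_def, map_pow]; ring)
      simp only [Polynomial.map_add, Polynomial.map_mul, eval_add, eval_mul, Polynomial.map_C, eval_C] at this
      rw [← key y _ _ (hNQ y), ← key z _ _ (hNQ z)] at this
      have hb' := pow_ne_zero (N y + N z) hb
      apply mul_right_cancel₀ hb'
      rw [this, map_pow, map_pow]; ring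
    · ext c; exact hA c
    · have := key θ 0 X (by simp)
      simpa using this
  · intro b hb x y hx hy hxy
    ext z
    obtain ⟨N, Q, hQ⟩ := hrep z
    have e : x (algebraMap A R (h ^ N)) * x z = y (algebraMap A R (h ^ N)) * y z := by
      rw [← map_mul, ← map_mul, ← Algebra.smul_def, hQ, eval_root Q b x hx, eval_root Q b y hy, hxy]
    have e1 : x (algebraMap A R (h ^ N)) = (b h) ^ N := by rw [← hx]; simp
    have e2 : y (algebraMap A R (h ^ N)) = (b h) ^ N := by rw [← hy]; simp
    rw [e1, e2] at e
    exact mul_left_cancel₀ (pow_ne_zero N hb) e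
end BL
end BBR


open Polynomial
set_option linter.all false
namespace BBR
open IntermediateField in
theorem two_prim {K L : Type*} [Field K] [Field L] [Algebra K L] [CharZero K] (α β : L)
    (hα : IsIntegral K α) (hβ : IsIntegral K β) (S : Set K) (hS : S.Infinite) :
    ∃ c ∈ S, α ∈ Algebra.adjoin K {α + c • β} ∧ β ∈ Algebra.adjoin K {α + c • β} := by
  classical
  let M := IntermediateField.adjoin K ({α, β} : Set L)
  have hfd : FiniteDimensional K M := by
    apply IntermediateField.finiteDimensional_adjoin
    rintro x (rfl | rfl)
    · exact hα
    · exact hβ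
  have hfin : Finite (IntermediateField K M) :=
    Field.finite_intermediateField_of_exists_primitive_element K M (Field.exists_primitive_element K M)
  let a : M := ⟨α, IntermediateField.subset_adjoin K _ (by simp)⟩
  let b : M := ⟨β, IntermediateField.subset_adjoin K _ (by simp)⟩
  have : Infinite S := hS.to_subtype
  obtain ⟨c, c', hne, heq⟩ := Finite.exists_ne_map_eq_of_infinite (fun c : S => K⟮a + (c : K) • b⟯)
  have hne' : (c : K) - c' ≠ 0 := fun h => hne (Subtype.ext (sub_eq_zero.1 h))
  have h1 : a + (c : K) • b ∈ K⟮a + (c : K) • b⟯ := mem_adjoin_simple_self K _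
  have h2 : a + (c' : K) • b ∈ K⟮a + (c : K) • b⟯ := by
    have heq' : K⟮a + (c : K) • b⟯ = K⟮a + (c' : K) • b⟯ := heq
    rw [heq']; exact mem_adjoin_simple_self K _
  have h3 : b ∈ K⟮a + (c : K) • b⟯ := by
    have := IntermediateField.smul_mem _ (x := ((c : K) - c')⁻¹) (sub_mem h1 h2)
    have e : a + (c : K) • b - (a + (c' : K) • b) = ((c : K) - c') • b := by
      rw [sub_smul]; abel
    rwa [e, smul_smul, inv_mul_cancel₀ hne', one_smul] at this
  have h4 : a ∈ K⟮a + (c : K) • b⟯ := by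
    have := sub_mem h1 (IntermediateField.smul_mem _ (x := (c : K)) h3)
    simpa using this
  have key : ∀ y : M, y ∈ K⟮a + (c : K) • b⟯ → (y : L) ∈ Algebra.adjoin K {α + (c : K) • β} := by
    intro y hy
    rw [← IntermediateField.mem_toSubalgebra, adjoin_simple_toSubalgebra_of_isAlgebraic (Algebra.IsAlgebraic.isAlgebraic _)] at hy
    rw [Algebra.adjoin_singleton_eq_range_aeval] at hy ⊢
    obtain ⟨p, hp⟩ := hy
    refine ⟨p, ?_⟩
    rw [← hp]
    have := aeval_algebraMap_apply L (a + (c : K) • b) p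
    exact this
  exact ⟨c, c.2, key a h4, key b h3⟩

theorem exists_prim {A R : Type*} [CommRing A] [IsDomain A] [CommRing R] [IsDomain R] [Algebra A R]
    [Algebra ℝ A] [Algebra.IsAlgebraic A R] (hinj : Function.Injective (algebraMap A R))
    {κ : Type*} [Fintype κ] (x : κ → R) (hx : Algebra.adjoin A (Set.range x) = ⊤) (α : R) (ε : ℝ) (hε : 0 < ε) :
    ∃ e : κ → ℝ, (∀ j, |e j| < ε) ∧ Prim A (α + ∑ j, (algebraMap ℝ A (e j)) • x j) := by
  classical
  have : FaithfulSMul A R := (faithfulSMul_iff_algebraMap_injective A R).2 hinj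
  let K := FractionRing A
  let L := FractionRing R
  letI : Algebra K L := FractionRing.liftAlgebra A L
  have : IsScalarTower A K L := FractionRing.isScalarTower_liftAlgebra A L
  have hinjR : Function.Injective (algebraMap R L) := IsFractionRing.injective R L
  have halg : ∀ r : R, IsIntegral K (algebraMap R L r) := by
    intro r
    have h1 : IsAlgebraic A (algebraMap R L r) :=
      (Algebra.IsAlgebraic.isAlgebraic (R := A) r).algebraMap
    exact ((IsFractionRing.isAlgebraic_iff A K L).1 h1).isIntegral
  have : CharZero A := by
    refine ⟨fun a b hab => ?_⟩
    have h : algebraMap ℝ A a = algebraMap ℝ A b := by simpa using hab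
    have := (algebraMap ℝ A).injective h
    exact_mod_cast this
  have hc0 : CharZero K := by
    refine ⟨fun a b hab => ?_⟩
    have h : algebraMap A K a = algebraMap A K b := by simpa using hab
    have := (IsFractionRing.injective A K) h
    exact_mod_cast this
  have hsm : ∀ (a : A) (r : R), algebraMap R L (a • r) = algebraMap A K a • algebraMap R L r := by
    intro a r
    rw [Algebra.smul_def, map_mul, Algebra.smul_def, ← IsScalarTower.algebraMap_apply A R L,
      ← IsScalarTower.algebraMap_apply A K L]
  have main : ∀ s : Finset κ, ∃ e : κ → ℝ, (∀ j, |e j| < ε) ∧ ∀ r, (r = α ∨ ∃ j ∈ s, r = x j) →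
      algebraMap R L r ∈ Algebra.adjoin K {algebraMap R L (α + ∑ j ∈ s, (algebraMap ℝ A (e j)) • x j)} := by
    intro s
    induction s using Finset.induction_on with
    | empty =>
      refine ⟨0, by simp [hε], ?_⟩
      rintro r (rfl | ⟨j, hj, -⟩)
      · simp only [Finset.sum_empty, add_zero]; exact Algebra.self_mem_adjoin_singleton _ _
      · simp at hj
    | insert i s hi ih =>
      obtain ⟨e, he, h⟩ := ih
      let α' := α + ∑ j ∈ s, (algebraMap ℝ A (e j)) • x j
      let S : Set K := (fun t : ℝ => algebraMap A K (algebraMap ℝ A t)) '' Set.Ioo 0 ε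
      have hS : S.Infinite := by
        refine (Set.Ioo_infinite hε).image ?_
        intro a _ b _ hab
        exact (algebraMap ℝ A).injective ((IsFractionRing.injective A K) hab)
      obtain ⟨_, ⟨t, ht, rfl⟩, h1, h2⟩ := two_prim (algebraMap R L α') (algebraMap R L (x i)) (halg _) (halg _) S hS
      refine ⟨Function.update e i t, ?_, ?_⟩
      · intro j
        by_cases hj : j = i
        · subst hj; simp only [Function.update_self]; rw [abs_lt]; constructor <;> linarith [ht.1, ht.2]
        · simp [hj, he]
      · have e1 : algebraMap R L (α + ∑ j ∈ insert i s, algebraMap ℝ A (Function.update e i t j) • x j)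
            = algebraMap R L α' + algebraMap A K (algebraMap ℝ A t) • algebraMap R L (x i) := by
          rw [Finset.sum_insert hi, Function.update_self]
          have : ∑ j ∈ s, algebraMap ℝ A (Function.update e i t j) • x j = ∑ j ∈ s, algebraMap ℝ A (e j) • x j := by
            apply Finset.sum_congr rfl
            intro j hj
            rw [Function.update_of_ne]
            rintro rfl; exact hi hj
          rw [this, ← hsm, ← map_add]
          congr 1
          simp only [α']; ring
        rw [e1]
        have h3 : Algebra.adjoin K {algebraMap R L α'} ≤ Algebra.adjoin K
            {algebraMap R L α' + algebraMap A K (algebraMap ℝ A t) • algebraMap R L (x i)} := by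
          rw [Algebra.adjoin_le_iff]; simpa using h1
        rintro r (rfl | ⟨j, hj, rfl⟩)
        · exact h3 (h _ (Or.inl rfl))
        · rcases Finset.mem_insert.1 hj with rfl | hj
          · exact h2
          · exact h3 (h _ (Or.inr ⟨j, hj, rfl⟩))
  obtain ⟨e, he, h⟩ := main Finset.univ
  refine ⟨e, he, ?_⟩
  set θ := α + ∑ j, (algebraMap ℝ A (e j)) • x j with hθ
  have hall : ∀ r : R, algebraMap R L r ∈ Algebra.adjoin K {algebraMap R L θ} := by
    intro r
    have hr : r ∈ Algebra.adjoin A (Set.range x) := by rw [hx]; trivial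
    induction hr using Algebra.adjoin_induction with
    | mem y hy => obtain ⟨j, rfl⟩ := hy; exact h _ (Or.inr ⟨j, Finset.mem_univ _, rfl⟩)
    | algebraMap c =>
      rw [← IsScalarTower.algebraMap_apply A R L, IsScalarTower.algebraMap_apply A K L]
      exact Subalgebra.algebraMap_mem _ _
    | add y z _ _ hy hz => rw [map_add (algebraMap R L) y z]; exact add_mem hy hz
    | mul y z _ _ hy hz => rw [map_mul]; exact mul_mem hy hz
  intro r
  have := hall r
  rw [Algebra.adjoin_singleton_eq_range_aeval] at this
  obtain ⟨p, hp⟩ := this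
  obtain ⟨b, hb, hb2⟩ := IsLocalization.integerNormalization_spec (nonZeroDivisors A) p
  refine ⟨b, nonZeroDivisors.ne_zero hb, IsLocalization.integerNormalization (nonZeroDivisors A) p, ?_⟩
  apply hinjR
  rw [← aeval_algebraMap_apply, ← aeval_map_algebraMap K, hb2, ← IsScalarTower.algebraMap_smul K b p,
    map_smul (aeval (algebraMap R L θ)), hsm]
  exact congrArg _ hp.symm
end BBR


open Polynomial
set_option linter.all false
namespace BBR

/-- no roots: no sign change -/
theorem no_root_pos (g : ℝ[X]) (hg : ∀ t, g.eval t ≠ 0) (a b : ℝ) : 0 < g.eval a * g.eval b := by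
  by_contra hcon
  push Not at hcon
  have hc : Continuous fun t => g.eval t := g.continuous
  have : ∃ t, g.eval t = 0 := by
    rcases mul_nonpos_iff.1 hcon with ⟨h1, h2⟩ | ⟨h1, h2⟩
    · exact mem_range_of_exists_le_of_exists_ge hc ⟨b, h2⟩ ⟨a, h1⟩
    · exact mem_range_of_exists_le_of_exists_ge hc ⟨a, h1⟩ ⟨b, h2⟩
  obtain ⟨t, ht⟩ := this
  exact hg t ht

theorem no_root_even (g : ℝ[X]) (hg : ∀ t, g.eval t ≠ 0) : Even g.natDegree := by
  by_contra hodd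
  rw [Nat.not_even_iff_odd] at hodd
  have hpos : 0 < g.natDegree := hodd.pos
  have hg0 : g ≠ 0 := by rintro rfl; simp at hpos
  -- WLOG positive leading coeff
  wlog hl : 0 ≤ g.leadingCoeff generalizing g
  · refine this (-g) (by simpa using hg) (by simpa using hodd) (by simpa using hpos) (by simpa using hg0) ?_
    rw [leadingCoeff_neg]; linarith
  have hdeg : 0 < g.degree := natDegree_pos_iff_degree_pos.1 hpos
  have h1 := g.tendsto_atTop_of_leadingCoeff_nonneg hdeg hl
  have h2 := (g.comp (-X)).tendsto_atBot_of_leadingCoeff_nonpos (by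
    rw [← natDegree_pos_iff_degree_pos, natDegree_comp]; simpa using hpos) (by
    rw [leadingCoeff_comp (by simp), leadingCoeff_neg, leadingCoeff_X, hodd.neg_one_pow]; linarith)
  obtain ⟨a, ha⟩ := (h1.eventually (Filter.eventually_ge_atTop 0)).exists
  obtain ⟨b, hb⟩ := (h2.eventually (Filter.eventually_le_atBot 0)).exists
  obtain ⟨t, ht⟩ := mem_range_of_exists_le_of_exists_ge g.continuous ⟨-b, by simpa using hb⟩ ⟨a, ha⟩
  exact hg t ht

theorem factor_simple (q : ℝ[X]) (hq : q ≠ 0)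
    (hs : ∀ t, q.eval t = 0 → (derivative q).eval t ≠ 0) :
    ∃ (s : Finset ℝ) (g : ℝ[X]), (∀ t, q.eval t = 0 ↔ t ∈ s) ∧ q = (∏ t ∈ s, (X - C t)) * g ∧
      (∀ t, g.eval t ≠ 0) ∧ q.natDegree = s.card + g.natDegree := by
  classical
  obtain ⟨g, h1, h2, h3⟩ := q.exists_prod_multiset_X_sub_C_mul
  have hnd : q.roots.Nodup := by
    rw [Multiset.nodup_iff_count_le_one]
    intro a
    rw [count_roots]
    by_contra hcon
    push Not at hcon
    obtain ⟨h4, h5⟩ := (one_lt_rootMultiplicity_iff_isRoot hq).1 hcon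
    exact hs a h4 h5
  have hg0 : g ≠ 0 := by
    rintro rfl
    apply hq; rw [← h1, mul_zero]
  have hval : q.roots.toFinset.val = q.roots := by
    rw [Multiset.toFinset_val, hnd.dedup]
  refine ⟨q.roots.toFinset, g, ?_, ?_, ?_, ?_⟩
  · intro t; simp [hq]
  · conv_lhs => rw [← h1]
    rw [Finset.prod, hval]
  · intro t ht
    have : t ∈ g.roots := (mem_roots hg0).2 ht
    rw [h3] at this
    simp at this
  · rw [← h2, Finset.card, hval]

theorem root_parity (q : ℝ[X]) (hq : q ≠ 0)
    (hs : ∀ t, q.eval t = 0 → (derivative q).eval t ≠ 0) (c c' : ℝ) (hcc : c < c')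
    (hc : q.eval c ≠ 0) (hc' : q.eval c' ≠ 0) :
    0 < q.eval c * q.eval c' ↔ Even {t | q.eval t = 0 ∧ c < t ∧ t < c'}.ncard := by
  classical
  obtain ⟨s, g, h1, h2, h3, h4⟩ := factor_simple q hq hs
  have hset : {t | q.eval t = 0 ∧ c < t ∧ t < c'} = ((s.filter fun t => c < t ∧ t < c' : Finset ℝ) : Set ℝ) := by
    ext t; simp [h1]
  rw [hset, Set.ncard_coe_finset]
  have hcs : c ∉ s := by rwa [← h1]
  have hcs' : c' ∉ s := by rwa [← h1]
  have e : q.eval c * q.eval c' = (∏ t ∈ s, ((c - t) * (c' - t))) * (g.eval c * g.eval c') := by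
    conv_lhs => rw [h2]
    simp only [eval_mul, eval_prod, eval_sub, eval_X, eval_C, Finset.prod_mul_distrib]
    ring
  rw [e, mul_pos_iff_of_pos_right (no_root_pos g h3 c c')]
  clear e h1 h2 h4 hset
  induction s using Finset.induction_on with
  | empty => simp
  | insert a s ha ih =>
    simp only [Finset.mem_insert, not_or] at hcs hcs'
    replace ih : (0 < ∏ t ∈ s, (c - t) * (c' - t)) ↔ Even (Finset.card {t ∈ s | c < t ∧ t < c'}) := ih hcs.2 hcs'.2
    have hne : ∏ t ∈ s, ((c - t) * (c' - t)) ≠ 0 := by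
      rw [Finset.prod_ne_zero_iff]
      intro t ht
      apply mul_ne_zero <;> rw [sub_ne_zero] <;> rintro rfl
      · exact hcs.2 ht
      · exact hcs'.2 ht
    rw [Finset.prod_insert ha, Finset.filter_insert]
    split_ifs with hin
    · rw [Finset.card_insert_of_notMem (by simp [ha]), Nat.even_add_one, ← ih]
      have : (c - a) * (c' - a) < 0 := mul_neg_of_neg_of_pos (by linarith [hin.1]) (by linarith [hin.2])
      constructor
      · intro h hP
        have := mul_neg_of_neg_of_pos this hP
        linarith
      · intro h
        exact mul_pos_of_neg_of_neg this (lt_of_le_of_ne (not_lt.1 h) hne)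
    · have : 0 < (c - a) * (c' - a) := by
        by_cases hca : c < a
        · have : c' < a := by
            have : ¬ a < c' := fun h => hin ⟨hca, h⟩
            exact lt_of_le_of_ne (not_lt.1 this) hcs'.1
          exact mul_pos_of_neg_of_neg (by linarith) (by linarith)
        · have : a < c := lt_of_le_of_ne (not_lt.1 hca) (Ne.symm hcs.1)
          exact mul_pos (by linarith) (by linarith)
      rw [mul_pos_iff_of_pos_left this, ih]

theorem root_count_parity (q : ℝ[X]) (hq : q ≠ 0)
    (hs : ∀ t, q.eval t = 0 → (derivative q).eval t ≠ 0) :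
    Even q.natDegree ↔ Even {t | q.eval t = 0}.ncard := by
  obtain ⟨s, g, h1, h2, h3, h4⟩ := factor_simple q hq hs
  have : {t | q.eval t = 0} = (s : Set ℝ) := by ext t; simp [h1]
  rw [this, Set.ncard_coe_finset, h4, Nat.even_add]
  simp [no_root_even g h3]
end BBR


open Polynomial Topology Filter
set_option linter.all false
namespace BBR

theorem dense_ne_zero (w : ℝ[X]) (hw : w ≠ 0) : Dense {σ | w.eval σ ≠ 0} := by
  have hfin : {σ | w.eval σ = 0}.Finite := by
    classical
    refine (w.roots.toFinset.finite_toSet).subset ?_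
    intro σ hσ
    simpa [hw] using hσ
  have := hfin.countable.dense_compl ℝ
  exact this

theorem glue_parity (s : Set ℝ) (hs : IsOpen s) (hs2 : IsPreconnected s) (w : ℝ[X]) (hw : w ≠ 0)
    (f : ℝ → Prop)
    (h : ∀ σ₀ ∈ s, ∃ Q : Prop, ∀ᶠ σ in 𝓝 σ₀, σ ∈ s → w.eval σ ≠ 0 → (f σ ↔ Q))
    (a b : ℝ) (ha : a ∈ s) (hb : b ∈ s) (ha' : w.eval a ≠ 0) (hb' : w.eval b ≠ 0) : f a ↔ f b := by
  classical
  have h' : ∀ σ₀, ∃ Q : Prop, σ₀ ∈ s → ∀ᶠ σ in 𝓝 σ₀, σ ∈ s → w.eval σ ≠ 0 → (f σ ↔ Q) := by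
    intro σ₀
    by_cases h0 : σ₀ ∈ s
    · obtain ⟨Q, hQ⟩ := h σ₀ h0
      exact ⟨Q, fun _ => hQ⟩
    · exact ⟨True, fun h1 => absurd h1 h0⟩
  choose Q hQ using h'
  have hloc : ∀ σ₀ ∈ s, ∀ᶠ σ₁ in 𝓝 σ₀, (Q σ₁ ↔ Q σ₀) := by
    intro σ₀ h0
    have h1 := eventually_eventually_nhds.2 (hQ σ₀ h0)
    filter_upwards [h1, hs.mem_nhds h0] with σ₁ h2 h3
    have h4 := (h2.and (hQ σ₁ h3)).and (hs.mem_nhds h3)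
    obtain ⟨σ, hσ, hσ2⟩ := (dense_ne_zero w hw).inter_nhds_nonempty h4
    exact (hσ2.1.2 hσ2.2 hσ).symm.trans (hσ2.1.1 hσ2.2 hσ)
  have hcont : ContinuousOn (fun σ => decide (Q σ)) s := by
    intro σ₀ h0
    apply ContinuousAt.continuousWithinAt
    have : (fun _ => decide (Q σ₀)) =ᶠ[𝓝 σ₀] (fun σ => decide (Q σ)) := by
      filter_upwards [hloc σ₀ h0] with σ hσ
      simp [hσ]
    exact continuousAt_const.congr this
  have hc := hs2.constant hcont ha hb
  have hc2 : Q a ↔ Q b := by simpa using hc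
  exact ((hQ a ha).self_of_nhds ha ha').trans (hc2.trans ((hQ b hb).self_of_nhds hb hb').symm)

theorem line_parity (P : ℝ[X][X]) (s : Set ℝ) (hs : IsOpen s) (hs2 : IsPreconnected s)
    (w : ℝ[X]) (hw : w ≠ 0) (lo hi up : ℝ) (hlh : lo < hi)
    (hne : ∀ σ ∈ s, w.eval σ ≠ 0 → P.map (evalRingHom σ) ≠ 0)
    (hsimple : ∀ σ ∈ s, w.eval σ ≠ 0 → ∀ t, (P.map (evalRingHom σ)).eval t = 0 →
      (derivative (P.map (evalRingHom σ))).eval t ≠ 0)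
    (hgap : ∀ σ ∈ s, w.eval σ ≠ 0 → ∀ t, (P.map (evalRingHom σ)).eval t = 0 → ¬ (lo < t ∧ t < hi) ∧ t ≤ up)
    (a b : ℝ) (ha : a ∈ s) (hb : b ∈ s) (ha' : w.eval a ≠ 0) (hb' : w.eval b ≠ 0) :
    Even {t | (P.map (evalRingHom a)).eval t = 0 ∧ hi ≤ t}.ncard ↔
    Even {t | (P.map (evalRingHom b)).eval t = 0 ∧ hi ≤ t}.ncard := by
  classical
  letI : NormalizedGCDMonoid ℝ[X] := UniqueFactorizationMonoid.toNormalizedGCDMonoid ℝ[X]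
  refine glue_parity s hs hs2 w hw
    (fun σ => Even {t | (P.map (evalRingHom σ)).eval t = 0 ∧ hi ≤ t}.ncard) ?_ a b ha hb ha' hb'
  intro σ₀ h0
  set p := P.primPart with hp
  have hPp : P = C P.content * p := P.eq_C_content_mul_primPart
  have hp0 : p.map (evalRingHom σ₀) ≠ 0 := by
    intro h
    have h1 : C (X - C σ₀ : ℝ[X]) ∣ p := by
      rw [C_dvd_iff_dvd_coeff]
      intro i
      rw [dvd_iff_isRoot]
      have := congrArg (fun q => q.coeff i) h
      simpa using this
    exact not_isUnit_X_sub_C σ₀ (P.isPrimitive_primPart _ h1)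
  have hfin : {t | (p.map (evalRingHom σ₀)).eval t = 0}.Finite := by
    refine ((p.map (evalRingHom σ₀)).roots.toFinset.finite_toSet).subset ?_
    intro σ hσ
    simpa [hp0] using hσ
  obtain ⟨c, hc1, hc2⟩ := ((Set.Ioo_infinite hlh).diff hfin).nonempty
  obtain ⟨c', hc1', hc2'⟩ := ((Set.Ioi_infinite (max up hi)).diff hfin).nonempty
  simp only [Set.mem_setOf_eq] at hc2 hc2'
  have hcc : c < c' := by
    have : hi < c' := lt_of_le_of_lt (le_max_right _ _) hc1'
    linarith [hc1.2]
  have hup : up < c' := lt_of_le_of_lt (le_max_left _ _) hc1'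
  have hev : ∀ σ t, (p.map (evalRingHom σ)).eval t = (p.eval (C t)).eval σ := by
    intro σ t; exact map_evalRingHom_eval σ t p
  let D : ℝ → ℝ := fun σ => (p.map (evalRingHom σ)).eval c * (p.map (evalRingHom σ)).eval c'
  have hD : Continuous D := by
    simp only [D, hev]
    exact (Polynomial.continuous _).mul (Polynomial.continuous _)
  have hD0 : D σ₀ ≠ 0 := mul_ne_zero hc2 hc2'
  have hDs : ∀ᶠ σ in 𝓝 σ₀, (0 < D σ ↔ 0 < D σ₀) := by
    rcases lt_or_gt_of_ne hD0 with h | h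
    · filter_upwards [hD.continuousAt.eventually (gt_mem_nhds h)] with σ hσ
      exact ⟨fun h1 => absurd h1 (not_lt.2 hσ.le), fun h1 => absurd h1 (not_lt.2 h.le)⟩
    · filter_upwards [hD.continuousAt.eventually (lt_mem_nhds h)] with σ hσ
      exact ⟨fun _ => h, fun _ => hσ⟩
  refine ⟨0 < D σ₀, ?_⟩
  filter_upwards [hDs] with σ hσ h1 h2
  rw [← hσ]
  set q := P.map (evalRingHom σ) with hq
  have hqp : q = C (P.content.eval σ) * p.map (evalRingHom σ) := by
    conv_lhs => rw [hq, hPp]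
    simp
  have hq0 : q ≠ 0 := hne σ h1 h2
  have hcont : P.content.eval σ ≠ 0 := by
    intro h
    apply hq0
    rw [hqp, h, C_0, zero_mul]
  have hqc : q.eval c ≠ 0 := fun h => (hgap σ h1 h2 c h).1 hc1
  have hqc' : q.eval c' ≠ 0 := fun h => absurd (hgap σ h1 h2 c' h).2 (not_le.2 hup)
  have hr := root_parity q hq0 (hsimple σ h1 h2) c c' hcc hqc hqc'
  have e : q.eval c * q.eval c' = (P.content.eval σ) ^ 2 * D σ := by
    rw [hqp]; simp only [eval_mul, eval_C, D]; ring
  rw [e, mul_pos_iff_of_pos_left (by positivity)] at hr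
  rw [hr]
  have : {t | q.eval t = 0 ∧ hi ≤ t} = {t | q.eval t = 0 ∧ c < t ∧ t < c'} := by
    ext t
    simp only [Set.mem_setOf_eq]
    constructor
    · rintro ⟨h3, h4⟩
      exact ⟨h3, by linarith [hc1.2], by linarith [(hgap σ h1 h2 t h3).2]⟩
    · rintro ⟨h3, h4, h5⟩
      refine ⟨h3, ?_⟩
      by_contra h6
      exact (hgap σ h1 h2 t h3).1 ⟨by linarith [hc1.1], by linarith⟩
  rw [this]

theorem parity_lemma {A R : Type*} [CommRing A] [IsDomain A] [CommRing R] [IsDomain R] [Algebra A R]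
    [Algebra ℝ A] [CharZero R] [Algebra.IsAlgebraic A R] (hinj : Function.Injective (algebraMap A R))
    {κ : Type*} [Fintype κ] (x : κ → R) (hx : Algebra.adjoin A (Set.range x) = ⊤)
    (c₀ c₁ : ℝ) (hc0 : 0 ≤ c₀) (hc : c₀ < c₁) :
    ∃ h : A, h ≠ 0 ∧ ∀ (h' : A) (ℓ : A →+* ℝ[X]) (δ : ℝ), 0 < δ →
      (ℓ (h * h')).eval 0 ≠ 0 → (ℓ (h * h')).eval 1 ≠ 0 →
      (∀ σ ∈ Set.Ioo (-δ) (1 + δ), (ℓ (h * h')).eval σ ≠ 0 → ∀ y : R →+* ℝ,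
        y.comp (algebraMap A R) = (evalRingHom σ).comp ℓ → ¬ (c₀ < ∑ j, y (x j) ^ 2 ∧ ∑ j, y (x j) ^ 2 < c₁)) →
      (∃! y : R →+* ℝ, y.comp (algebraMap A R) = (evalRingHom 0).comp ℓ ∧ ∑ j, y (x j) ^ 2 ≤ c₀) →
      ∃ y : R →+* ℝ, y.comp (algebraMap A R) = (evalRingHom 1).comp ℓ ∧ ∑ j, y (x j) ^ 2 ≤ c₀ := by
  classical
  set k : ℝ := (Fintype.card κ : ℝ) with hk
  have hk0 : 0 ≤ k := by positivity
  obtain ⟨ε, hε0, hε1, hε2⟩ : ∃ ε : ℝ, 0 < ε ∧ ε < 1 ∧ ε * (c₀ + c₁ + 2 * k) < c₁ - c₀ := by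
    have hpos : 0 < c₀ + c₁ + 2 * k := by linarith
    refine ⟨min (1/2) ((c₁ - c₀) / (2 * (c₀ + c₁ + 2 * k))), lt_min (by norm_num) (div_pos (by linarith) (by linarith)), lt_of_le_of_lt (min_le_left _ _) (by norm_num), ?_⟩
    calc _ ≤ ((c₁ - c₀) / (2 * (c₀ + c₁ + 2 * k))) * (c₀ + c₁ + 2 * k) :=
          mul_le_mul_of_nonneg_right (min_le_right _ _) hpos.le
      _ = (c₁ - c₀) / 2 := by field_simp
      _ < _ := by linarith
  obtain ⟨e, he, hprim⟩ := exists_prim hinj x hx (-∑ j, x j ^ 2) ε hε0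
  set θ := -∑ j, x j ^ 2 + ∑ j, algebraMap ℝ A (e j) • x j with hθ
  obtain ⟨h, Θ, hB⟩ := exists_BL hinj θ hprim (Finset.univ.image x) (by simpa using hx)
  -- value of θ at a real point
  have hval : ∀ y : R →+* ℝ, y θ = -∑ j, y (x j) ^ 2 + ∑ j, e j * y (x j) := by
    intro y
    have h1 : ∀ r : ℝ, y (algebraMap A R (algebraMap ℝ A r)) = r := by
      intro r
      have : (y.comp ((algebraMap A R).comp (algebraMap ℝ A))) = RingHom.id ℝ := Subsingleton.elim _ _
      exact congrArg (fun g : ℝ →+* ℝ => g r) this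
    rw [hθ]
    simp [Algebra.smul_def, h1]
  have hbd : ∀ y : R →+* ℝ, -(1 + ε) * (∑ j, y (x j) ^ 2) - k * ε ≤ y θ ∧
      y θ ≤ -(1 - ε) * (∑ j, y (x j) ^ 2) + k * ε := by
    intro y
    rw [hval]
    have h1 : |∑ j, e j * y (x j)| ≤ ∑ j, ε * (1 + y (x j) ^ 2) := by
      refine (Finset.abs_sum_le_sum_abs _ _).trans (Finset.sum_le_sum fun j _ => ?_)
      rw [abs_mul]
      refine mul_le_mul (he j).le ?_ (abs_nonneg _) hε0.le
      rw [abs_le]; constructor <;> nlinarith [sq_nonneg (y (x j) - 1), sq_nonneg (y (x j) + 1), sq_nonneg (y (x j))]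
    have h2 : ∑ j, ε * (1 + y (x j) ^ 2) = k * ε + ε * ∑ j, y (x j) ^ 2 := by
      rw [← Finset.mul_sum, Finset.sum_add_distrib]
      simp [hk]; ring
    rw [h2, abs_le] at h1
    constructor <;> linarith [h1.1, h1.2]
  refine ⟨h, hB.ne, ?_⟩
  intro h' ℓ δ hδ hg0 hg1 hgap huniq
  have hS0 : ∀ y : R →+* ℝ, 0 ≤ ∑ j, y (x j) ^ 2 := fun y => Finset.sum_nonneg fun j _ => sq_nonneg _
  set lo := -(1 - ε) * c₁ + k * ε with hlo
  set hi := -(1 + ε) * c₀ - k * ε with hhi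
  have hlh : lo < hi := by rw [hlo, hhi]; linarith
  have hsmall : ∀ y : R →+* ℝ, ∑ j, y (x j) ^ 2 ≤ c₀ → hi ≤ y θ := by
    intro y hy
    have := (hbd y).1
    nlinarith
  have hlarge : ∀ y : R →+* ℝ, c₁ ≤ ∑ j, y (x j) ^ 2 → y θ ≤ lo := by
    intro y hy
    have := (hbd y).2
    nlinarith
  have hup : ∀ y : R →+* ℝ, y θ ≤ k * ε := by
    intro y
    have := (hbd y).2
    have := hS0 y
    nlinarith
  set P := Θ.map ℓ with hP
  have hPm : ∀ σ, P.map (evalRingHom σ) = Θ.map ((evalRingHom σ).comp ℓ) := by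
    intro σ; rw [hP, Polynomial.map_map]
  have hgen : ∀ σ, (ℓ (h * h')).eval σ ≠ 0 → ((evalRingHom σ).comp ℓ) h ≠ 0 := by
    intro σ hσ h0
    apply hσ
    have h0' : (ℓ h).eval σ = 0 := h0
    rw [map_mul, eval_mul, h0', zero_mul]
  have hw : ℓ (h * h') ≠ 0 := by
    intro h0; rw [h0] at hg0; simp at hg0
  -- every root comes from a point
  have hcase : ∀ σ ∈ Set.Ioo (-δ) (1 + δ), (ℓ (h * h')).eval σ ≠ 0 → ∀ y : R →+* ℝ,
      y.comp (algebraMap A R) = (evalRingHom σ).comp ℓ →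
      (∑ j, y (x j) ^ 2 ≤ c₀ ∨ c₁ ≤ ∑ j, y (x j) ^ 2) := by
    intro σ hσ hσ2 y hy
    by_contra hcon
    push Not at hcon
    exact hgap σ hσ hσ2 y hy hcon
  have hpar := line_parity P (Set.Ioo (-δ) (1 + δ)) isOpen_Ioo isPreconnected_Ioo (ℓ (h * h')) hw
    lo hi (k * ε) hlh
    (by
      intro σ hσ hσ2
      rw [hPm]
      intro h0
      apply hB.lc _ (hgen σ hσ2)
      have := congrArg (fun q => q.coeff Θ.natDegree) h0
      simpa using this)
    (by
      intro σ hσ hσ2 t ht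
      rw [hPm] at ht ⊢
      exact hB.simple _ (hgen σ hσ2) t ht)
    (by
      intro σ hσ hσ2 t ht
      rw [hPm] at ht
      obtain ⟨y, hy, rfl⟩ := hB.surj _ (hgen σ hσ2) t ht
      refine ⟨?_, hup y⟩
      rintro ⟨h1, h2⟩
      rcases hcase σ hσ hσ2 y hy with h3 | h3
      · linarith [hsmall y h3]
      · linarith [hlarge y h3])
    0 1 ⟨by linarith, by linarith⟩ ⟨by linarith, by linarith⟩ hg0 hg1
  -- at 0 there is exactly one
  obtain ⟨y0, ⟨hy0, hy0'⟩, hu⟩ := huniq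
  have hroot : ∀ σ (y : R →+* ℝ), y.comp (algebraMap A R) = (evalRingHom σ).comp ℓ →
      (P.map (evalRingHom σ)).eval (y θ) = 0 := by
    intro σ y hy
    rw [hPm, ← eval_root Θ _ y hy, hB.root, map_zero]
  have h0set : {t | (P.map (evalRingHom 0)).eval t = 0 ∧ hi ≤ t} = {y0 θ} := by
    ext t
    simp only [Set.mem_setOf_eq, Set.mem_singleton_iff]
    constructor
    · rintro ⟨h1, h2⟩
      rw [hPm] at h1
      obtain ⟨y, hy, rfl⟩ := hB.surj _ (hgen 0 hg0) t h1
      rcases hcase 0 ⟨by linarith, by linarith⟩ hg0 y hy with h3 | h3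
      · rw [hu y ⟨hy, h3⟩]
      · linarith [hlarge y h3]
    · rintro rfl
      exact ⟨hroot 0 y0 hy0, hsmall y0 hy0'⟩
  rw [h0set, Set.ncard_singleton] at hpar
  have hodd : ¬ Even {t | (P.map (evalRingHom 1)).eval t = 0 ∧ hi ≤ t}.ncard := by
    rw [← hpar]; decide
  have hne : {t | (P.map (evalRingHom 1)).eval t = 0 ∧ hi ≤ t}.Nonempty := by
    rw [Set.nonempty_iff_ne_empty]
    intro h0
    rw [h0] at hodd
    simp at hodd
  obtain ⟨t, h1, h2⟩ := hne
  rw [hPm] at h1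
  obtain ⟨y, hy, rfl⟩ := hB.surj _ (hgen 1 hg1) t h1
  refine ⟨y, hy, ?_⟩
  rcases hcase 1 ⟨by linarith, by linarith⟩ hg1 y hy with h3 | h3
  · exact h3
  · linarith [hlarge y h3]
end BBR


open Polynomial Topology Filter
set_option linter.all false
namespace BBR

theorem simple_root_signs (q : ℝ[X]) (t₀ : ℝ) (h0 : q.eval t₀ = 0) (h1 : (derivative q).eval t₀ ≠ 0) :
    (∃ t, q.eval t < 0) ∧ ∃ t, 0 < q.eval t := by
  constructor
  · by_contra hcon
    push Not at hcon
    apply h1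
    have : IsLocalMin (fun t => q.eval t) t₀ := Filter.Eventually.of_forall fun t => by
      simp only [h0]; exact hcon t
    have := this.deriv_eq_zero
    rwa [Polynomial.deriv] at this
  · by_contra hcon
    push Not at hcon
    apply h1
    have : IsLocalMax (fun t => q.eval t) t₀ := Filter.Eventually.of_forall fun t => by
      simp only [h0]; exact hcon t
    have := this.deriv_eq_zero
    rwa [Polynomial.deriv] at this

theorem dim_lemma {A R : Type*} [CommRing A] [IsDomain A] [CommRing R] [IsDomain R] [Algebra A R]
    [Algebra ℝ A] (hinj : Function.Injective (algebraMap A R))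
    {κ : Type*} [Fintype κ] (x : κ → R) (hx : Algebra.adjoin A (Set.range x) = ⊤)
    (hdense : ∀ r : R, r ≠ 0 → ∃ y : R →+* ℝ, y r ≠ 0)
    (hpt : ∀ y y' : R →+* ℝ, y.comp (algebraMap A R) = y'.comp (algebraMap A R) → y = y') :
    Algebra.IsAlgebraic A R := by
  classical
  have hfaith : FaithfulSMul A R := (faithfulSMul_iff_algebraMap_injective A R).2 hinj
  have hchar : CharZero R := by
    refine ⟨fun a b hab => ?_⟩
    have h : (algebraMap A R) (algebraMap ℝ A a) = (algebraMap A R) (algebraMap ℝ A b) := by simpa using hab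
    have := (algebraMap ℝ A).injective (hinj h)
    exact_mod_cast this
  have halg0 : Algebra.IsAlgebraic (Algebra.adjoin A (Set.range x)) R := by
    rw [hx]
    constructor
    intro r
    exact isAlgebraic_algebraMap (⟨r, trivial⟩ : (⊤ : Subalgebra A R))
  obtain ⟨s, hs, hbasis⟩ := exists_isTranscendenceBasis_subset (R := A) (Set.range x)
  have hAI := hbasis.1
  have halg := hbasis.isAlgebraic
  let A' := Algebra.adjoin A (Set.range ((↑) : s → R))
  letI : Algebra ℝ A' := ((algebraMap A A').comp (algebraMap ℝ A)).toAlgebra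
  rcases s.eq_empty_or_nonempty with hse | ⟨i, hi⟩
  · subst hse
    constructor
    intro r
    have h1 : IsAlgebraic A' r := Algebra.IsAlgebraic.isAlgebraic r
    have h2 : Algebra.IsAlgebraic A A' := by
      constructor
      rintro ⟨a, ha⟩
      have : a ∈ (⊥ : Subalgebra A R) := by simpa [A'] using ha
      obtain ⟨c, rfl⟩ := Algebra.mem_bot.1 this
      exact isAlgebraic_algebraMap (R := A) (A := A') c
    exact h1.restrictScalars A
  exfalso
  have hinj' : Function.Injective (algebraMap A' R) := Subtype.val_injective
  have hx' : Algebra.adjoin A' (Set.range x) = ⊤ := by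
    rw [eq_top_iff]
    intro r _
    have hr : r ∈ Algebra.adjoin A (Set.range x) := by rw [hx]; trivial
    induction hr using Algebra.adjoin_induction with
    | mem y hy => exact Algebra.subset_adjoin hy
    | algebraMap c => exact Subalgebra.algebraMap_mem _ (algebraMap A A' c)
    | add y z _ _ hy hz => exact add_mem (hy trivial) (hz trivial)
    | mul y z _ _ hy hz => exact mul_mem (hy trivial) (hz trivial)
  obtain ⟨e, -, hprim⟩ := exists_prim hinj' x hx' 0 1 one_pos
  generalize (0 + ∑ j, (algebraMap ℝ A') (e j) • x j) = θ at hprim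
  obtain ⟨h, Θ, hB⟩ := exists_BL hinj' θ hprim (Finset.univ.image x) (by simpa using hx')
  obtain ⟨y0, hy0⟩ := hdense (algebraMap A' R h) (by
    intro h0; exact hB.ne (hinj' (by rw [h0, map_zero])))
  let i' : s := ⟨i, hi⟩
  let β0 : MvPolynomial s A →+* ℝ[X] := MvPolynomial.eval₂Hom (C.comp (y0.comp (algebraMap A R)))
    (fun j : s => C (y0 j) + if j = i' then X else 0)
  let β : A' →+* ℝ[X] := β0.comp (hAI.aevalEquiv.symm : A' →+* MvPolynomial s A)
  have hβA : ∀ c : A, β (algebraMap A A' c) = C (y0 (algebraMap A R c)) := by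
    intro c
    have : (hAI.aevalEquiv.symm : A' →+* MvPolynomial s A) (algebraMap A A' c) = MvPolynomial.C c :=
      hAI.aevalEquiv.symm.commutes c
    simp only [β, RingHom.comp_apply, this]
    simp [β0]
  have hβi : β ⟨i, Algebra.subset_adjoin ⟨i', rfl⟩⟩ = C (y0 i) + X := by
    have : (hAI.aevalEquiv.symm : A' →+* MvPolynomial s A) ⟨i, Algebra.subset_adjoin ⟨i', rfl⟩⟩ = MvPolynomial.X i' := by
      refine (AlgEquiv.symm_apply_eq _).2 ?_
      apply hinj'
      rw [hAI.algebraMap_aevalEquiv, MvPolynomial.aeval_X]; rfl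
    simp only [β, RingHom.comp_apply, this]
    simp [β0, i']
  have hβ0 : (evalRingHom 0).comp β = y0.comp (algebraMap A' R) := by
    have h1 : (((evalRingHom 0).comp β).comp (hAI.aevalEquiv : MvPolynomial s A →+* A')) =
      ((y0.comp (algebraMap A' R)).comp (hAI.aevalEquiv : MvPolynomial s A →+* A')) := by
      apply MvPolynomial.ringHom_ext
      · intro c
        have : (hAI.aevalEquiv : MvPolynomial s A →+* A') (MvPolynomial.C c) = algebraMap A A' c :=
          hAI.aevalEquiv.commutes c
        simp only [RingHom.comp_apply, this, hβA]
        simp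
      · intro j
        have e1 : β ((hAI.aevalEquiv : MvPolynomial s A →+* A') (MvPolynomial.X j)) = β0 (MvPolynomial.X j) := by
          simp [β]
        have e2 : algebraMap A' R ((hAI.aevalEquiv : MvPolynomial s A →+* A') (MvPolynomial.X j)) = j := by
          have := hAI.algebraMap_aevalEquiv (MvPolynomial.X j)
          rwa [MvPolynomial.aeval_X] at this
        simp only [RingHom.comp_apply, e1, e2]
        simp only [β0, MvPolynomial.coe_eval₂Hom, MvPolynomial.eval₂_X]
        split_ifs <;> simp
    ext a
    obtain ⟨p, rfl⟩ := hAI.aevalEquiv.surjective a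
    exact congrArg (fun g : MvPolynomial s A →+* ℝ => g p) h1
  have hb0 : ((evalRingHom 0).comp β) h ≠ 0 := by rw [hβ0]; exact hy0
  have hr0 : (Θ.map ((evalRingHom 0).comp β)).eval (y0 θ) = 0 := by
    rw [← eval_root Θ _ y0 hβ0.symm, hB.root, map_zero]
  obtain ⟨⟨t1, ht1⟩, ⟨t2, ht2⟩⟩ := simple_root_signs _ _ hr0 (hB.simple _ hb0 _ hr0)
  have hev : ∀ σ t, (Θ.map ((evalRingHom σ).comp β)).eval t = ((Θ.map β).eval (C t)).eval σ := by
    intro σ t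
    rw [← Polynomial.map_map]; exact map_evalRingHom_eval σ t _
  have hcont : ∀ t, Continuous fun σ => (Θ.map ((evalRingHom σ).comp β)).eval t := by
    intro t; simp only [hev]; exact Polynomial.continuous _
  have hconth : Continuous fun σ => ((evalRingHom σ).comp β) h := (β h).continuous
  have hE : ∀ᶠ σ in 𝓝 (0 : ℝ), (Θ.map ((evalRingHom σ).comp β)).eval t1 < 0 ∧
      0 < (Θ.map ((evalRingHom σ).comp β)).eval t2 ∧ ((evalRingHom σ).comp β) h ≠ 0 := by
    filter_upwards [(hcont t1).continuousAt.eventually (gt_mem_nhds ht1),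
      (hcont t2).continuousAt.eventually (lt_mem_nhds ht2),
      hconth.continuousAt.eventually_ne hb0] with σ a b c
    exact ⟨a, b, c⟩
  obtain ⟨ε, hε, hε0⟩ := ((hE.filter_mono nhdsWithin_le_nhds).and (self_mem_nhdsWithin : ∀ᶠ σ in 𝓝[≠] (0:ℝ), σ ∈ ({0}ᶜ : Set ℝ))).exists
  obtain ⟨t, ht⟩ := mem_range_of_exists_le_of_exists_ge
    (Θ.map ((evalRingHom ε).comp β)).continuous ⟨t1, hε.1.le⟩ ⟨t2, hε.2.1.le⟩
  obtain ⟨y, hy, -⟩ := hB.surj _ hε.2.2 t ht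
  have hyy : y = y0 := by
    apply hpt
    ext c
    have := congrArg (fun g : A' →+* ℝ => g (algebraMap A A' c)) hy
    simp only [RingHom.comp_apply, hβA] at this
    simpa using this
  have h2 := congrArg (fun g : A' →+* ℝ => g ⟨i, Algebra.subset_adjoin ⟨i', rfl⟩⟩) hy
  simp only [RingHom.comp_apply, hβi, hyy] at h2
  have h3 : y0 i = y0 i + ε := by simpa using h2
  exact hε0 (by simpa using h3.symm)
end BBR


open Polynomial Topology Filter
set_option linter.all false
namespace BBR

theorem adjoin_of_subring {A R : Type*} [CommRing A] [CommRing R] [Algebra A R] {κ : Type*} (x : κ → R)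
    (hx : ∀ S : Subring R, (∀ a, algebraMap A R a ∈ S) → (∀ j, x j ∈ S) → ∀ r, r ∈ S) :
    Algebra.adjoin A (Set.range x) = ⊤ := by
  rw [eq_top_iff]
  intro r _
  exact hx (Algebra.adjoin A (Set.range x)).toSubring (fun a => Subalgebra.algebraMap_mem _ a)
    (fun j => Algebra.subset_adjoin ⟨j, rfl⟩) r

theorem parity_lemma' {A R : Type*} [CommRing A] [IsDomain A] [CommRing R] [IsDomain R]
    [Algebra ℝ A] (φ : A →+* R) (hinj : Function.Injective φ)
    (halg : ∀ r : R, ∃ p : A[X], p ≠ 0 ∧ p.eval₂ φ r = 0)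
    {κ : Type*} [Fintype κ] (x : κ → R)
    (hx : ∀ S : Subring R, (∀ a, φ a ∈ S) → (∀ j, x j ∈ S) → ∀ r, r ∈ S)
    (c₀ c₁ : ℝ) (hc0 : 0 ≤ c₀) (hc : c₀ < c₁) :
    ∃ h : A, h ≠ 0 ∧ ∀ (h' : A) (ℓ : A →+* ℝ[X]) (δ : ℝ), 0 < δ →
      (ℓ (h * h')).eval 0 ≠ 0 → (ℓ (h * h')).eval 1 ≠ 0 →
      (∀ σ ∈ Set.Ioo (-δ) (1 + δ), (ℓ (h * h')).eval σ ≠ 0 → ∀ y : R →+* ℝ,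
        y.comp φ = (evalRingHom σ).comp ℓ → ¬ (c₀ < ∑ j, y (x j) ^ 2 ∧ ∑ j, y (x j) ^ 2 < c₁)) →
      (∃! y : R →+* ℝ, y.comp φ = (evalRingHom 0).comp ℓ ∧ ∑ j, y (x j) ^ 2 ≤ c₀) →
      ∃ y : R →+* ℝ, y.comp φ = (evalRingHom 1).comp ℓ ∧ ∑ j, y (x j) ^ 2 ≤ c₀ := by
  letI : Algebra A R := φ.toAlgebra
  have : Algebra.IsAlgebraic A R := ⟨fun r => halg r⟩
  have hchar : CharZero R := by
    refine ⟨fun a b hab => ?_⟩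
    have h : φ (algebraMap ℝ A a) = φ (algebraMap ℝ A b) := by simpa using hab
    have := (algebraMap ℝ A).injective (hinj h)
    exact_mod_cast this
  exact parity_lemma (A := A) (R := R) hinj x (adjoin_of_subring x hx) c₀ c₁ hc0 hc

theorem dim_lemma' {A R : Type*} [CommRing A] [IsDomain A] [CommRing R] [IsDomain R]
    [Algebra ℝ A] (φ : A →+* R) (hinj : Function.Injective φ)
    {κ : Type*} [Fintype κ] (x : κ → R)
    (hx : ∀ S : Subring R, (∀ a, φ a ∈ S) → (∀ j, x j ∈ S) → ∀ r, r ∈ S)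
    (hdense : ∀ r : R, r ≠ 0 → ∃ y : R →+* ℝ, y r ≠ 0)
    (hpt : ∀ y y' : R →+* ℝ, y.comp φ = y'.comp φ → y = y') :
    ∀ r : R, ∃ p : A[X], p ≠ 0 ∧ p.eval₂ φ r = 0 := by
  letI : Algebra A R := φ.toAlgebra
  have : Algebra.IsAlgebraic A R := dim_lemma (A := A) (R := R) hinj x (adjoin_of_subring x hx) hdense hpt
  exact fun r => Algebra.IsAlgebraic.isAlgebraic (R := A) r

theorem mv_dense {κ : Type*} [Fintype κ] (p : MvPolynomial κ ℝ) (hp : p ≠ 0) :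
    Dense {z : κ → ℝ | MvPolynomial.eval z p ≠ 0} := by
  rw [Metric.dense_iff]
  intro z r hr
  by_contra hcon
  rw [Set.not_nonempty_iff_eq_empty] at hcon
  apply hp
  refine MvPolynomial.funext_set (fun i => Set.Ioo (z i - r) (z i + r)) (fun i => Set.Ioo_infinite (by linarith)) ?_
  intro w hw
  rw [map_zero]
  by_contra h0
  have : w ∈ Metric.ball z r ∩ {z : κ → ℝ | MvPolynomial.eval z p ≠ 0} := by
    refine ⟨?_, h0⟩
    rw [Metric.mem_ball, dist_pi_lt_iff hr]
    intro i
    have := hw i (Set.mem_univ i)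
    rw [Real.dist_eq, abs_lt]
    constructor <;> linarith [this.1, this.2]
  rw [hcon] at this
  exact this

theorem real_hom {A : Type*} [CommRing A] (g : ℝ →+* A) (y : A →+* ℝ) (r : ℝ) : y (g r) = r := by
  have : y.comp g = RingHom.id ℝ := Subsingleton.elim _ _
  exact congrArg (fun g : ℝ →+* ℝ => g r) this

theorem hom_eq_eval {κ : Type*} (y : MvPolynomial κ ℝ →+* ℝ) :
    y = MvPolynomial.eval (fun i => y (MvPolynomial.X i)) := by
  apply MvPolynomial.ringHom_ext
  · intro r; rw [MvPolynomial.eval_C]; exact real_hom MvPolynomial.C y r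
  · intro i; rw [MvPolynomial.eval_X]

theorem alg_of_basis {ι R : Type*} [CommRing R] [IsDomain R] [Algebra ℝ R] (g : ι → R)
    (hg : IsTranscendenceBasis ℝ g) (r : R) :
    ∃ p : (MvPolynomial ι ℝ)[X], p ≠ 0 ∧ p.eval₂ ((MvPolynomial.aeval g : MvPolynomial ι ℝ →ₐ[ℝ] R) : MvPolynomial ι ℝ →+* R) r = 0 := by
  have h1 := hg.isAlgebraic
  obtain ⟨p, hp, hp0⟩ := Algebra.IsAlgebraic.isAlgebraic (R := Algebra.adjoin ℝ (Set.range g)) r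
  let e : Algebra.adjoin ℝ (Set.range g) ≃+* MvPolynomial ι ℝ := hg.1.aevalEquiv.symm.toRingEquiv
  refine ⟨p.map (e : Algebra.adjoin ℝ (Set.range g) →+* MvPolynomial ι ℝ), ?_, ?_⟩
  · rw [Ne, Polynomial.map_eq_zero_iff e.injective]; exact hp
  · rw [eval₂_map]
    rw [aeval_def] at hp0
    rw [← hp0]
    congr 1
    ext a
    obtain ⟨q, rfl⟩ := hg.1.aevalEquiv.surjective a
    rw [hg.1.algebraMap_aevalEquiv]
    simp [e]

/-- The polynomial map. -/
noncomputable def ev {ι κ : Type*} (f : ι → MvPolynomial κ ℝ) (z : κ → ℝ) : ι → ℝ := fun i => MvPolynomial.eval z (f i)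

theorem ev_continuous {ι κ : Type*} (f : ι → MvPolynomial κ ℝ) : Continuous (ev f) := by
  apply continuous_pi; intro i; exact MvPolynomial.continuous_eval (f i)

theorem eval_aeval {ι κ : Type*} (f : ι → MvPolynomial κ ℝ) (z : κ → ℝ) (p : MvPolynomial ι ℝ) :
    MvPolynomial.eval z (MvPolynomial.aeval f p) = MvPolynomial.eval (ev f z) p := by
  have : (MvPolynomial.eval z).comp ((MvPolynomial.aeval f : MvPolynomial ι ℝ →ₐ[ℝ] _) : MvPolynomial ι ℝ →+* _) = MvPolynomial.eval (ev f z) := by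
    apply MvPolynomial.ringHom_ext
    · intro r; simp
    · intro i; simp [ev]
  exact congrArg (fun g : MvPolynomial ι ℝ →+* ℝ => g p) this

theorem f_basis {n : ℕ} (f : Fin n → MvPolynomial (Fin n) ℝ) (hf : Function.Injective (ev f)) :
    IsTranscendenceBasis ℝ f := by
  have halg : Algebra.IsAlgebraic (Algebra.adjoin ℝ (Set.range f)) (MvPolynomial (Fin n) ℝ) := by
    refine dim_lemma (A := Algebra.adjoin ℝ (Set.range f)) Subtype.val_injective
      (MvPolynomial.X : Fin n → MvPolynomial (Fin n) ℝ) ?_ ?_ ?_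
    · refine adjoin_of_subring _ ?_
      intro S h1 h2 r
      induction r using MvPolynomial.induction_on with
      | C a =>
        exact h1 (algebraMap ℝ _ a)
      | add p q hp hq => exact add_mem hp hq
      | mul_X p i hp => exact mul_mem hp (h2 i)
    · intro r hr
      obtain ⟨z, hz⟩ := (mv_dense r hr).nonempty
      exact ⟨MvPolynomial.eval z, hz⟩
    · intro y y' h
      rw [hom_eq_eval y, hom_eq_eval y'] at h ⊢
      congr 1
      apply hf
      funext i
      exact congrArg (fun g : Algebra.adjoin ℝ (Set.range f) →+* ℝ => g ⟨f i, Algebra.subset_adjoin ⟨i, rfl⟩⟩) h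
  apply Algebra.IsAlgebraic.isTranscendenceBasis_of_le_trdeg_of_finite
  rw [MvPolynomial.trdeg_of_isDomain]
  simp

/-- the line through two points as a ring hom -/
noncomputable def lineHom {ι : Type*} (a b : ι → ℝ) : MvPolynomial ι ℝ →+* ℝ[X] :=
  MvPolynomial.eval₂Hom C (fun i => C (a i) + X * C (b i - a i))

theorem lineHom_eval {ι : Type*} (a b : ι → ℝ) (σ : ℝ) (p : MvPolynomial ι ℝ) :
    (lineHom a b p).eval σ = MvPolynomial.eval (fun i => a i + σ * (b i - a i)) p := by
  have : (evalRingHom σ).comp (lineHom a b) = MvPolynomial.eval (fun i => a i + σ * (b i - a i)) := by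
    apply MvPolynomial.ringHom_ext
    · intro r; simp [lineHom]
    · intro i; simp [lineHom]
  exact congrArg (fun g : MvPolynomial ι ℝ →+* ℝ => g p) this

theorem isCompact_sq_le {κ : Type*} [Fintype κ] (z₀ : κ → ℝ) (r : ℝ) :
    IsCompact {z : κ → ℝ | ∑ i, (z i - z₀ i) ^ 2 ≤ r} := by
  refine Metric.isCompact_of_isClosed_isBounded ?_ ?_
  · exact isClosed_le (by fun_prop) continuous_const
  · refine (Metric.isBounded_closedBall (x := z₀) (r := 1 + |r|)).subset ?_
    intro z hz
    rw [Metric.mem_closedBall, dist_pi_le_iff (by positivity)]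
    intro i
    have h1 : (z i - z₀ i) ^ 2 ≤ ∑ i, (z i - z₀ i) ^ 2 :=
      Finset.single_le_sum (f := fun i => (z i - z₀ i) ^ 2) (fun i _ => sq_nonneg _) (Finset.mem_univ i)
    have h2 : (z i - z₀ i) ^ 2 ≤ |r| := (h1.trans hz).trans (le_abs_self r)
    rw [Real.dist_eq]
    have h3 := sq_abs (z i - z₀ i)
    nlinarith [abs_nonneg (z i - z₀ i), abs_nonneg r]

theorem open_local {n : ℕ} (f : Fin n → MvPolynomial (Fin n) ℝ) (hf : Function.Injective (ev f))
    (z₀ : Fin n → ℝ) (r : ℝ) (hr : 0 < r) :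
    {q | ∃ z, ∑ i, (z i - z₀ i) ^ 2 ≤ r / 2 ∧ ev f z = q} ∈ 𝓝 (ev f z₀) := by
  have hbasis := f_basis f hf
  have hfc := ev_continuous f
  let K := {z : Fin n → ℝ | ∑ i, (z i - z₀ i) ^ 2 ≤ r} ∩ {z | r / 2 ≤ ∑ i, (z i - z₀ i) ^ 2}
  have hK : IsCompact K := (isCompact_sq_le z₀ r).inter_right (isClosed_le continuous_const (by fun_prop))
  have hfK : IsClosed (ev f '' K) := (hK.image hfc).isClosed
  have hnot : ev f z₀ ∉ ev f '' K := by
    rintro ⟨z, hz, hzz⟩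
    rw [hf hzz] at hz
    have := hz.2
    simp at this
    linarith
  obtain ⟨ρ, hρ, hρ2⟩ := Metric.isOpen_iff.1 hfK.isOpen_compl _ hnot
  let φ : MvPolynomial (Fin n) ℝ →+* MvPolynomial (Fin n) ℝ :=
    ((MvPolynomial.aeval f : MvPolynomial (Fin n) ℝ →ₐ[ℝ] MvPolynomial (Fin n) ℝ) : MvPolynomial (Fin n) ℝ →+* MvPolynomial (Fin n) ℝ)
  have hφinj : Function.Injective φ := hbasis.1
  obtain ⟨h, hh0, hPL⟩ := parity_lemma' φ hφinj (alg_of_basis f hbasis)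
    (fun j => MvPolynomial.X j - MvPolynomial.C (z₀ j)) (by
      intro S h1 h2 p
      have hC : ∀ a, MvPolynomial.C a ∈ S := by
        intro a
        have := h1 (MvPolynomial.C a)
        simpa [φ] using this
      induction p using MvPolynomial.induction_on with
      | C a => exact hC a
      | add p q hp hq => exact add_mem hp hq
      | mul_X p i hp =>
        refine mul_mem hp ?_
        have := add_mem (h2 i) (hC (z₀ i))
        simpa using this) (r / 2) r (by linarith) (by linarith)
  have hφh : φ h ≠ 0 := by rwa [Ne, map_eq_zero_iff _ hφinj]
  -- a generic point near z₀
  have hW : {z | ∑ i, (z i - z₀ i) ^ 2 < r / 2} ∩ (ev f ⁻¹' Metric.ball (ev f z₀) ρ) ∈ 𝓝 z₀ := by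
    apply IsOpen.mem_nhds
    · exact (isOpen_lt (by fun_prop) continuous_const).inter (Metric.isOpen_ball.preimage hfc)
    · refine ⟨by simpa using hr, ?_⟩
      simpa using hρ
  obtain ⟨z1, hz1g, hz1, hz1b⟩ := (mv_dense (φ h) hφh).inter_nhds_nonempty hW
  have hz1h : MvPolynomial.eval (ev f z1) h ≠ 0 := by
    rw [← eval_aeval]; exact hz1g
  have hgen : ∀ q ∈ Metric.ball (ev f z₀) ρ, MvPolynomial.eval q h ≠ 0 →
      ∃ z, ∑ i, (z i - z₀ i) ^ 2 ≤ r / 2 ∧ ev f z = q := by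
    intro q hq hqh
    -- line stays in the ball
    have hline : ∃ δ > 0, ∀ σ ∈ Set.Ioo (-δ) (1 + δ), (fun i => ev f z1 i + σ * (q i - ev f z1 i)) ∈ Metric.ball (ev f z₀) ρ := by
      let g : ℝ → Fin n → ℝ := fun σ i => ev f z1 i + σ * (q i - ev f z1 i)
      have hg : Continuous g := by fun_prop
      have hop : IsOpen (g ⁻¹' Metric.ball (ev f z₀) ρ) := Metric.isOpen_ball.preimage hg
      have hseg : Set.Icc (0:ℝ) 1 ⊆ g ⁻¹' Metric.ball (ev f z₀) ρ := by
        intro σ hσ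
        have := (convex_ball (ev f z₀) ρ).add_smul_sub_mem hz1b hq hσ
        exact this
      obtain ⟨δ, hδ, hδ2⟩ := isCompact_Icc.exists_thickening_subset_open hop hseg
      refine ⟨δ, hδ, fun σ hσ => hδ2 ?_⟩
      rw [Metric.mem_thickening_iff]
      rcases lt_or_ge σ 0 with h0 | h0
      · exact ⟨0, by simp, by rw [Real.dist_eq, abs_lt]; constructor <;> linarith [hσ.1]⟩
      · rcases lt_or_ge 1 σ with h1 | h1
        · exact ⟨1, by simp, by rw [Real.dist_eq, abs_lt]; constructor <;> linarith [hσ.2]⟩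
        · exact ⟨σ, ⟨h0, h1⟩, by simpa using hδ⟩
    obtain ⟨δ, hδ, hδ2⟩ := hline
    have hpt : ∀ σ (y : MvPolynomial (Fin n) ℝ →+* ℝ),
        y.comp φ = (evalRingHom σ).comp (lineHom (ev f z1) q) ↔
        ev f (fun i => y (MvPolynomial.X i)) = (fun i => ev f z1 i + σ * (q i - ev f z1 i)) := by
      intro σ y
      have e0 := hom_eq_eval y
      constructor
      · intro hy
        funext i
        have h1 := congrArg (fun g : MvPolynomial (Fin n) ℝ →+* ℝ => g (MvPolynomial.X i)) hy
        simp only [RingHom.comp_apply, coe_evalRingHom, lineHom_eval, MvPolynomial.eval_X] at h1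
        rw [← h1, e0]
        simp [φ, ev]
      · intro hy
        refine RingHom.ext fun p => ?_
        simp only [RingHom.comp_apply, coe_evalRingHom, lineHom_eval]
        rw [← hy, ← eval_aeval, ← e0]; rfl
    have hsum : ∀ y : MvPolynomial (Fin n) ℝ →+* ℝ, ∑ j, y (MvPolynomial.X j - MvPolynomial.C (z₀ j)) ^ 2
        = ∑ j, (y (MvPolynomial.X j) - z₀ j) ^ 2 := by
      intro y
      refine Finset.sum_congr rfl fun j _ => ?_
      rw [map_sub, real_hom MvPolynomial.C y]
    have := hPL 1 (lineHom (ev f z1) q) δ hδ (by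
        rw [mul_one, lineHom_eval]; simpa using hz1h) (by
        rw [mul_one, lineHom_eval]; simpa using hqh) (by
        intro σ hσ _ y hy
        rw [hpt] at hy
        rintro ⟨h1, h2⟩
        rw [hsum] at h1 h2
        apply hρ2 (hδ2 σ hσ)
        rw [← hy]
        exact ⟨_, ⟨h2.le, h1.le⟩, rfl⟩) (by
        refine ⟨MvPolynomial.eval z1, ⟨?_, ?_⟩, ?_⟩
        · rw [hpt]; simp
        · rw [hsum]; simpa using hz1.le
        · rintro y ⟨hy, -⟩
          rw [hpt] at hy
          have : (fun i => y (MvPolynomial.X i)) = z1 := by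
            apply hf; rw [hy]; simp
          rw [hom_eq_eval y, this])
    obtain ⟨y, hy, hy2⟩ := this
    rw [hpt] at hy
    rw [hsum] at hy2
    refine ⟨_, hy2, ?_⟩
    rw [hy]; simp
  have hcl : IsClosed (ev f '' {z : Fin n → ℝ | ∑ i, (z i - z₀ i) ^ 2 ≤ r / 2}) :=
    ((isCompact_sq_le z₀ (r / 2)).image hfc).isClosed
  have hsub : Metric.ball (ev f z₀) ρ ⊆ ev f '' {z : Fin n → ℝ | ∑ i, (z i - z₀ i) ^ 2 ≤ r / 2} := by
    refine ((mv_dense h hh0).open_subset_closure_inter Metric.isOpen_ball).trans ?_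
    refine (closure_mono ?_).trans hcl.closure_subset
    rintro q ⟨hq1, hq2⟩
    exact hgen q hq1 hq2
  exact Filter.mem_of_superset (Metric.ball_mem_nhds _ hρ) hsub

theorem isOpenMap_ev {n : ℕ} (f : Fin n → MvPolynomial (Fin n) ℝ) (hf : Function.Injective (ev f)) :
    IsOpenMap (ev f) := by
  rw [isOpenMap_iff_nhds_le]
  intro z₀ s hs
  obtain ⟨ε, hε, hε2⟩ := Metric.mem_nhds_iff.1 (Filter.mem_map.1 hs)
  refine Filter.mem_of_superset (open_local f hf z₀ (ε ^ 2) (by positivity)) ?_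
  rintro q ⟨z, hz, rfl⟩
  apply hε2
  rw [Metric.mem_ball, dist_pi_lt_iff hε]
  intro i
  have h1 : (z i - z₀ i) ^ 2 ≤ ∑ i, (z i - z₀ i) ^ 2 :=
    Finset.single_le_sum (f := fun i => (z i - z₀ i) ^ 2) (fun i _ => sq_nonneg _) (Finset.mem_univ i)
  rw [Real.dist_eq]
  refine abs_lt_of_sq_lt_sq ?_ hε.le
  nlinarith [sq_nonneg ε, pow_pos hε 2]
end BBR


open Polynomial Topology Filter
set_option linter.all false
namespace BBR

theorem fiber_lemma {A R : Type*} [CommRing A] [IsDomain A] [CommRing R] [IsDomain R]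
    [Algebra ℝ A] (φ : A →+* R) (hinj : Function.Injective φ)
    (halg : ∀ r : R, ∃ p : A[X], p ≠ 0 ∧ p.eval₂ φ r = 0)
    {κ : Type*} [Fintype κ] (x : κ → R)
    (hx : ∀ S : Subring R, (∀ a, φ a ∈ S) → (∀ j, x j ∈ S) → ∀ r, r ∈ S) :
    ∃ h : A, h ≠ 0 ∧ ∀ b b' : A →+* ℝ, b h ≠ 0 → b' h ≠ 0 →
      (∃! y : R →+* ℝ, y.comp φ = b) → ∃ y : R →+* ℝ, y.comp φ = b' := by
  classical
  letI : Algebra A R := φ.toAlgebra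
  have : Algebra.IsAlgebraic A R := ⟨fun r => halg r⟩
  have hchar : CharZero R := by
    refine ⟨fun a b hab => ?_⟩
    have h : φ (algebraMap ℝ A a) = φ (algebraMap ℝ A b) := by simpa using hab
    have := (algebraMap ℝ A).injective (hinj h)
    exact_mod_cast this
  have hadj := adjoin_of_subring x hx
  obtain ⟨e, -, hθ⟩ := exists_prim (A := A) (R := R) hinj x hadj 0 1 one_pos
  set θ := (0 : R) + ∑ j, (algebraMap ℝ A (e j)) • x j
  obtain ⟨h, Θ, hBL⟩ := exists_BL (A := A) (R := R) hinj θ hθ (Finset.univ.image x) (by simpa using hadj)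
  refine ⟨h, hBL.ne, ?_⟩
  intro b b' hb hb' hy
  have hdeg : ∀ c : A →+* ℝ, c h ≠ 0 → (Θ.map c) ≠ 0 ∧ (Θ.map c).natDegree = Θ.natDegree := by
    intro c hc
    refine ⟨fun h0 => hBL.lc c hc ?_, Polynomial.natDegree_map_of_leadingCoeff_ne_zero c (hBL.lc c hc)⟩
    rw [← Polynomial.coeff_natDegree, ← Polynomial.coeff_map, h0, coeff_zero]
  have hpar : ∀ c : A →+* ℝ, c h ≠ 0 → (Even Θ.natDegree ↔ Even {t | (Θ.map c).eval t = 0}.ncard) := by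
    intro c hc
    rw [← (hdeg c hc).2]
    exact root_count_parity _ (hdeg c hc).1 (hBL.simple c hc)
  obtain ⟨y, hyb, hyu⟩ := hy
  have h1 : {t | (Θ.map b).eval t = 0} = {y θ} := by
    ext t
    simp only [Set.mem_setOf_eq, Set.mem_singleton_iff]
    constructor
    · intro ht
      obtain ⟨z, hz, hzt⟩ := hBL.surj b hb t ht
      rw [← hzt, hyu z hz]
    · rintro rfl
      rw [← eval_root Θ b y hyb, hBL.root, map_zero]
  by_contra hno
  have h2 : {t | (Θ.map b').eval t = 0} = ∅ := by
    rw [Set.eq_empty_iff_forall_notMem]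
    intro t ht
    obtain ⟨z, hz, hzt⟩ := hBL.surj b' hb' t ht
    exact hno ⟨z, hz⟩
  have := (hpar b hb).symm.trans (hpar b' hb')
  rw [h1, h2] at this
  simp at this

/-- vanishing ideal -/
def vI {n : ℕ} (T : Set (Fin n → ℝ)) : Ideal (MvPolynomial (Fin n) ℝ) where
  carrier := {p | ∀ z ∈ T, MvPolynomial.eval z p = 0}
  zero_mem' := by intro z _; simp
  add_mem' := by intro a b ha hb z hz; simp [ha z hz, hb z hz]
  smul_mem' := by intro a b hb z hz; simp [hb z hz]

theorem mem_vI {n : ℕ} {T : Set (Fin n → ℝ)} {p : MvPolynomial (Fin n) ℝ} :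
    p ∈ vI T ↔ ∀ z ∈ T, MvPolynomial.eval z p = 0 := Iff.rfl

theorem notMem_vI {n : ℕ} {T : Set (Fin n → ℝ)} {p : MvPolynomial (Fin n) ℝ} :
    p ∉ vI T ↔ ∃ z ∈ T, MvPolynomial.eval z p ≠ 0 := by
  rw [mem_vI]; push Not; rfl

theorem vI_anti {n : ℕ} {T T' : Set (Fin n → ℝ)} (h : T ⊆ T') : vI T' ≤ vI T :=
  fun p hp z hz => hp z (h hz)

theorem exists_B {n : ℕ} (S : Set (Fin n → ℝ)) (hS : S.Nonempty) :
    ∃ B : Set (Fin n → ℝ), IsOpen B ∧ (S ∩ B).Nonempty ∧ (vI (S ∩ B)).IsPrime ∧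
      ∀ B' ⊆ B, IsOpen B' → (S ∩ B').Nonempty → vI (S ∩ B') = vI (S ∩ B) := by
  obtain ⟨I, ⟨B, hB, hSB, rfl⟩, hmax⟩ := set_has_maximal_iff_noetherian.2
    (inferInstance : IsNoetherian (MvPolynomial (Fin n) ℝ) (MvPolynomial (Fin n) ℝ))
    {I | ∃ B : Set (Fin n → ℝ), IsOpen B ∧ (S ∩ B).Nonempty ∧ vI (S ∩ B) = I}
    ⟨_, Set.univ, isOpen_univ, by simpa using hS, rfl⟩
  have hloc : ∀ B' ⊆ B, IsOpen B' → (S ∩ B').Nonempty → vI (S ∩ B') = vI (S ∩ B) := by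
    intro B' hB' ho hne
    by_contra hcon
    exact hmax _ ⟨B', ho, hne, rfl⟩ (lt_of_le_of_ne (vI_anti (Set.inter_subset_inter_right _ hB')) (Ne.symm hcon))
  refine ⟨B, hB, hSB, ⟨?_, ?_⟩, hloc⟩
  · rw [Ideal.ne_top_iff_one]
    intro h1
    obtain ⟨z, hz⟩ := hSB
    simpa using h1 z hz
  · intro p q hpq
    by_cases hp : p ∈ vI (S ∩ B)
    · exact Or.inl hp
    right
    obtain ⟨z, hz, hz0⟩ := notMem_vI.1 hp
    rw [← hloc (B ∩ {z | MvPolynomial.eval z p ≠ 0}) Set.inter_subset_left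
      (hB.inter (isOpen_ne_fun (MvPolynomial.continuous_eval p) continuous_const)) ⟨z, hz.1, hz.2, hz0⟩]
    intro w hw
    have := hpq w ⟨hw.1, hw.2.1⟩
    rw [map_mul, mul_eq_zero] at this
    exact this.resolve_left hw.2.2

theorem exists_T {n : ℕ} (f : Fin n → MvPolynomial (Fin n) ℝ) (P : Ideal (MvPolynomial (Fin n) ℝ)) (hP : P.IsPrime)
    (T0 : Set (Fin n → ℝ)) (hT0 : vI (ev f '' T0) = P) :
    ∃ T ⊆ T0, vI (ev f '' T) = P ∧ (vI T).IsPrime := by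
  obtain ⟨I, ⟨T, hT, hTP, rfl⟩, hmax⟩ := set_has_maximal_iff_noetherian.2
    (inferInstance : IsNoetherian (MvPolynomial (Fin n) ℝ) (MvPolynomial (Fin n) ℝ))
    {I | ∃ T ⊆ T0, vI (ev f '' T) = P ∧ vI T = I}
    ⟨_, T0, subset_rfl, hT0, rfl⟩
  refine ⟨T, hT, hTP, ⟨?_, ?_⟩⟩
  · intro htop
    apply hP.ne_top
    rw [Ideal.eq_top_iff_one, mem_vI] at htop
    rw [Ideal.eq_top_iff_one, ← hTP, mem_vI]
    rintro _ ⟨z, hz, rfl⟩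
    have := htop z hz
    simp at this
  · intro p q hpq
    by_contra hcon
    push Not at hcon
    have key : ∀ p : MvPolynomial (Fin n) ℝ, p ∉ vI T →
        ¬ vI (ev f '' (T ∩ {z | MvPolynomial.eval z p = 0})) ≤ P := by
      intro p hp hle
      refine hmax _ ⟨T ∩ {z | MvPolynomial.eval z p = 0}, Set.inter_subset_left.trans hT, le_antisymm hle ?_, rfl⟩ ?_
      · rw [← hTP]; exact vI_anti (Set.image_mono Set.inter_subset_left)
      · refine lt_of_le_of_ne (vI_anti Set.inter_subset_left) ?_
        intro he
        apply hp
        rw [he]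
        exact fun z hz => hz.2
    have hle : vI (ev f '' (T ∩ {z | MvPolynomial.eval z p = 0})) ⊓ vI (ev f '' (T ∩ {z | MvPolynomial.eval z q = 0})) ≤ P := by
      rw [← hTP]
      rintro a ⟨h1, h2⟩ _ ⟨z, hz, rfl⟩
      have := hpq z hz
      rw [map_mul, mul_eq_zero] at this
      rcases this with h | h
      · exact h1 _ ⟨z, ⟨hz, h⟩, rfl⟩
      · exact h2 _ ⟨z, ⟨hz, h⟩, rfl⟩
    rcases (Ideal.IsPrime.inf_le hP).1 hle with h | h
    · exact key p hcon.1 h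
    · exact key q hcon.2 h

/-- points of the quotient -/
noncomputable def ptHom {n : ℕ} (P : Ideal (MvPolynomial (Fin n) ℝ)) (v : Fin n → ℝ)
    (hv : ∀ p ∈ P, MvPolynomial.eval v p = 0) : (MvPolynomial (Fin n) ℝ ⧸ P) →+* ℝ :=
  Ideal.Quotient.lift P (MvPolynomial.eval v) hv

theorem ptHom_mk {n : ℕ} (P : Ideal (MvPolynomial (Fin n) ℝ)) (v : Fin n → ℝ)
    (hv : ∀ p ∈ P, MvPolynomial.eval v p = 0) (p) : ptHom P v hv (Ideal.Quotient.mk P p) = MvPolynomial.eval v p := by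
  simp [ptHom]

theorem hom_mk {n : ℕ} (P : Ideal (MvPolynomial (Fin n) ℝ)) (y : (MvPolynomial (Fin n) ℝ ⧸ P) →+* ℝ) (p) :
    y (Ideal.Quotient.mk P p) = MvPolynomial.eval (fun i => y (Ideal.Quotient.mk P (MvPolynomial.X i))) p := by
  have := hom_eq_eval (y.comp (Ideal.Quotient.mk P))
  exact congrArg (fun g : MvPolynomial (Fin n) ℝ →+* ℝ => g p) this

theorem hom_mem {n : ℕ} (P : Ideal (MvPolynomial (Fin n) ℝ)) (y : (MvPolynomial (Fin n) ℝ ⧸ P) →+* ℝ) (p) (hp : p ∈ P) :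
    MvPolynomial.eval (fun i => y (Ideal.Quotient.mk P (MvPolynomial.X i))) p = 0 := by
  rw [← hom_mk, Ideal.Quotient.eq_zero_iff_mem.2 hp, map_zero]

theorem hom_quot_ext {n : ℕ} (P : Ideal (MvPolynomial (Fin n) ℝ)) (y y' : (MvPolynomial (Fin n) ℝ ⧸ P) →+* ℝ)
    (h : ∀ i, y (Ideal.Quotient.mk P (MvPolynomial.X i)) = y' (Ideal.Quotient.mk P (MvPolynomial.X i))) : y = y' := by
  apply RingHom.ext
  intro a
  obtain ⟨p, rfl⟩ := Ideal.Quotient.mk_surjective a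
  rw [hom_mk, hom_mk P y']
  congr 2
  funext i; exact h i

theorem star {n : ℕ} (f : Fin n → MvPolynomial (Fin n) ℝ) (hf : Function.Injective (ev f))
    (B : Set (Fin n → ℝ))
    (hprime : (vI ((Set.range (ev f))ᶜ ∩ B)).IsPrime) :
    ∃ h0 ∉ vI ((Set.range (ev f))ᶜ ∩ B), ∀ v, (∀ p ∈ vI ((Set.range (ev f))ᶜ ∩ B), MvPolynomial.eval v p = 0) →
      MvPolynomial.eval v h0 ≠ 0 → v ∈ (Set.range (ev f))ᶜ := by
  by_contra hcon
  push Not at hcon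
  set P := vI ((Set.range (ev f))ᶜ ∩ B) with hPdef
  obtain ⟨T, hT, hTP, hQ⟩ := exists_T f P hprime {z | ∀ p ∈ P, MvPolynomial.eval (ev f z) p = 0} (by
    apply le_antisymm
    · intro h hh
      by_contra hP
      obtain ⟨v, hv, hv0, hvU⟩ := hcon h hP
      simp only [Set.mem_compl_iff, not_not] at hvU
      obtain ⟨z, rfl⟩ := hvU
      exact hv0 (hh _ ⟨z, hv, rfl⟩)
    · rintro p hp _ ⟨z, hz, rfl⟩
      exact hz p hp)
  set Q := vI T
  have hle : P ≤ Q.comap ((MvPolynomial.aeval f : MvPolynomial (Fin n) ℝ →ₐ[ℝ] MvPolynomial (Fin n) ℝ) : MvPolynomial (Fin n) ℝ →+* MvPolynomial (Fin n) ℝ) := by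
    intro p hp z hz
    have := hT hz p hp
    rw [← eval_aeval] at this
    exact this
  let φ := Ideal.quotientMap Q ((MvPolynomial.aeval f : MvPolynomial (Fin n) ℝ →ₐ[ℝ] MvPolynomial (Fin n) ℝ) : MvPolynomial (Fin n) ℝ →+* MvPolynomial (Fin n) ℝ) hle
  have hφ : ∀ p, φ (Ideal.Quotient.mk P p) = Ideal.Quotient.mk Q (MvPolynomial.aeval f p) := fun p => rfl
  have hinj : Function.Injective φ := by
    rw [injective_iff_map_eq_zero]
    intro a ha
    obtain ⟨p, rfl⟩ := Ideal.Quotient.mk_surjective a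
    rw [hφ, Ideal.Quotient.eq_zero_iff_mem] at ha
    rw [Ideal.Quotient.eq_zero_iff_mem, ← hTP]
    rintro _ ⟨z, hz, rfl⟩
    rw [← eval_aeval]
    exact ha z hz
  have hgen : ∀ S : Subring (MvPolynomial (Fin n) ℝ ⧸ Q), (∀ a, φ a ∈ S) →
      (∀ j, Ideal.Quotient.mk Q (MvPolynomial.X j) ∈ S) → ∀ r, r ∈ S := by
    intro S h1 h2 r
    obtain ⟨p, rfl⟩ := Ideal.Quotient.mk_surjective r
    induction p using MvPolynomial.induction_on with
    | C a =>
      have := h1 (Ideal.Quotient.mk P (MvPolynomial.C a))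
      rw [hφ] at this
      simpa using this
    | add p q hp hq => rw [map_add]; exact add_mem hp hq
    | mul_X p i hp => rw [map_mul]; exact mul_mem hp (h2 i)
  have hsame : ∀ y : (MvPolynomial (Fin n) ℝ ⧸ Q) →+* ℝ, ∀ i, (y.comp φ) (Ideal.Quotient.mk P (MvPolynomial.X i)) =
      ev f (fun i => y (Ideal.Quotient.mk Q (MvPolynomial.X i))) i := by
    intro y i
    rw [RingHom.comp_apply, hφ, hom_mk]
    simp [ev]
  have hpt : ∀ y y' : (MvPolynomial (Fin n) ℝ ⧸ Q) →+* ℝ, y.comp φ = y'.comp φ → y = y' := by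
    intro y y' h
    apply hom_quot_ext
    intro i
    have : ev f (fun i => y (Ideal.Quotient.mk Q (MvPolynomial.X i))) = ev f (fun i => y' (Ideal.Quotient.mk Q (MvPolynomial.X i))) := by
      funext j
      rw [← hsame, ← hsame, h]
    exact congrFun (hf this) i
  have halg := dim_lemma' φ hinj (fun j => Ideal.Quotient.mk Q (MvPolynomial.X j)) hgen (by
    intro r hr
    obtain ⟨p, rfl⟩ := Ideal.Quotient.mk_surjective r
    rw [Ne, Ideal.Quotient.eq_zero_iff_mem] at hr
    obtain ⟨z, hz, hz0⟩ := notMem_vI.1 hr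
    exact ⟨ptHom Q z (fun p hp => hp z hz), by rwa [ptHom_mk]⟩) hpt
  obtain ⟨h, hh, hfib⟩ := fiber_lemma φ hinj halg _ hgen
  obtain ⟨h, rfl⟩ := Ideal.Quotient.mk_surjective h
  rw [Ne, Ideal.Quotient.eq_zero_iff_mem] at hh
  have hh2 := hh
  rw [← hTP] at hh2
  obtain ⟨_, ⟨z, hz, rfl⟩, hz0⟩ := notMem_vI.1 hh2
  rw [hPdef] at hh
  obtain ⟨v, hv, hv0⟩ := notMem_vI.1 hh
  obtain ⟨y, hy⟩ := hfib (ptHom P (ev f z) (hT hz)) (ptHom P v (fun p hp => hp v hv)) (by rwa [ptHom_mk]) (by rwa [ptHom_mk]) (by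
    have : (ptHom Q z (fun p hp => hp z hz)).comp φ = ptHom P (ev f z) (hT hz) := by
      apply hom_quot_ext
      intro i
      rw [hsame, ptHom_mk]
      simp [ptHom_mk]
    refine ⟨_, this, ?_⟩
    intro y' hy'
    exact hpt _ _ (hy'.trans this.symm))
  apply hv.1
  refine ⟨fun i => y (Ideal.Quotient.mk Q (MvPolynomial.X i)), ?_⟩
  funext i
  rw [← hsame, hy, ptHom_mk]
  simp
end BBR


open Polynomial Topology Filter
set_option linter.all false
namespace BBR

theorem strict_deriv {n : ℕ} (Q : MvPolynomial (Fin n) ℝ) (p : Fin n → ℝ) :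
    HasStrictFDerivAt (fun v : Fin n → ℝ => MvPolynomial.eval v Q)
      (∑ i, (MvPolynomial.eval p (MvPolynomial.pderiv i Q)) • (ContinuousLinearMap.proj i : (Fin n → ℝ) →L[ℝ] ℝ)) p := by
  classical
  induction Q using MvPolynomial.induction_on with
  | C a =>
    simp only [MvPolynomial.eval_C, MvPolynomial.pderiv_C, map_zero, zero_smul, Finset.sum_const_zero]
    exact hasStrictFDerivAt_const a p
  | add q r hq hr =>
    simp only [map_add, add_smul, Finset.sum_add_distrib]
    exact hq.add hr
  | mul_X q j hq =>
    have h1 : HasStrictFDerivAt (fun v : Fin n → ℝ => v j) (ContinuousLinearMap.proj j : (Fin n → ℝ) →L[ℝ] ℝ) p :=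
      (ContinuousLinearMap.proj j : (Fin n → ℝ) →L[ℝ] ℝ).hasStrictFDerivAt
    have h2 := hq.mul h1
    have h3 : (fun v : Fin n → ℝ => MvPolynomial.eval v (q * MvPolynomial.X j)) = (fun v => MvPolynomial.eval v q) * fun v => v j := by
      funext v; simp
    rw [h3]
    refine h2.congr_fderiv ?_
    ext1 w
    simp only [Derivation.leibniz, MvPolynomial.pderiv_X, smul_eq_mul, map_add, map_mul, MvPolynomial.eval_X, add_smul,
      ContinuousLinearMap.sum_apply, Finset.sum_add_distrib, ContinuousLinearMap.add_apply,
      ContinuousLinearMap.smul_apply, ContinuousLinearMap.proj_apply, Finset.smul_sum]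
    congr 1
    · rw [Finset.sum_eq_single j]
      · simp
      · intro b _ hb; simp [Pi.single_apply, hb.symm]
      · simp
    · refine Finset.sum_congr rfl fun i _ => by ring

theorem local_lip {n : ℕ} (V : Set (Fin n → ℝ)) (s : Finset (Fin n)) (Q : Fin n → MvPolynomial (Fin n) ℝ)
    (hQ : ∀ j, j ∉ s → ∀ v ∈ V, MvPolynomial.eval v (Q j) = 0)
    (hQ2 : ∀ j, j ∉ s → ∀ i, i ∉ s → i ≠ j → MvPolynomial.pderiv i (Q j) = 0)
    (p : Fin n → ℝ) (hp : ∀ j, j ∉ s → MvPolynomial.eval p (MvPolynomial.pderiv j (Q j)) ≠ 0) :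
    ∃ C > 0, ∃ ρ > 0, ∀ v ∈ V, ∀ v' ∈ V, v ∈ Metric.ball p ρ → v' ∈ Metric.ball p ρ →
      ∀ d, 0 ≤ d → (∀ i ∈ s, |v i - v' i| ≤ d) → ∀ i, |v i - v' i| ≤ C * d := by
  classical
  let D : Fin n → Fin n → ℝ := fun i j => MvPolynomial.eval p (MvPolynomial.pderiv i (Q j))
  have hev : ∀ j : Fin n, ∀ᶠ w : (Fin n → ℝ) × (Fin n → ℝ) in 𝓝 (p, p), j ∉ s →
      |MvPolynomial.eval w.1 (Q j) - MvPolynomial.eval w.2 (Q j) - ∑ i, D i j * (w.1 i - w.2 i)| ≤ |D j j| / 2 * ‖w.1 - w.2‖ := by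
    intro j
    by_cases hj : j ∈ s
    · simp [hj]
    · have := (strict_deriv (Q j) p).isLittleO.def (c := |D j j| / 2) (by have := abs_pos.2 (hp j hj); positivity)
      filter_upwards [this] with w hw _
      simpa [Real.norm_eq_abs] using hw
  obtain ⟨ρ, hρ, hball⟩ := Metric.eventually_nhds_iff_ball.1 (eventually_all.2 hev)
  let M : Fin n → ℝ := fun j => (∑ i ∈ s, |D i j|) / |D j j|
  have hM : ∀ j, 0 ≤ M j := fun j => by positivity
  refine ⟨2 * (1 + ∑ j, M j), by have := Finset.sum_nonneg (fun j (_ : j ∈ Finset.univ) => hM j); positivity, ρ, hρ, ?_⟩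
  intro v hv v' hv' hvb hvb' d hd hs
  have hone : ∀ i, |v i - v' i| ≤ (1 + ∑ j, M j) * d + ‖v - v'‖ / 2 := by
    intro j
    have hMj : M j ≤ ∑ j, M j := Finset.single_le_sum (f := M) (fun i _ => hM i) (Finset.mem_univ j)
    by_cases hj : j ∈ s
    · have h1 := hs j hj
      have h2 : 0 ≤ (∑ j, M j) * d := mul_nonneg (Finset.sum_nonneg (fun j _ => hM j)) hd
      have := norm_nonneg (v - v')
      nlinarith
    · have h1 := hball (v, v') (by rw [← ball_prod_same]; exact ⟨hvb, hvb'⟩) j hj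
      simp only [hQ j hj v hv, hQ j hj v' hv', sub_zero, zero_sub, abs_neg] at h1
      have hDj : 0 < |D j j| := abs_pos.2 (hp j hj)
      have hsplit : ∑ i, D i j * (v i - v' i) = D j j * (v j - v' j) + ∑ i ∈ s, D i j * (v i - v' i) := by
        rw [← Finset.sum_subset (Finset.subset_univ (insert j s))]
        · rw [Finset.sum_insert hj]
        · intro i _ hi
          rw [Finset.mem_insert, not_or] at hi
          simp [D, hQ2 j hj i hi.2 hi.1]
      rw [hsplit] at h1
      have h3 : |∑ i ∈ s, D i j * (v i - v' i)| ≤ (∑ i ∈ s, |D i j|) * d := by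
        refine (Finset.abs_sum_le_sum_abs _ _).trans ?_
        rw [Finset.sum_mul]
        refine Finset.sum_le_sum fun i hi => ?_
        rw [abs_mul]
        exact mul_le_mul_of_nonneg_left (hs i hi) (abs_nonneg _)
      have h4 : |D j j| * |v j - v' j| ≤ (∑ i ∈ s, |D i j|) * d + |D j j| / 2 * ‖v - v'‖ := by
        rw [← abs_mul]
        have := abs_sub_abs_le_abs_sub (D j j * (v j - v' j)) (-(∑ i ∈ s, D i j * (v i - v' i)))
        rw [abs_neg, sub_neg_eq_add] at this
        linarith
      have h5 : |D j j| * (M j * d) = (∑ i ∈ s, |D i j|) * d := by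
        simp only [M]; field_simp
      have h6 : |v j - v' j| ≤ M j * d + ‖v - v'‖ / 2 := by
        refine le_of_mul_le_mul_left ?_ hDj
        nlinarith
      nlinarith
  have hN : ‖v - v'‖ ≤ (1 + ∑ j, M j) * d + ‖v - v'‖ / 2 := by
    have h0 : 0 ≤ ∑ j, M j := Finset.sum_nonneg (fun j _ => hM j)
    rw [pi_norm_le_iff_of_nonneg (by positivity)]
    intro i
    exact hone i
  intro i
  have := hone i
  linarith

theorem exists_tb {n : ℕ} (P : Ideal (MvPolynomial (Fin n) ℝ)) [P.IsPrime] :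
    ∃ s : Finset (Fin n), IsTranscendenceBasis ℝ (fun i : s => Ideal.Quotient.mk P (MvPolynomial.X (i : Fin n))) := by
  classical
  let y : Fin n → MvPolynomial (Fin n) ℝ ⧸ P := fun i => Ideal.Quotient.mk P (MvPolynomial.X i)
  have htop : Algebra.adjoin ℝ (Set.range y) = ⊤ := by
    rw [eq_top_iff]
    intro r _
    obtain ⟨p, rfl⟩ := Ideal.Quotient.mk_surjective r
    induction p using MvPolynomial.induction_on with
    | C a => exact Subalgebra.algebraMap_mem _ a
    | add p q hp hq => rw [map_add]; exact add_mem (hp trivial) (hq trivial)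
    | mul_X p i hp => rw [map_mul]; exact mul_mem (hp trivial) (Algebra.subset_adjoin ⟨i, rfl⟩)
  have : Algebra.IsAlgebraic (Algebra.adjoin ℝ (Set.range y)) (MvPolynomial (Fin n) ℝ ⧸ P) := by
    refine ⟨fun r => ?_⟩
    have hr : r ∈ Algebra.adjoin ℝ (Set.range y) := by rw [htop]; trivial
    exact isAlgebraic_algebraMap (⟨r, hr⟩ : Algebra.adjoin ℝ (Set.range y))
  have hdom : IsDomain (MvPolynomial (Fin n) ℝ ⧸ P) := Ideal.Quotient.isDomain P
  have : FaithfulSMul ℝ (MvPolynomial (Fin n) ℝ ⧸ P) :=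
    (faithfulSMul_iff_algebraMap_injective ℝ (MvPolynomial (Fin n) ℝ ⧸ P)).2 (algebraMap ℝ (MvPolynomial (Fin n) ℝ ⧸ P)).injective
  obtain ⟨t, ht, htb⟩ := exists_isTranscendenceBasis_subset (R := ℝ) (Set.range y)
  choose σ hσ using fun a : t => ht a.2
  have hσi : Function.Injective σ := by
    intro a b hab
    apply Subtype.ext
    rw [← hσ a, ← hσ b, hab]
  refine ⟨(Set.range σ).toFinset, ?_⟩
  let e : t ≃ (Set.range σ).toFinset := (Equiv.ofInjective σ hσi).trans (Equiv.setCongr (by simp))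
  refine (isTranscendenceBasis_equiv' e ?_).1 htb
  funext a
  exact hσ a

theorem exists_Q {n : ℕ} (P : Ideal (MvPolynomial (Fin n) ℝ)) [P.IsPrime] (s : Finset (Fin n))
    (hs : IsTranscendenceBasis ℝ (fun i : s => Ideal.Quotient.mk P (MvPolynomial.X (i : Fin n))))
    (j : Fin n) (hj : j ∉ s) :
    ∃ Q ∈ P, (∀ i, i ∉ s → i ≠ j → MvPolynomial.pderiv i Q = 0) ∧ MvPolynomial.pderiv j Q ∉ P := by
  classical
  let g : s → MvPolynomial (Fin n) ℝ ⧸ P := fun i => Ideal.Quotient.mk P (MvPolynomial.X (i : Fin n))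
  let ρ : MvPolynomial s ℝ →+* MvPolynomial (Fin n) ℝ := (MvPolynomial.rename (Subtype.val : s → Fin n) : _ →ₐ[ℝ] _)
  have hρ : ∀ a, Ideal.Quotient.mk P (ρ a) = MvPolynomial.aeval g a := by
    intro a
    have : (Ideal.Quotient.mk P).comp ρ = ((MvPolynomial.aeval g : MvPolynomial s ℝ →ₐ[ℝ] _) : MvPolynomial s ℝ →+* _) := by
      apply MvPolynomial.ringHom_ext
      · intro r; simp [ρ]; rfl
      · intro i; simp [ρ, g]
    exact congrArg (fun h : MvPolynomial s ℝ →+* _ => h a) this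
  have hρ2 : ∀ p : (MvPolynomial s ℝ)[X], p.eval₂ ((MvPolynomial.aeval g : MvPolynomial s ℝ →ₐ[ℝ] _) : MvPolynomial s ℝ →+* _) (Ideal.Quotient.mk P (MvPolynomial.X j)) = Ideal.Quotient.mk P (p.eval₂ ρ (MvPolynomial.X j)) := by
    intro p
    rw [Polynomial.hom_eval₂]
    congr 1
    apply RingHom.ext
    intro a
    exact (hρ a).symm
  have hex : ∃ d : ℕ, ∃ p : (MvPolynomial s ℝ)[X], p ≠ 0 ∧ p.eval₂ ρ (MvPolynomial.X j) ∈ P ∧ p.natDegree = d := by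
    obtain ⟨p, hp, hp2⟩ := alg_of_basis g hs (Ideal.Quotient.mk P (MvPolynomial.X j))
    rw [hρ2, Ideal.Quotient.eq_zero_iff_mem] at hp2
    exact ⟨_, p, hp, hp2, rfl⟩
  obtain ⟨p, hp0, hpP, hpd⟩ := Nat.find_spec hex
  have hmin := fun m => Nat.find_min (H := hex) (m := m)
  rw [← hpd] at hmin
  have hdeg : p.natDegree ≠ 0 := by
    intro h0
    obtain ⟨a, ha⟩ := Polynomial.natDegree_eq_zero.1 h0
    rw [← ha, eval₂_C, ← Ideal.Quotient.eq_zero_iff_mem, hρ] at hpP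
    have := hs.1
    have h3 : a = 0 := by
      apply this
      rw [hpP, map_zero]
    rw [h3, map_zero] at ha
    exact hp0 ha.symm
  have hpd : ∀ i, i ∉ s → ∀ q : (MvPolynomial s ℝ)[X], MvPolynomial.pderiv i (q.eval₂ ρ (MvPolynomial.X j)) =
      if i = j then (derivative q).eval₂ ρ (MvPolynomial.X j) else 0 := by
    intro i hi q
    induction q using Polynomial.induction_on' with
    | add a b ha hb =>
      rw [eval₂_add, map_add, ha, hb, derivative_add, eval₂_add]
      split_ifs <;> simp
    | monomial k a =>
      have h0 : MvPolynomial.pderiv i (ρ a) = 0 := by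
        apply MvPolynomial.pderiv_eq_zero_of_notMem_vars
        intro hmem
        have := MvPolynomial.vars_rename (Subtype.val : s → Fin n) a hmem
        simp at this
        exact hi this.1
      rw [eval₂_monomial, derivative_monomial, eval₂_monomial, Derivation.leibniz, h0, smul_zero, add_zero,
        Derivation.leibniz_pow, MvPolynomial.pderiv_X]
      split_ifs with hij
      · subst hij
        simp
        ring
      · simp [Pi.single_apply, hij, Ne.symm hij]
  refine ⟨p.eval₂ ρ (MvPolynomial.X j), hpP, ?_, ?_⟩
  · intro i hi hij
    rw [hpd i hi, if_neg hij]
  · rw [hpd j hj, if_pos rfl]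
    intro hmem
    refine hmin (derivative p).natDegree (Polynomial.natDegree_derivative_lt hdeg) ⟨derivative p, ?_, hmem, rfl⟩
    intro h0
    exact hdeg (Polynomial.natDegree_eq_zero_of_derivative_eq_zero h0)
end BBR


open Polynomial Topology Filter
set_option linter.all false
namespace BBR

theorem mk_rename {n : ℕ} (P : Ideal (MvPolynomial (Fin n) ℝ)) (s : Finset (Fin n)) (a : MvPolynomial s ℝ) :
    Ideal.Quotient.mk P (MvPolynomial.rename (Subtype.val : s → Fin n) a)
      = MvPolynomial.aeval (fun i : s => Ideal.Quotient.mk P (MvPolynomial.X (i : Fin n))) a := by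
  have : (Ideal.Quotient.mk P).comp ((MvPolynomial.rename (Subtype.val : s → Fin n) : MvPolynomial s ℝ →ₐ[ℝ] MvPolynomial (Fin n) ℝ) : MvPolynomial s ℝ →+* MvPolynomial (Fin n) ℝ)
      = ((MvPolynomial.aeval (fun i : s => Ideal.Quotient.mk P (MvPolynomial.X (i : Fin n))) : MvPolynomial s ℝ →ₐ[ℝ] _) : MvPolynomial s ℝ →+* _) := by
    apply MvPolynomial.ringHom_ext
    · intro r; simp; rfl
    · intro i; simp
  exact congrArg (fun h : MvPolynomial s ℝ →+* _ => h a) this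

section
variable {n : ℕ} (P : Ideal (MvPolynomial (Fin n) ℝ)) {K : Type} (η : Fin n → MvPolynomial K ℝ) (k0 : K)

/-- the generators of the family -/
noncomputable def gg : Option (Fin n) → MvPolynomial K (MvPolynomial (Fin n) ℝ ⧸ P)
  | none => MvPolynomial.X k0
  | some i => MvPolynomial.C (Ideal.Quotient.mk P (MvPolynomial.X i)) - MvPolynomial.map (algebraMap ℝ (MvPolynomial (Fin n) ℝ ⧸ P)) (η i)

/-- base coordinates -/
noncomputable def bb (v : Fin n → ℝ) (c : K → ℝ) : Option (Fin n) → ℝ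
  | none => c k0
  | some i => v i - MvPolynomial.eval c (η i)

/-- the point hom -/
noncomputable def YY (v : Fin n → ℝ) (hv : ∀ p ∈ P, MvPolynomial.eval v p = 0) (c : K → ℝ) :
    MvPolynomial K (MvPolynomial (Fin n) ℝ ⧸ P) →+* ℝ :=
  MvPolynomial.eval₂Hom (ptHom P v hv) c

/-- the point of a hom -/
noncomputable def vv (Y : MvPolynomial K (MvPolynomial (Fin n) ℝ ⧸ P) →+* ℝ) (i : Fin n) : ℝ :=
  Y (MvPolynomial.C (Ideal.Quotient.mk P (MvPolynomial.X i)))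

noncomputable def cc (Y : MvPolynomial K (MvPolynomial (Fin n) ℝ ⧸ P) →+* ℝ) (k : K) : ℝ :=
  Y (MvPolynomial.X k)

theorem vv_mem (Y : MvPolynomial K (MvPolynomial (Fin n) ℝ ⧸ P) →+* ℝ) (p) (hp : p ∈ P) :
    MvPolynomial.eval (vv P Y) p = 0 := hom_mem P (Y.comp MvPolynomial.C) p hp

theorem Y_C (Y : MvPolynomial K (MvPolynomial (Fin n) ℝ ⧸ P) →+* ℝ) (p) :
    Y (MvPolynomial.C (Ideal.Quotient.mk P p)) = MvPolynomial.eval (vv P Y) p := hom_mk P (Y.comp MvPolynomial.C) p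

theorem Y_map (Y : MvPolynomial K (MvPolynomial (Fin n) ℝ ⧸ P) →+* ℝ) (p : MvPolynomial K ℝ) :
    Y (MvPolynomial.map (algebraMap ℝ (MvPolynomial (Fin n) ℝ ⧸ P)) p) = MvPolynomial.eval (cc P Y) p := by
  have := hom_eq_eval (Y.comp (MvPolynomial.map (algebraMap ℝ (MvPolynomial (Fin n) ℝ ⧸ P))))
  have h2 := congrArg (fun g : MvPolynomial K ℝ →+* ℝ => g p) this
  simp only [RingHom.comp_apply, MvPolynomial.map_X] at h2
  exact h2

theorem Y_gg (Y : MvPolynomial K (MvPolynomial (Fin n) ℝ ⧸ P) →+* ℝ) (o) :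
    Y (gg P η k0 o) = bb η k0 (vv P Y) (cc P Y) o := by
  cases o with
  | none => rfl
  | some i =>
    simp only [gg, bb]
    rw [map_sub, Y_map]
    rfl

theorem Y_ext (Y Y' : MvPolynomial K (MvPolynomial (Fin n) ℝ ⧸ P) →+* ℝ) (h1 : vv P Y = vv P Y') (h2 : cc P Y = cc P Y') :
    Y = Y' := by
  apply MvPolynomial.ringHom_ext
  · intro r
    obtain ⟨p, rfl⟩ := Ideal.Quotient.mk_surjective r
    rw [Y_C, Y_C, h1]
  · intro k; exact congrFun h2 k

theorem vv_YY (v : Fin n → ℝ) (hv : ∀ p ∈ P, MvPolynomial.eval v p = 0) (c : K → ℝ) : vv P (YY P v hv c) = v := by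
  funext i; simp [vv, YY, ptHom_mk]

theorem cc_YY (v : Fin n → ℝ) (hv : ∀ p ∈ P, MvPolynomial.eval v p = 0) (c : K → ℝ) : cc P (YY P v hv c) = c := by
  funext i; simp [cc, YY]

theorem Y_aeval (Y : MvPolynomial K (MvPolynomial (Fin n) ℝ ⧸ P) →+* ℝ) (q : MvPolynomial (Option (Fin n)) ℝ) :
    Y (MvPolynomial.aeval (gg P η k0) q) = MvPolynomial.eval (bb η k0 (vv P Y) (cc P Y)) q := by
  have := hom_eq_eval (Y.comp ((MvPolynomial.aeval (gg P η k0) : MvPolynomial (Option (Fin n)) ℝ →ₐ[ℝ] _) : MvPolynomial (Option (Fin n)) ℝ →+* _))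
  have h2 := congrArg (fun g : MvPolynomial (Option (Fin n)) ℝ →+* ℝ => g q) this
  simp only [RingHom.comp_apply] at h2
  have h3 : (fun i => Y (gg P η k0 i)) = bb η k0 (vv P Y) (cc P Y) := funext fun o => Y_gg P η k0 Y o
  rw [← h3]
  simpa using h2

theorem dense_R [Fintype K] (S : Set (Fin n → ℝ)) (hP : vI S = P) (N : Set (K → ℝ)) (c0 : K → ℝ) (hN : N ∈ 𝓝 c0)
    (r : MvPolynomial K (MvPolynomial (Fin n) ℝ ⧸ P)) (hr : r ≠ 0) :
    ∃ v, ∃ hv : v ∈ S, ∃ c ∈ N, YY P v (fun p hp => by rw [← hP] at hp; exact hp v hv) c r ≠ 0 := by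
  obtain ⟨m, hm⟩ := MvPolynomial.ne_zero_iff.1 hr
  obtain ⟨p, hp⟩ := Ideal.Quotient.mk_surjective (MvPolynomial.coeff m r)
  rw [← hp, Ne, Ideal.Quotient.eq_zero_iff_mem, ← hP] at hm
  obtain ⟨v, hv, hv0⟩ := notMem_vI.1 hm
  have hv' : ∀ p ∈ P, MvPolynomial.eval v p = 0 := fun p hp => by rw [← hP] at hp; exact hp v hv
  have hne : MvPolynomial.map (ptHom P v hv') r ≠ 0 := by
    rw [MvPolynomial.ne_zero_iff]
    refine ⟨m, ?_⟩
    rw [MvPolynomial.coeff_map, ← hp, ptHom_mk]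
    exact hv0
  obtain ⟨c, hc, hcN⟩ := (mv_dense _ hne).inter_nhds_nonempty hN
  refine ⟨v, hv, c, hcN, ?_⟩
  have hc' : MvPolynomial.eval c (MvPolynomial.map (ptHom P v hv') r) ≠ 0 := hc
  rw [MvPolynomial.eval_map] at hc'
  exact hc'

theorem R_gen (S : Subring (MvPolynomial K (MvPolynomial (Fin n) ℝ ⧸ P)))
    (h1 : ∀ a : MvPolynomial (Option (Fin n)) ℝ, MvPolynomial.aeval (gg P η k0) a ∈ S) (h2 : ∀ k, k ≠ k0 → MvPolynomial.X k ∈ S) (r) : r ∈ S := by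
  have hX : ∀ k, MvPolynomial.X k ∈ S := by
    intro k
    by_cases hk : k = k0
    · subst hk
      have := h1 (MvPolynomial.X none)
      simpa [gg] using this
    · exact h2 k hk
  have hC : ∀ a : ℝ, MvPolynomial.C (algebraMap ℝ (MvPolynomial (Fin n) ℝ ⧸ P) a) ∈ S := by
    intro a
    have := h1 (MvPolynomial.C a)
    simpa using this
  have hm : ∀ p : MvPolynomial K ℝ, MvPolynomial.map (algebraMap ℝ (MvPolynomial (Fin n) ℝ ⧸ P)) p ∈ S := by
    intro p
    induction p using MvPolynomial.induction_on with
    | C a => rw [MvPolynomial.map_C]; exact hC a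
    | add p q hp hq => rw [map_add]; exact add_mem hp hq
    | mul_X p i hp => rw [map_mul, MvPolynomial.map_X]; exact mul_mem hp (hX i)
  have hy : ∀ i, MvPolynomial.C (Ideal.Quotient.mk P (MvPolynomial.X i)) ∈ S := by
    intro i
    have := add_mem (h1 (MvPolynomial.X (some i))) (hm (η i))
    simpa [gg] using this
  have hA : ∀ p, MvPolynomial.C (Ideal.Quotient.mk P p) ∈ S := by
    intro p
    induction p using MvPolynomial.induction_on with
    | C a => exact hC a
    | add p q hp hq => rw [map_add, map_add]; exact add_mem hp hq
    | mul_X p i hp => rw [map_mul, map_mul]; exact mul_mem hp (hy i)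
  induction r using MvPolynomial.induction_on with
  | C a =>
    obtain ⟨p, rfl⟩ := Ideal.Quotient.mk_surjective a
    exact hA p
  | add p q hp hq => exact add_mem hp hq
  | mul_X p i hp => exact mul_mem hp (hX i)
end

theorem eval_opt {n : ℕ} (w : Option (Fin n) → ℝ) (q : (MvPolynomial (Fin n) ℝ)[X]) :
    MvPolynomial.eval w ((MvPolynomial.optionEquivLeft ℝ (Fin n)).symm q) = (q.map (MvPolynomial.eval (fun i => w (some i)))).eval (w none) := by
  have : (MvPolynomial.eval w).comp ((MvPolynomial.optionEquivLeft ℝ (Fin n)).symm : (MvPolynomial (Fin n) ℝ)[X] →+* _)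
     = (evalRingHom (w none)).comp (mapRingHom (MvPolynomial.eval (fun i => w (some i)))) := by
    apply Polynomial.ringHom_ext'
    · apply MvPolynomial.ringHom_ext
      · intro r; simp [MvPolynomial.optionEquivLeft_symm_C_C]
      · intro i; simp [MvPolynomial.optionEquivLeft_symm_C_X]
    · simp [MvPolynomial.optionEquivLeft_symm_X]
  exact congrArg (fun h : (MvPolynomial (Fin n) ℝ)[X] →+* ℝ => h q) this

theorem gg_basis {n : ℕ} (P : Ideal (MvPolynomial (Fin n) ℝ)) [P.IsPrime] (S : Set (Fin n → ℝ)) (hP : vI S = P)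
    (s : Finset (Fin n))
    (hs : IsTranscendenceBasis ℝ (fun i : s => Ideal.Quotient.mk P (MvPolynomial.X (i : Fin n))))
    (η : Fin n → MvPolynomial (Option {j // j ∉ s}) ℝ) (p : Fin n → ℝ) (r : ℝ) (hr : r ≠ 0)
    (hη : ∀ c : Option {j // j ∉ s} → ℝ, c none = 0 → ∀ i, MvPolynomial.eval c (η i) = p i + if h : i ∉ s then r * c (some ⟨i, h⟩) else 0) :
    IsTranscendenceBasis ℝ (gg P η none) := by
  classical
  have hdom : IsDomain (MvPolynomial (Fin n) ℝ ⧸ P) := Ideal.Quotient.isDomain P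
  have hSP : ∀ v ∈ S, ∀ q ∈ P, MvPolynomial.eval v q = 0 := by
    intro v hv q hq; rw [← hP] at hq; exact hq v hv
  have key : ∀ N : ℕ, ∀ q : (MvPolynomial (Fin n) ℝ)[X], q.natDegree ≤ N →
      MvPolynomial.aeval (gg P η none) ((MvPolynomial.optionEquivLeft ℝ (Fin n)).symm q) = 0 → q = 0 := by
    have hcoeff : ∀ q : (MvPolynomial (Fin n) ℝ)[X],
      MvPolynomial.aeval (gg P η none) ((MvPolynomial.optionEquivLeft ℝ (Fin n)).symm q) = 0 → q.coeff 0 = 0 := by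
      intro q hq
      apply MvPolynomial.funext
      intro u
      rw [map_zero]
      have h1 : ∀ v ∈ S, MvPolynomial.eval (fun i => if i ∈ s then v i - p i else u i) (q.coeff 0) = 0 := by
        intro v hv
        let c : Option {j // j ∉ s} → ℝ := fun o => o.elim 0 (fun j => (v j - p j - u j) / r)
        have h2 := Y_aeval P η none (YY P v (hSP v hv) c) ((MvPolynomial.optionEquivLeft ℝ (Fin n)).symm q)
        rw [hq, map_zero, vv_YY, cc_YY, eval_opt] at h2
        have h3 : bb η none v c none = 0 := rfl
        have h4 : (fun i => bb η none v c (some i)) = (fun i => if i ∈ s then v i - p i else u i) := by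
          funext i
          simp only [bb]
          rw [hη c rfl]
          by_cases hi : i ∈ s
          · simp [hi]
          · simp [hi, c]
            field_simp
            ring
        rw [h3, h4, ← Polynomial.coeff_zero_eq_eval_zero, Polynomial.coeff_map] at h2
        exact h2.symm
      let T : MvPolynomial s ℝ := MvPolynomial.aeval (fun i : Fin n => if h : i ∈ s then MvPolynomial.X ⟨i, h⟩ - MvPolynomial.C (p i) else MvPolynomial.C (u i)) (q.coeff 0)
      have hT : ∀ w : s → ℝ, MvPolynomial.eval w T = MvPolynomial.eval (fun i => if h : i ∈ s then w ⟨i, h⟩ - p i else u i) (q.coeff 0) := by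
        intro w
        rw [eval_aeval]
        congr 2
        funext i
        simp only [ev]
        split_ifs <;> simp
      have hT0 : T = 0 := by
        apply hs.1
        rw [map_zero, ← mk_rename, Ideal.Quotient.eq_zero_iff_mem, ← hP]
        intro v hv
        rw [MvPolynomial.eval_rename, hT]
        have := h1 v hv
        simpa using this
      have h5 := hT (fun i => u i + p i)
      rw [hT0, map_zero] at h5
      have h6 : (fun i => if h : i ∈ s then u i + p i - p i else u i) = u := by
        funext i; split_ifs <;> simp
      simp only at h5
      rw [h6] at h5
      exact h5.symm
    intro N
    induction N with
    | zero =>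
      intro q hq hq2
      rw [Polynomial.eq_C_of_natDegree_le_zero hq, hcoeff q hq2, map_zero]
    | succ N ih =>
      intro q hq hq2
      have h0 := hcoeff q hq2
      have h1 : X * divX q = q := by
        have := Polynomial.X_mul_divX_add q
        rwa [h0, map_zero, add_zero] at this
      rw [← h1, map_mul, map_mul, mul_eq_zero] at hq2
      rcases hq2 with h | h
      · exfalso
        rw [MvPolynomial.optionEquivLeft_symm_X, MvPolynomial.aeval_X] at h
        exact MvPolynomial.X_ne_zero _ h
      · have := ih (divX q) (by rw [Polynomial.natDegree_divX_eq_natDegree_tsub_one]; omega) h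
        rw [← h1, this, mul_zero]
  have hind : AlgebraicIndependent ℝ (gg P η none) := by
    rw [algebraicIndependent_iff]
    intro Q hQ
    have := key _ (MvPolynomial.optionEquivLeft ℝ (Fin n) Q) le_rfl (by simpa using hQ)
    simpa using this
  refine hind.isTranscendenceBasis_of_trdeg_le_of_finite ?_
  have hf1 : FaithfulSMul ℝ (MvPolynomial (Fin n) ℝ ⧸ P) :=
    (faithfulSMul_iff_algebraMap_injective ℝ (MvPolynomial (Fin n) ℝ ⧸ P)).2 (algebraMap ℝ (MvPolynomial (Fin n) ℝ ⧸ P)).injective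
  have h1 := _root_.trdeg_add_eq ℝ (MvPolynomial (Fin n) ℝ ⧸ P) (A := MvPolynomial (Option {j // j ∉ s}) (MvPolynomial (Fin n) ℝ ⧸ P))
  rw [← h1, MvPolynomial.trdeg_of_isDomain, ← hs.cardinalMk_eq_trdeg]
  simp only [Cardinal.mk_fintype, Cardinal.lift_natCast]
  rw [← Nat.cast_add, Nat.cast_le]
  simp [Fintype.card_subtype_compl]
  have := Finset.card_le_univ s
  simp at this
  omega
end BBR


open Polynomial Topology Filter
set_option linter.all false
namespace BBR

theorem exists_h1 {A R : Type*} [CommRing A] [IsDomain A] [CommRing R] [IsDomain R]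
    (φ : A →+* R) (hinj : Function.Injective φ)
    (halg : ∀ r : R, ∃ p : A[X], p ≠ 0 ∧ p.eval₂ φ r = 0) (r0 : R) (hr0 : r0 ≠ 0) :
    ∃ h1 : A, h1 ≠ 0 ∧ ∀ Y : R →+* ℝ, Y (φ h1) ≠ 0 → Y r0 ≠ 0 := by
  letI : Algebra A R := φ.toAlgebra
  have h : IsAlgebraic A r0 := halg r0
  have hnd : r0 ∈ nonZeroDivisors R := mem_nonZeroDivisors_of_ne_zero hr0
  obtain ⟨a, ha, hd⟩ := h.exists_nonzero_dvd hnd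
  refine ⟨a, ha, fun Y hY h0 => hY ?_⟩
  obtain ⟨b, hb⟩ := hd
  have : φ a = r0 * b := hb
  rw [this, map_mul, h0, zero_mul]

theorem poly_lip {κ : Type*} [Fintype κ] (Q : MvPolynomial κ ℝ) :
    ∃ M ≥ 0, (∀ x : κ → ℝ, (∀ k, |x k| ≤ 1) → |MvPolynomial.eval x Q| ≤ M) ∧
      ∀ x x' : κ → ℝ, (∀ k, |x k| ≤ 1) → (∀ k, |x' k| ≤ 1) → ∀ d, 0 ≤ d → (∀ k, |x k - x' k| ≤ d) →
        |MvPolynomial.eval x Q - MvPolynomial.eval x' Q| ≤ M * d := by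
  induction Q using MvPolynomial.induction_on with
  | C a =>
    refine ⟨|a|, abs_nonneg a, fun x _ => by simp, fun x x' _ _ d hd _ => ?_⟩
    simp; positivity
  | add p q hp hq =>
    obtain ⟨M, hM, h1, h2⟩ := hp
    obtain ⟨N, hN, h3, h4⟩ := hq
    refine ⟨M + N, by positivity, fun x hx => ?_, fun x x' hx hx' d hd hxx => ?_⟩
    · rw [map_add]
      exact (abs_add_le _ _).trans (add_le_add (h1 x hx) (h3 x hx))
    · rw [map_add, map_add, add_mul, add_sub_add_comm]
      exact (abs_add_le _ _).trans (add_le_add (h2 x x' hx hx' d hd hxx) (h4 x x' hx hx' d hd hxx))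
  | mul_X p k hp =>
    obtain ⟨M, hM, h1, h2⟩ := hp
    refine ⟨M + M, by positivity, fun x hx => ?_, fun x x' hx hx' d hd hxx => ?_⟩
    · rw [map_mul, MvPolynomial.eval_X, abs_mul]
      have := mul_le_mul (h1 x hx) (hx k) (abs_nonneg _) hM
      linarith
    · rw [map_mul, map_mul, MvPolynomial.eval_X, MvPolynomial.eval_X]
      have e : MvPolynomial.eval x p * x k - MvPolynomial.eval x' p * x' k =
        (MvPolynomial.eval x p - MvPolynomial.eval x' p) * x k + MvPolynomial.eval x' p * (x k - x' k) := by ring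
      rw [e, add_mul]
      refine (abs_add_le _ _).trans (add_le_add ?_ ?_)
      · rw [abs_mul]
        have := mul_le_mul (h2 x x' hx hx' d hd hxx) (hx k) (abs_nonneg _) (by positivity)
        linarith
      · rw [abs_mul]
        exact mul_le_mul (h1 x' hx') (hxx k) (abs_nonneg _) hM

theorem sw1 {κ : Type*} [Fintype κ] (K : Set (κ → ℝ)) (hK : IsCompact K) (g : (κ → ℝ) → ℝ) (hg : ContinuousOn g K)
    (ε : ℝ) (hε : 0 < ε) : ∃ w : MvPolynomial κ ℝ, ∀ x ∈ K, |MvPolynomial.eval x w - g x| < ε := by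
  haveI : CompactSpace K := isCompact_iff_compactSpace.1 hK
  let X : κ → C(K, ℝ) := fun k => ⟨fun x => x.1 k, (continuous_apply k).comp continuous_subtype_val⟩
  let Φ : MvPolynomial κ ℝ →ₐ[ℝ] C(K, ℝ) := MvPolynomial.aeval X
  have hΦ : ∀ (w : MvPolynomial κ ℝ) (x : K), Φ w x = MvPolynomial.eval x.1 w := by
    intro w x
    induction w using MvPolynomial.induction_on with
    | C a => simp [Φ]
    | add p q hp hq => rw [map_add, map_add, ContinuousMap.add_apply, hp, hq]
    | mul_X p i hp => rw [map_mul, map_mul, ContinuousMap.mul_apply, hp]; simp [Φ, X]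
  have hsep : Φ.range.SeparatesPoints := by
    intro x y hxy
    have : ∃ k, x.1 k ≠ y.1 k := by
      by_contra hcon
      push Not at hcon
      exact hxy (Subtype.ext (funext hcon))
    obtain ⟨k, hk⟩ := this
    refine ⟨_, ⟨Φ (MvPolynomial.X k), ⟨_, rfl⟩, rfl⟩, ?_⟩
    show Φ (MvPolynomial.X k) x ≠ Φ (MvPolynomial.X k) y
    rw [hΦ, hΦ]
    simpa using hk
  obtain ⟨⟨_, ⟨w, rfl⟩⟩, hw⟩ := ContinuousMap.exists_mem_subalgebra_near_continuousMap_of_separatesPoints Φ.range hsep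
    ⟨fun x : K => g x.1, continuousOn_iff_continuous_restrict.1 hg⟩ ε hε
  refine ⟨w, fun x hx => ?_⟩
  have := (ContinuousMap.norm_coe_le_norm _ (⟨x, hx⟩ : K)).trans_lt hw
  rw [ContinuousMap.sub_apply] at this
  have h2 := hΦ w ⟨x, hx⟩
  simp only at h2
  rw [← h2]
  exact this

theorem sw2 {n : ℕ} (f : Fin n → MvPolynomial (Fin n) ℝ) (hf : Function.Injective (ev f))
    {κ : Type*} [Fintype κ] (K : Set (κ → ℝ)) (hK : IsCompact K) (g : (κ → ℝ) → (Fin n → ℝ)) (hg : Continuous g)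
    (hU : ∀ x ∈ K, g x ∈ Set.range (ev f)) (ε : ℝ) (hε : 0 < ε) :
    ∃ w : Fin n → MvPolynomial κ ℝ, ∀ x ∈ K, dist (ev f (ev w x)) (g x) < ε := by
  have hemb : IsOpenEmbedding (ev f) := .of_continuous_injective_isOpenMap (ev_continuous f) hf (isOpenMap_ev f hf)
  let G : (κ → ℝ) → (Fin n → ℝ) := fun x => Function.invFun (ev f) (g x)
  have hG : ∀ x ∈ K, ev f (G x) = g x := fun x hx => Function.invFun_eq (hU x hx)
  have hGc : ContinuousOn G K := by
    rw [hemb.isInducing.continuousOn_iff]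
    exact hg.continuousOn.congr (fun x hx => hG x hx)
  have hGK : IsCompact (G '' K) := hK.image_of_continuousOn hGc
  have := hGK.uniformContinuousAt_of_continuousAt (ev f) (fun a _ => (ev_continuous f).continuousAt) (Metric.dist_mem_uniformity hε)
  obtain ⟨δ, hδ, hδ2⟩ := Metric.mem_uniformity_dist.1 this
  choose w hw using fun i => sw1 K hK (fun x => G x i) ((continuous_apply i).comp_continuousOn hGc) δ hδ
  refine ⟨w, fun x hx => ?_⟩
  have h1 : dist (G x) (ev w x) < δ := by
    rw [dist_comm, dist_pi_lt_iff hδ]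
    intro i
    exact hw i x hx
  have h2 := hδ2 h1 ⟨x, hx, rfl⟩
  rw [← hG x hx, dist_comm]
  exact h2
end BBR


open Polynomial Topology Filter
set_option linter.all false
namespace BBR

theorem sq_le_abs {κ : Type*} [Fintype κ] (x : κ → ℝ) (t : ℝ) (ht : 0 ≤ t) (h : ∑ k, x k ^ 2 ≤ t ^ 2) (k : κ) : |x k| ≤ t := by
  have h1 : x k ^ 2 ≤ ∑ k, x k ^ 2 :=
    Finset.single_le_sum (f := fun i => x i ^ 2) (fun i _ => sq_nonneg _) (Finset.mem_univ k)
  exact abs_le_of_sq_le_sq (h1.trans h) ht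

theorem tube {κ : Type*} [Fintype κ] {n : ℕ} (U : Set (Fin n → ℝ)) (hU : IsOpen U)
    (H : (Option κ → ℝ) → (Fin n → ℝ)) (hH : Continuous H)
    (h1 : ∀ c : Option κ → ℝ, ∑ k, c (some k) ^ 2 = 1 → 0 ≤ c none → c none ≤ 1 → H c ∈ U)
    (h2 : ∀ c : Option κ → ℝ, ∑ k, c (some k) ^ 2 ≤ 1 → c none = 1 → H c ∈ U) :
    ∃ δ > 0, δ ≤ 1 ∧
      (∀ c a, 1 < ∑ k, c (some k) ^ 2 → ∑ k, c (some k) ^ 2 < (1 + δ) ^ 2 → -δ < c none → c none < 1 + δ →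
        ‖a‖ < δ → H c + a ∈ U) ∧
      (∀ c a, ∑ k, c (some k) ^ 2 ≤ 1 → |c none - 1| < δ → ‖a‖ < δ → H c + a ∈ U) := by
  classical
  let K : Set (Option κ → ℝ) := {c | ∑ k, c (some k) ^ 2 ≤ 1 ∧ 0 ≤ c none ∧ c none ≤ 1 ∧ (∑ k, c (some k) ^ 2 = 1 ∨ c none = 1)}
  have hK : IsCompact K := by
    refine Metric.isCompact_of_isClosed_isBounded ?_ ?_
    · have e : K = {c | ∑ k, c (some k) ^ 2 ≤ 1} ∩ ({c | 0 ≤ c none} ∩ ({c | c none ≤ 1} ∩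
        ({c | ∑ k, c (some k) ^ 2 = 1} ∪ {c | c none = 1}))) := rfl
      rw [e]
      refine (isClosed_le (by fun_prop) continuous_const).inter ((isClosed_le continuous_const (by fun_prop)).inter
        ((isClosed_le (by fun_prop) continuous_const).inter ((isClosed_eq (by fun_prop) continuous_const).union
          (isClosed_eq (by fun_prop) continuous_const))))
    · refine (Metric.isBounded_closedBall (x := (0 : Option κ → ℝ)) (r := 1)).subset ?_
      rintro c ⟨hc1, hc2, hc3, -⟩
      rw [Metric.mem_closedBall, dist_pi_le_iff zero_le_one]
      intro o
      rw [Pi.zero_apply, Real.dist_eq, sub_zero]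
      cases o with
      | none => rw [abs_of_nonneg hc2]; exact hc3
      | some k => exact sq_le_abs (fun k => c (some k)) 1 zero_le_one (by simpa using hc1) k
  have hO : IsOpen {w : (Option κ → ℝ) × (Fin n → ℝ) | H w.1 + w.2 ∈ U} :=
    hU.preimage ((hH.comp continuous_fst).add continuous_snd)
  have hsub : K ×ˢ {(0 : Fin n → ℝ)} ⊆ {w : (Option κ → ℝ) × (Fin n → ℝ) | H w.1 + w.2 ∈ U} := by
    rintro ⟨c, a⟩ ⟨⟨hc1, hc2, hc3, hc4⟩, ha⟩
    simp only [Set.mem_singleton_iff] at ha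
    subst ha
    show H c + 0 ∈ U
    rw [add_zero]
    rcases hc4 with h | h
    · exact h1 c h hc2 hc3
    · exact h2 c hc1 h
  obtain ⟨δ, hδ, hth⟩ := (hK.prod isCompact_singleton).exists_thickening_subset_open hO hsub
  have main : ∀ c c' a, c' ∈ K → (∀ o, |c o - c' o| < δ) → ‖a‖ < δ → H c + a ∈ U := by
    intro c c' a hc' hd ha
    have : (c, a) ∈ Metric.thickening δ (K ×ˢ {(0 : Fin n → ℝ)}) := by
      rw [Metric.mem_thickening_iff]
      refine ⟨(c', 0), ⟨hc', rfl⟩, ?_⟩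
      rw [Prod.dist_eq, max_lt_iff]
      refine ⟨?_, by simpa using ha⟩
      show dist c c' < δ
      rw [dist_pi_lt_iff hδ]
      exact hd
    exact hth this
  refine ⟨min δ 1, by positivity, min_le_right _ _, ?_, ?_⟩
  · intro c a hc1 hc2 hc3 hc4 ha
    set δ' := min δ 1
    have hδ' : δ' ≤ δ := min_le_left _ _
    have hδ0 : 0 < δ' := by positivity
    set Sg := ∑ k, c (some k) ^ 2 with hSg
    set lam := Real.sqrt Sg with hlam
    have hl2 : lam ^ 2 = Sg := Real.sq_sqrt (by linarith)
    have hl1 : 1 < lam := by rw [hlam, Real.lt_sqrt zero_le_one]; simpa using hc1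
    have hl3 : lam < 1 + δ' := by
      rw [hlam, Real.sqrt_lt' (by positivity)]; exact hc2
    refine main c (fun o => o.elim (max 0 (min 1 (c none))) (fun k => c (some k) / lam)) a ⟨?_, ?_, ?_, ?_⟩ ?_ (ha.trans_le hδ')
    · simp only [Option.elim_some, div_pow]
      rw [← Finset.sum_div, ← hSg, hl2, div_self (by linarith)]
    · simp
    · simp
    · left
      simp only [Option.elim_some, div_pow]
      rw [← Finset.sum_div, ← hSg, hl2, div_self (by linarith)]
    · intro o
      cases o with
      | none =>
        simp only [Option.elim_none]
        rcases max_cases 0 (min 1 (c none)) with h | h <;> rcases min_cases 1 (c none) with h' | h' <;>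
          rw [abs_lt] <;> constructor <;> linarith
      | some k =>
        simp only [Option.elim_some]
        have h3 : |c (some k)| ≤ lam := sq_le_abs (fun k => c (some k)) lam (by linarith) (by rw [hl2]) k
        have h4 : c (some k) - c (some k) / lam = (c (some k) / lam) * (lam - 1) := by field_simp
        rw [h4, abs_mul, abs_div, abs_of_pos (by linarith : 0 < lam), abs_of_pos (by linarith : 0 < lam - 1)]
        have h5 : |c (some k)| / lam ≤ 1 := by rw [div_le_one (by linarith)]; exact h3
        nlinarith
  · intro c a hc1 hc2 ha
    have hδ' : min δ 1 ≤ δ := min_le_left _ _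
    refine main c (fun o => o.elim 1 (fun k => c (some k))) a ⟨?_, ?_, ?_, ?_⟩ ?_ (ha.trans_le hδ')
    · simpa using hc1
    · simp
    · simp
    · right; rfl
    · intro o
      cases o with
      | none => exact hc2.trans_le hδ'
      | some k => simpa using hδ

/-- uniqueness for small time -/
theorem uniq {n : ℕ} (s : Finset (Fin n)) (V : Set (Fin n → ℝ)) (p : Fin n → ℝ) (C ρ r M : ℝ) (hC : 0 < C) (hr : 0 < r) (hM : 0 ≤ M)
    (hlip : ∀ v ∈ V, ∀ v' ∈ V, v ∈ Metric.ball p ρ → v' ∈ Metric.ball p ρ →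
      ∀ d, 0 ≤ d → (∀ i ∈ s, |v i - v' i| ≤ d) → ∀ i, |v i - v' i| ≤ C * d)
    (x x' : {j // j ∉ s} → ℝ) (v v' : Fin n → ℝ) (hv : v ∈ V) (hv' : v' ∈ V) (hvb : v ∈ Metric.ball p ρ) (hvb' : v' ∈ Metric.ball p ρ)
    (τ : ℝ) (hτ : |τ| * ((C + 1) * M) < r) (E E' a : Fin n → ℝ)
    (hE : ∀ d, 0 ≤ d → (∀ k, |x k - x' k| ≤ d) → ∀ i, |E i - E' i| ≤ M * d)
    (h : ∀ i, v i = (p i + if h : i ∉ s then r * x ⟨i, h⟩ else 0) + τ * E i + a i)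
    (h' : ∀ i, v' i = (p i + if h : i ∉ s then r * x' ⟨i, h⟩ else 0) + τ * E' i + a i) : x = x' := by
  set N := ‖x - x'‖ with hN
  have hN0 : 0 ≤ N := norm_nonneg _
  have hEN := hE N hN0 (fun k => by simpa using norm_le_pi_norm (x - x') k)
  have hτE : ∀ i, |τ * E i - τ * E' i| ≤ |τ| * (M * N) := by
    intro i
    rw [← mul_sub, abs_mul]
    exact mul_le_mul_of_nonneg_left (hEN i) (abs_nonneg _)
  have h1 := hlip v hv v' hv' hvb hvb' (|τ| * (M * N)) (by positivity) (by
    intro i hi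
    have := hτE i
    rw [h i, h' i]
    simp only [hi, not_true_eq_false, dite_false]
    have e : p i + 0 + τ * E i + a i - (p i + 0 + τ * E' i + a i) = τ * E i - τ * E' i := by ring
    rw [e]; exact this)
  have h2 : ∀ k, r * |x k - x' k| ≤ (|τ| * ((C + 1) * M)) * N := by
    intro k
    have e : r * (x k - x' k) = (v k - v' k) - (τ * E k - τ * E' k) := by
      rw [h k, h' k]
      simp only [k.2, not_false_eq_true, dite_true]
      ring
    rw [← abs_of_pos hr, ← abs_mul, e]
    have h3 := h1 k
    have h4 := hτE k
    have := abs_sub (v k - v' k) (τ * E k - τ * E' k)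
    nlinarith
  by_contra hne
  have hNpos : 0 < N := by
    rw [hN, norm_pos_iff, sub_ne_zero]; exact hne
  have h5 : N ≤ (|τ| * ((C + 1) * M)) * N / r := by
    rw [hN, pi_norm_le_iff_of_nonneg (by positivity)]
    intro k
    rw [le_div_iff₀ hr, mul_comm]
    exact h2 k
  rw [le_div_iff₀ hr] at h5
  nlinarith
end BBR


open Polynomial Topology Filter
set_option linter.all false
namespace BBR

set_option maxHeartbeats 1000000 in
theorem core {n : ℕ} (U : Set (Fin n → ℝ)) (hU : IsOpen U) (P : Ideal (MvPolynomial (Fin n) ℝ)) [P.IsPrime]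
    (s : Finset (Fin n))
    (hs : IsTranscendenceBasis ℝ (fun i : s => Ideal.Quotient.mk P (MvPolynomial.X (i : Fin n))))
    (p : Fin n → ℝ) (C ρ r M : ℝ) (hC : 0 < C) (hr : 0 < r) (hM : 0 ≤ M) (hrρ : 4 * r ≤ ρ)
    (hlip : ∀ v ∈ {v | ∀ q ∈ P, MvPolynomial.eval v q = 0}, ∀ v' ∈ {v | ∀ q ∈ P, MvPolynomial.eval v q = 0},
      v ∈ Metric.ball p ρ → v' ∈ Metric.ball p ρ →
      ∀ d, 0 ≤ d → (∀ i ∈ s, |v i - v' i| ≤ d) → ∀ i, |v i - v' i| ≤ C * d)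
    (hloc : ∀ u, IsOpen u → p ∈ u → ∃ S', S' ⊆ u ∧ vI S' = P)
    (h0 : MvPolynomial (Fin n) ℝ) (hh0 : h0 ∉ P)
    (hstar : ∀ v : Fin n → ℝ, (∀ q ∈ P, MvPolynomial.eval v q = 0) → MvPolynomial.eval v h0 ≠ 0 → v ∉ U)
    (E : Fin n → MvPolynomial {j // j ∉ s} ℝ)
    (hE1 : ∀ i x, (∀ k, |x k| ≤ 1) → |MvPolynomial.eval x (E i)| ≤ M)
    (hE2 : ∀ i x x', (∀ k, |x k| ≤ 1) → (∀ k, |x' k| ≤ 1) → ∀ d, 0 ≤ d → (∀ k, |x k - x' k| ≤ d) →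
      |MvPolynomial.eval x (E i) - MvPolynomial.eval x' (E i)| ≤ M * d)
    (η : Fin n → MvPolynomial (Option {j // j ∉ s}) ℝ)
    (hη : ∀ c i, MvPolynomial.eval c (η i) = (p i + if h : i ∉ s then r * c (some ⟨i, h⟩) else 0)
      + c none * MvPolynomial.eval (fun k => c (some k)) (E i))
    (hT1 : ∀ c : Option {j // j ∉ s} → ℝ, ∑ k, c (some k) ^ 2 = 1 → 0 ≤ c none → c none ≤ 1 → ev η c ∈ U)
    (hT2 : ∀ c : Option {j // j ∉ s} → ℝ, ∑ k, c (some k) ^ 2 ≤ 1 → c none = 1 → ev η c ∈ U) : False := by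
  classical
  obtain ⟨δ, hδ, hδ1, ht1, ht2⟩ := tube U hU (ev η) (ev_continuous η) hT1 hT2
  have hdom : IsDomain (MvPolynomial (Fin n) ℝ ⧸ P) := Ideal.Quotient.isDomain P
  obtain ⟨S0, -, hS0⟩ := hloc Set.univ isOpen_univ trivial
  have hbasis := gg_basis P S0 hS0 s hs η p r hr.ne' (by
    intro c hc i
    rw [hη, hc]; ring)
  let φ : MvPolynomial (Option (Fin n)) ℝ →+* MvPolynomial (Option {j // j ∉ s}) (MvPolynomial (Fin n) ℝ ⧸ P) :=
    ((MvPolynomial.aeval (gg P η none) : MvPolynomial (Option (Fin n)) ℝ →ₐ[ℝ] _) : _ →+* _)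
  have hφ : ∀ q, φ q = MvPolynomial.aeval (gg P η none) q := fun q => rfl
  have hφinj : Function.Injective φ := hbasis.1
  have halg := alg_of_basis (gg P η none) hbasis
  have hRgen : ∀ T : Subring (MvPolynomial (Option {j // j ∉ s}) (MvPolynomial (Fin n) ℝ ⧸ P)), (∀ a, φ a ∈ T) →
      (∀ k : {j // j ∉ s}, MvPolynomial.X (some k) ∈ T) → ∀ r, r ∈ T := by
    intro T hT1 hT2 r
    refine R_gen P η none T hT1 ?_ r
    intro k hk
    cases k with
    | none => exact absurd rfl hk
    | some k => exact hT2 k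
  obtain ⟨h, hne, hpar⟩ := parity_lemma' (A := MvPolynomial (Option (Fin n)) ℝ)
    (R := MvPolynomial (Option {j // j ∉ s}) (MvPolynomial (Fin n) ℝ ⧸ P)) φ hφinj halg (fun k : {j // j ∉ s} => MvPolynomial.X (some k)) hRgen
    1 ((1 + δ) ^ 2) zero_le_one (by nlinarith)
  obtain ⟨h1, h1ne, hh1⟩ := exists_h1 (A := MvPolynomial (Option (Fin n)) ℝ)
    (R := MvPolynomial (Option {j // j ∉ s}) (MvPolynomial (Fin n) ℝ ⧸ P)) φ hφinj halg (MvPolynomial.C (Ideal.Quotient.mk P h0)) (by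
    rw [Ne, MvPolynomial.C_eq_zero, Ideal.Quotient.eq_zero_iff_mem]; exact hh0)
  have hhne : h * h1 ≠ 0 := mul_ne_zero hne h1ne
  -- first base point
  have hO : IsOpen {w : (Fin n → ℝ) × (Option {j // j ∉ s} → ℝ) | |w.2 none| * ((C + 1) * M) < r ∧ |w.2 none| * M < r ∧
      ‖w.1 - ev η w.2‖ < min (δ / 4) r ∧ |w.2 none| < δ / 4 ∧ ∑ k, w.2 (some k) ^ 2 < 1} := by
    have hc : Continuous fun w : (Fin n → ℝ) × (Option {j // j ∉ s} → ℝ) => ev η w.2 := (ev_continuous η).comp continuous_snd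
    simp only [Set.setOf_and]
    refine (isOpen_lt (by fun_prop) continuous_const).inter ((isOpen_lt (by fun_prop) continuous_const).inter
      ((isOpen_lt (by fun_prop) continuous_const).inter ((isOpen_lt (by fun_prop) continuous_const).inter
        (isOpen_lt (by fun_prop) continuous_const))))
  have hmem := hO.mem_nhds (x := (p, (0 : Option {j // j ∉ s} → ℝ))) (by
    have e : ev η (0 : Option {j // j ∉ s} → ℝ) = p := by
      funext i
      show MvPolynomial.eval 0 (η i) = p i
      rw [hη]; simp
    simp only [Set.mem_setOf_eq, e, Pi.zero_apply, abs_zero, zero_mul, sub_self, norm_zero]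
    refine ⟨hr, hr, by positivity, by positivity, by simp⟩)
  rw [mem_nhds_prod_iff'] at hmem
  obtain ⟨u, N, hu, hpu, hN, hcN, hsub⟩ := hmem
  obtain ⟨S', hS'u, hS'⟩ := hloc u hu hpu
  obtain ⟨v1, hv1, c1, hc1, hgen1⟩ := dense_R P S' hS' N 0 (hN.mem_nhds hcN) (φ (h * h1)) (by
    rw [Ne, map_eq_zero_iff φ hφinj]; exact hhne)
  obtain ⟨hτ1, hτ2, ha1, hτ3, hx1⟩ := hsub (Set.mk_mem_prod (hS'u hv1) hc1)
  simp only at hτ1 hτ2 ha1 hτ3 hx1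
  have hv1P : ∀ q ∈ P, MvPolynomial.eval v1 q = 0 := fun q hq => by rw [← hS'] at hq; exact hq v1 hv1
  set b1 := bb η none v1 c1 with hb1
  have hb1n : b1 none = c1 none := rfl
  have hb1s : ∀ i, b1 (some i) = v1 i - ev η c1 i := fun i => rfl
  have hb1sd : ∀ i, |b1 (some i)| < δ / 4 ∧ |b1 (some i)| < r := by
    intro i
    have h3 := norm_le_pi_norm (v1 - ev η c1) i
    have h4 := (h3.trans_lt ha1)
    rw [lt_min_iff] at h4
    exact h4
  -- second base point
  obtain ⟨b2, hb2, hb2d⟩ := (mv_dense (h * h1) hhne).exists_dist_lt (fun o : Option (Fin n) => o.elim (1 : ℝ) (fun _ => 0))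
    (ε := δ / 4) (by positivity)
  rw [dist_comm, dist_pi_lt_iff (by positivity)] at hb2d
  have hb2n : |b2 none - 1| < δ / 4 := hb2d none
  have hb2s : ∀ i, |b2 (some i)| < δ / 4 := by
    intro i
    have := hb2d (some i)
    simpa [Real.dist_eq] using this
  let ℓ := lineHom b1 b2
  have hfib : ∀ σ (y : MvPolynomial (Option {j // j ∉ s}) (MvPolynomial (Fin n) ℝ ⧸ P) →+* ℝ),
      y.comp φ = (evalRingHom σ).comp ℓ → ∀ o, bb η none (vv P y) (cc P y) o = b1 o + σ * (b2 o - b1 o) := by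
    intro σ y hy o
    have h2 := congrArg (fun g : MvPolynomial (Option (Fin n)) ℝ →+* ℝ => g (MvPolynomial.X o)) hy
    simp only [RingHom.comp_apply, coe_evalRingHom] at h2
    rw [hφ, Y_aeval, lineHom_eval, MvPolynomial.eval_X, MvPolynomial.eval_X] at h2
    exact h2
  have hvv : ∀ y : MvPolynomial (Option {j // j ∉ s}) (MvPolynomial (Fin n) ℝ ⧸ P) →+* ℝ,
      vv P y = ev η (cc P y) + fun i => bb η none (vv P y) (cc P y) (some i) := by
    intro y; funext i
    simp only [bb, Pi.add_apply, ev]; ring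
  have hcn : ∀ y : MvPolynomial (Option {j // j ∉ s}) (MvPolynomial (Fin n) ℝ ⧸ P) →+* ℝ,
      cc P y none = bb η none (vv P y) (cc P y) none := fun y => rfl
  have hgen : ∀ σ (y : MvPolynomial (Option {j // j ∉ s}) (MvPolynomial (Fin n) ℝ ⧸ P) →+* ℝ),
      y.comp φ = (evalRingHom σ).comp ℓ → (ℓ (h * h1)).eval σ ≠ 0 → vv P y ∉ U := by
    intro σ y hy hne
    have h2 := congrArg (fun g : MvPolynomial (Option (Fin n)) ℝ →+* ℝ => g (h * h1)) hy
    simp only [RingHom.comp_apply, coe_evalRingHom] at h2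
    rw [← h2, map_mul, map_mul] at hne
    have h3 := hh1 y (right_ne_zero_of_mul hne)
    rw [Y_C] at h3
    exact hstar _ (vv_mem P y) h3
  have hline1 : ∀ a b σ : ℝ, |a| < δ / 4 → |b| < δ / 4 → -(δ / 4) < σ → σ < 1 + δ / 4 → |a + σ * (b - a)| < 3 * δ / 4 := by
    intro a b σ ha hb h1 h2
    rw [abs_lt] at ha hb ⊢
    constructor <;> nlinarith
  have hev0 : (ℓ (h * h1)).eval 0 ≠ 0 := by
    rw [lineHom_eval]
    simp only [zero_mul, add_zero]
    rw [hφ, Y_aeval, vv_YY, cc_YY] at hgen1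
    exact hgen1
  have hev1 : (ℓ (h * h1)).eval 1 ≠ 0 := by
    rw [lineHom_eval]
    have e : (fun i => b1 i + 1 * (b2 i - b1 i)) = b2 := by funext i; ring
    rw [e]; exact hb2
  obtain ⟨y, hy, hyx⟩ := hpar h1 ℓ (δ / 4) (by positivity) hev0 hev1 (by
    rintro σ ⟨hσ1, hσ2⟩ hne y hy ⟨hy1, hy2⟩
    refine hgen σ y hy hne ?_
    have hf := hfib σ y hy
    rw [hvv]
    have hn1 : |cc P y none - σ| < 3 * δ / 4 := by
      rw [hcn, hf, hb1n]
      have := hline1 (c1 none) (b2 none - 1) σ hτ3 hb2n hσ1 hσ2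
      have e : c1 none + σ * (b2 none - c1 none) - σ = c1 none + σ * (b2 none - 1 - c1 none) := by ring
      rw [e]; exact this
    rw [abs_lt] at hn1
    refine ht1 _ _ hy1 hy2 (by linarith) (by linarith) ?_
    rw [pi_norm_lt_iff hδ]
    intro i
    rw [Real.norm_eq_abs, hf]
    have := hline1 _ _ σ (hb1sd i).1 (hb2s i) hσ1 hσ2
    linarith) (by
    refine ⟨YY P v1 hv1P c1, ⟨?_, ?_⟩, ?_⟩
    · apply RingHom.ext
      intro q
      simp only [RingHom.comp_apply, coe_evalRingHom]
      rw [hφ, Y_aeval, vv_YY, cc_YY, lineHom_eval]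
      simp only [zero_mul, add_zero]
      rfl
    · have : ∀ k : {j // j ∉ s}, (YY P v1 hv1P c1) (MvPolynomial.X (some k)) = c1 (some k) := fun k => by
        exact congrFun (cc_YY P v1 hv1P c1) (some k)
      simp only [this]
      exact hx1.le
    · rintro y ⟨hy, hyx⟩
      have hf := hfib 0 y hy
      simp only [zero_mul, add_zero] at hf
      have hn : cc P y none = c1 none := hf none
      have hx : ∀ k, |cc P y (some k)| ≤ 1 := fun k => sq_le_abs (fun k => cc P y (some k)) 1 zero_le_one (by rw [one_pow]; exact hyx) k
      have hx1' : ∀ k, |c1 (some k)| ≤ 1 := fun k => sq_le_abs (fun k => c1 (some k)) 1 zero_le_one (by simpa using hx1.le) k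
      have form : ∀ i, vv P y i = (p i + if h : i ∉ s then r * cc P y (some ⟨i, h⟩) else 0) + c1 none *
          MvPolynomial.eval (fun k => cc P y (some k)) (E i) + b1 (some i) := by
        intro i
        have h3 := hf (some i)
        have h4 := hη (cc P y) i
        rw [hn] at h4
        rw [← h3, ← h4]
        simp only [bb]; ring
      have form1 : ∀ i, v1 i = (p i + if h : i ∉ s then r * c1 (some ⟨i, h⟩) else 0) + c1 none *
          MvPolynomial.eval (fun k => c1 (some k)) (E i) + b1 (some i) := by
        intro i
        rw [hb1s, ← hη c1 i]
        simp only [ev]; ring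
      have ball : ∀ (v : Fin n → ℝ) (c : {j // j ∉ s} → ℝ), (∀ k, |c k| ≤ 1) → (∀ i, v i = (p i + if h : i ∉ s then r * c ⟨i, h⟩ else 0) + c1 none *
          MvPolynomial.eval c (E i) + b1 (some i)) → v ∈ Metric.ball p ρ := by
        intro v c hc hvc
        rw [Metric.mem_ball, dist_pi_lt_iff (by linarith)]
        intro i
        rw [Real.dist_eq, hvc i]
        have h3 := (hb1sd i).2
        have h4 : |c1 none * MvPolynomial.eval c (E i)| < r := by
          rw [abs_mul]
          exact (mul_le_mul_of_nonneg_left (hE1 i c hc) (abs_nonneg _)).trans_lt hτ2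
        have h5 : |(if h : i ∉ s then r * c ⟨i, h⟩ else 0)| ≤ r := by
          split_ifs with h
          · simpa using hr.le
          · rw [abs_mul, abs_of_pos hr]
            have := hc ⟨i, h⟩
            nlinarith
        rw [abs_lt] at h3 h4 ⊢
        rw [abs_le] at h5
        constructor <;> linarith
      have key := uniq s {v | ∀ q ∈ P, MvPolynomial.eval v q = 0} p C ρ r M hC hr hM hlip
        (fun k => cc P y (some k)) (fun k => c1 (some k)) (vv P y) v1 (vv_mem P y) hv1P
        (ball _ _ hx form) (ball _ _ hx1' form1) (c1 none) hτ1
        (fun i => MvPolynomial.eval (fun k => cc P y (some k)) (E i)) (fun i => MvPolynomial.eval (fun k => c1 (some k)) (E i))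
        (fun i => b1 (some i)) (fun d hd hdk i => hE2 i _ _ hx hx1' d hd hdk) form form1
      have hcc : cc P y = c1 := by
        funext o
        cases o with
        | none => exact hn
        | some k => exact congrFun key k
      refine Y_ext P _ _ ?_ ?_
      · rw [vv_YY]
        funext i
        rw [form i, form1 i, hcc]
      · rw [cc_YY, hcc])
  refine hgen 1 y hy hev1 ?_
  have hf := hfib 1 y hy
  have e : ∀ o, b1 o + 1 * (b2 o - b1 o) = b2 o := fun o => by ring
  simp only [e] at hf
  rw [hvv]
  refine ht2 _ _ hyx ?_ ?_
  · rw [hcn, hf]; linarith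
  · rw [pi_norm_lt_iff hδ]
    intro i
    rw [Real.norm_eq_abs, hf]
    have := hb2s i
    linarith
end BBR


open Polynomial Topology Filter
set_option linter.all false
namespace BBR

set_option maxHeartbeats 1000000 in
theorem bbr {n : ℕ} (f : Fin n → MvPolynomial (Fin n) ℝ) (hf : Function.Injective (ev f)) :
    Function.Surjective (ev f) := by
  classical
  by_contra hns
  set U := Set.range (ev f) with hUdef
  have hU : IsOpen U := (isOpenMap_ev f hf).isOpen_range
  have hS : (Uᶜ).Nonempty := by
    rw [Set.nonempty_compl, hUdef, Ne, Set.range_eq_univ]; exact hns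
  obtain ⟨B, hB, hSB, hprime, hloc⟩ := exists_B Uᶜ hS
  obtain ⟨h0, hh0, hstar⟩ := BBR.star f hf B hprime
  set P := vI (Uᶜ ∩ B) with hP
  obtain ⟨s, hs⟩ := exists_tb P
  have hQ : ∀ j, ∃ Q, j ∉ s → (Q ∈ P ∧ (∀ i ∉ s, i ≠ j → MvPolynomial.pderiv i Q = 0) ∧ MvPolynomial.pderiv j Q ∉ P) := by
    intro j
    by_cases hj : j ∈ s
    · exact ⟨0, fun h => absurd hj h⟩
    · obtain ⟨Q, h⟩ := exists_Q P s hs j hj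
      exact ⟨Q, fun _ => h⟩
  choose Q hQ using hQ
  have hprod : ∏ j ∈ Finset.univ.filter (fun j => j ∉ s), MvPolynomial.pderiv j (Q j) ∉ P := by
    intro hmem
    rw [hprime.prod_mem_iff] at hmem
    obtain ⟨j, hj, hjP⟩ := hmem
    exact (hQ j (Finset.mem_filter.1 hj).2).2.2 hjP
  rw [hP, notMem_vI] at hprod
  obtain ⟨p, ⟨hpU, hpB⟩, hpne⟩ := hprod
  rw [map_prod, Finset.prod_ne_zero_iff] at hpne
  have hVmem : ∀ v ∈ Uᶜ ∩ B, v ∈ {v | ∀ q ∈ P, MvPolynomial.eval v q = 0} := fun v hv q hq => hq v hv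
  obtain ⟨C, hC, ρ0, hρ0, hlip⟩ := local_lip {v | ∀ q ∈ P, MvPolynomial.eval v q = 0} s Q
    (fun j hj v hv => hv _ (hQ j hj).1) (fun j hj => (hQ j hj).2.1) p
    (fun j hj => hpne j (Finset.mem_filter.2 ⟨Finset.mem_univ _, hj⟩))
  obtain ⟨ρ1, hρ1, hballB⟩ := Metric.isOpen_iff.1 hB p hpB
  set ρ := min ρ0 ρ1 with hρ
  have hρpos : 0 < ρ := by positivity
  have hb0 : Metric.ball p ρ ⊆ Metric.ball p ρ0 := Metric.ball_subset_ball (min_le_left _ _)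
  have hb1 : Metric.ball p ρ ⊆ B := (Metric.ball_subset_ball (min_le_right _ _)).trans hballB
  set r := ρ / 4 with hr
  have hrpos : 0 < r := by positivity
  let η0 : ({j // j ∉ s} → ℝ) → Fin n → ℝ := fun x i => p i + if h : i ∉ s then r * x ⟨i, h⟩ else 0
  have hη0c : Continuous η0 := by
    apply continuous_pi
    intro i
    by_cases h : i ∈ s
    · simp only [η0, h, not_true_eq_false, dite_false]; exact continuous_const
    · simp only [η0, h, not_false_eq_true, dite_true]; fun_prop
  have hη0U : ∀ x, ∑ k, x k ^ 2 = 1 → η0 x ∈ U := by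
    intro x hx
    by_contra hnU
    have hxk : ∀ k, |x k| ≤ 1 := fun k => sq_le_abs x 1 zero_le_one (by rw [hx]; norm_num) k
    have hball : η0 x ∈ Metric.ball p ρ := by
      rw [Metric.mem_ball, dist_pi_lt_iff hρpos]
      intro i
      rw [Real.dist_eq]
      by_cases h : i ∈ s
      · simp only [η0, h, not_true_eq_false, dite_false]; simpa using hρpos
      · simp only [η0, h, not_false_eq_true, dite_true, add_sub_cancel_left]
        rw [abs_mul, abs_of_pos hrpos]
        have := hxk ⟨i, h⟩
        nlinarith
    have h3 := hlip (η0 x) (hVmem _ ⟨hnU, hb1 hball⟩) p (hVmem _ ⟨hpU, hpB⟩) (hb0 hball) (Metric.mem_ball_self hρ0) 0 le_rfl (by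
      intro i hi
      simp [η0, hi])
    have h4 : ∀ k, x k = 0 := by
      intro k
      have h5 := h3 k
      have hk := k.2
      simp only [η0, hk, not_false_eq_true, dite_true, add_sub_cancel_left, mul_zero] at h5
      have h6 := abs_nonpos_iff.1 h5
      rcases mul_eq_zero.1 h6 with h | h
      · exact absurd h hrpos.ne'
      · exact h
    simp [h4] at hx
  -- compact sphere and ball
  have hballc : IsCompact {x : {j // j ∉ s} → ℝ | ∑ k, x k ^ 2 ≤ 1} := by
    have := isCompact_sq_le (0 : {j // j ∉ s} → ℝ) 1
    simpa using this
  have hsphc : IsCompact {x : {j // j ∉ s} → ℝ | ∑ k, x k ^ 2 = 1} :=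
    hballc.of_isClosed_subset (isClosed_eq (by fun_prop) continuous_const) (fun x hx => le_of_eq hx)
  obtain ⟨ε, hε, hthick⟩ := (hsphc.image hη0c).exists_thickening_subset_open hU (by
    rintro _ ⟨x, hx, rfl⟩; exact hη0U x hx)
  obtain ⟨w, hw⟩ := sw2 f hf _ hsphc η0 hη0c (fun x hx => hη0U x hx) ε hε
  let E : Fin n → MvPolynomial {j // j ∉ s} ℝ := fun i => MvPolynomial.aeval w (f i) -
    (MvPolynomial.C (p i) + if h : i ∉ s then MvPolynomial.C r * MvPolynomial.X ⟨i, h⟩ else 0)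
  have hE : ∀ x i, MvPolynomial.eval x (E i) = ev f (ev w x) i - η0 x i := by
    intro x i
    simp only [E, η0, map_sub, map_add, MvPolynomial.eval_C, eval_aeval]
    by_cases h : i ∈ s
    · simp [h, ev]
    · simp [h, ev]
  let η : Fin n → MvPolynomial (Option {j // j ∉ s}) ℝ := fun i =>
    (MvPolynomial.C (p i) + if h : i ∉ s then MvPolynomial.C r * MvPolynomial.X (some ⟨i, h⟩) else 0)
      + MvPolynomial.X none * MvPolynomial.rename some (E i)
  have hη : ∀ c i, MvPolynomial.eval c (η i) = (p i + if h : i ∉ s then r * c (some ⟨i, h⟩) else 0)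
      + c none * MvPolynomial.eval (fun k => c (some k)) (E i) := by
    intro c i
    simp only [η, map_add, map_mul, MvPolynomial.eval_C, MvPolynomial.eval_X, MvPolynomial.eval_rename]
    by_cases h : i ∈ s
    · simp [h, Function.comp_def]
    · simp [h, Function.comp_def]
  have hη' : ∀ c, ev η c = fun i => η0 (fun k => c (some k)) i + c none * (ev f (ev w (fun k => c (some k))) i - η0 (fun k => c (some k)) i) := by
    intro c; funext i
    rw [← hE]
    exact hη c i
  choose M0 hM0 hM1 hM2 using fun i => poly_lip (E i)
  have hMle : ∀ i, M0 i ≤ ∑ j, M0 j := fun i => Finset.single_le_sum (fun j _ => hM0 j) (Finset.mem_univ i)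
  refine core U hU P s hs p C ρ r (∑ j, M0 j) hC hrpos (Finset.sum_nonneg fun j _ => hM0 j) (by rw [hr]; linarith)
    (fun v hv v' hv' h1 h2 => hlip v hv v' hv' (hb0 h1) (hb0 h2)) ?_ h0 hh0 (fun v hv hne => hstar v hv hne) E ?_ ?_ η hη ?_ ?_
  · intro u hu hpu
    refine ⟨Uᶜ ∩ (B ∩ u), fun v hv => hv.2.2, ?_⟩
    exact hloc (B ∩ u) Set.inter_subset_left (hB.inter hu) ⟨p, hpU, hpB, hpu⟩
  · intro i x hx
    exact (hM1 i x hx).trans (hMle i)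
  · intro i x x' hx hx' d hd hdk
    exact (hM2 i x x' hx hx' d hd hdk).trans (mul_le_mul_of_nonneg_right (hMle i) hd)
  · intro c hc h1 h2
    apply hthick
    rw [Metric.mem_thickening_iff]
    refine ⟨η0 (fun k => c (some k)), ⟨_, hc, rfl⟩, ?_⟩
    have h3 := hw (fun k => c (some k)) hc
    rw [dist_pi_lt_iff hε] at h3 ⊢
    intro i
    have h4 := h3 i
    rw [Real.dist_eq] at h4 ⊢
    rw [hη']
    simp only [add_sub_cancel_left]
    rw [abs_mul, abs_of_nonneg h1]
    have := abs_nonneg (ev f (ev w (fun k => c (some k))) i - η0 (fun k => c (some k)) i)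
    nlinarith
  · intro c hc h1
    refine ⟨ev w (fun k => c (some k)), ?_⟩
    rw [hη']
    funext i
    rw [h1]; ring
end BBR


open Polynomial Topology Filter
set_option linter.all false
namespace BBR

theorem two_dim {V : Type*} [AddCommGroup V] [Module ℝ V] (G : ℝ → ℝ → V)
    (hG : ∀ x y x' y', G x y = G x' y' → x = x' ∧ y = y')
    (g : ℝ → ℝ → ℝ) (k : ℝ → ℝ → ℝ)
    (hg : ∀ y, Function.Surjective (g y)) (hk : ∀ x, Function.Surjective (k x))
    (hg0 : ∀ x y, G x y = G 0 y + g y x • (G 1 y - G 0 y))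
    (hk0 : ∀ x y, G x y = G x 0 + k x y • (G x 1 - G x 0)) : ∀ x, g 0 x = g 1 x := by
  set p := G 0 0 with hp
  set a := G 1 0 - G 0 0 with ha
  set b := G 1 1 - G 0 1 with hb
  set d := G 0 1 - G 0 0 with hd
  have ha0 : a ≠ 0 := fun h => by
    have := hG 1 0 0 0 (sub_eq_zero.1 h); simp at this
  have hb0 : b ≠ 0 := fun h => by
    have := hG 1 1 0 1 (sub_eq_zero.1 h); simp at this
  have hx0 : ∀ x, G x 0 = p + g 0 x • a := fun x => hg0 x 0
  have hx1 : ∀ x, G x 1 = p + d + g 1 x • b := fun x => by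
    rw [hg0 x 1, hp, hd, hb]; abel
  have hxy : ∀ x y, G x y = p + g 0 x • a + k x y • (d + g 1 x • b - g 0 x • a) := by
    intro x y
    rw [hk0 x y, hx0, hx1]
    congr 2
    abel
  have g00 : ∀ y, g y 0 = 0 := by
    intro y
    have h1 := hg0 0 y
    have h2 : g y 0 • (G 1 y - G 0 y) = 0 := by simpa using h1
    rcases smul_eq_zero.1 h2 with h | h
    · exact h
    · have := hG 1 y 0 y (sub_eq_zero.1 h); simp at this
  have g01 : ∀ y, g y 1 = 1 := by
    intro y
    have h1 := hg0 1 y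
    have h2 : (g y 1 - 1) • (G 1 y - G 0 y) = 0 := by
      rw [sub_smul, one_smul, sub_eq_zero]
      rw [eq_sub_iff_add_eq, add_comm]; exact h1.symm
    rcases smul_eq_zero.1 h2 with h | h
    · linarith
    · have := hG 1 y 0 y (sub_eq_zero.1 h); simp at this
  by_cases hspan : ∃ s t : ℝ, d = s • a + t • b
  · obtain ⟨s, t, hst⟩ := hspan
    obtain ⟨x, hx⟩ := hg 0 s
    obtain ⟨x', hx'⟩ := hg 1 (-t)
    have h1 : G x 0 = G x' 1 := by
      rw [hx0, hx1, hx, hx', hst]; module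
    have := (hG _ _ _ _ h1).2
    simp at this
  by_cases hpar : ∃ c : ℝ, b = c • a
  · obtain ⟨c, hc⟩ := hpar
    have hmu : ∀ x, c * g 1 x - g 0 x = 0 := by
      intro x
      by_contra hne
      obtain ⟨y, hy⟩ := hk x (-(g 0 x) / (c * g 1 x - g 0 x))
      obtain ⟨y', hy'⟩ := hk 0 (k x y)
      have h1 : G x y = G 0 y' := by
        rw [hxy, hxy 0 y', hy', g00, g00, hc]
        have e : g 0 x + k x y * (c * g 1 x - g 0 x) = 0 := by
          rw [hy]; field_simp; ring
        have e2 : p + g 0 x • a + k x y • (d + g 1 x • c • a - g 0 x • a)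
          = p + k x y • d + (g 0 x + k x y * (c * g 1 x - g 0 x)) • a := by module
        rw [e2, e]; module
      have := (hG _ _ _ _ h1).1
      subst this
      apply hne
      rw [g00, g00]; ring
    have hc1 := hmu 1
    rw [g01, g01] at hc1
    intro x
    have := hmu x
    have e : c = 1 := by linarith
    rw [e] at this; linarith
  have hind : ∀ α β γ : ℝ, α • a + β • b + γ • d = 0 → α = 0 ∧ β = 0 ∧ γ = 0 := by
    intro α β γ h
    have hγ : γ = 0 := by
      by_contra hne
      apply hspan
      refine ⟨-(α / γ), -(β / γ), ?_⟩
      have h2 : γ • d = -(α • a + β • b) := by rw [eq_neg_iff_add_eq_zero, add_comm]; exact h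
      have h3 : d = γ⁻¹ • (γ • d) := by rw [smul_smul, inv_mul_cancel₀ hne, one_smul]
      rw [h3, h2]; simp only [div_eq_mul_inv]; module
    subst hγ
    rw [zero_smul, add_zero] at h
    have hβ : β = 0 := by
      by_contra hne
      apply hpar
      refine ⟨-(α / β), ?_⟩
      have h2 : β • b = -(α • a) := by rw [eq_neg_iff_add_eq_zero, add_comm]; exact h
      have h3 : b = β⁻¹ • (β • b) := by rw [smul_smul, inv_mul_cancel₀ hne, one_smul]
      rw [h3, h2]; simp only [div_eq_mul_inv]; module
    subst hβ
    rw [zero_smul, add_zero] at h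
    exact ⟨(smul_eq_zero.1 h).resolve_right ha0, rfl, rfl⟩
  have key : ∀ x, (1 - k x 2) * g 0 x - g 2 x * (1 - k 1 2) = 0 ∧ k x 2 * g 1 x - g 2 x * k 1 2 = 0 ∧
      k x 2 - k 0 2 - g 2 x * (k 1 2 - k 0 2) = 0 := by
    intro x
    apply hind
    have h1 := hg0 x 2
    rw [hxy x 2, hxy 0 2, hxy 1 2, g00, g00, g01, g01] at h1
    rw [← sub_eq_zero] at h1
    rw [← h1]; module
  have k0 : ∀ x, k x 2 ≠ 0 := by
    intro x h
    have h1 := hk0 x 2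
    rw [h, zero_smul, add_zero] at h1
    have := (hG _ _ _ _ h1).2
    norm_num at this
  have k1 : ∀ x, k x 2 ≠ 1 := by
    intro x h
    have h1 := hk0 x 2
    rw [h, one_smul, add_sub_cancel] at h1
    have := (hG _ _ _ _ h1).2
    norm_num at this
  have hconst : k 1 2 = k 0 2 := by
    by_contra hne
    obtain ⟨x, hx⟩ := hg 2 (-(k 0 2) / (k 1 2 - k 0 2))
    have h1 := (key x).2.2
    have hne' : k 1 2 - k 0 2 ≠ 0 := sub_ne_zero.2 hne
    rw [hx, div_mul_cancel₀ _ hne'] at h1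
    exact k0 x (by linarith)
  intro x
  obtain ⟨h1, h2, h3⟩ := key x
  have e1 : k x 2 = k 1 2 := by rw [hconst] at h3 ⊢; linarith
  rw [e1] at h1 h2
  have e2 : g 0 x = g 2 x := by
    have : (1 - k 1 2) * (g 0 x - g 2 x) = 0 := by linarith
    rcases mul_eq_zero.1 this with h | h
    · exact absurd (by linarith) (k1 1)
    · linarith
  have e3 : g 1 x = g 2 x := by
    have : (k 1 2) * (g 1 x - g 2 x) = 0 := by linarith
    rcases mul_eq_zero.1 this with h | h
    · exact absurd h (k0 1)
    · linarith
  rw [e2, e3]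

/-- normalised parametrisation of the image of one line -/
theorem line_param {V : Type*} [AddCommGroup V] [Module ℝ V] (φ : ℝ → V) (hφ : Function.Injective φ)
    (a b : V) (hb : b ≠ 0) (h : Set.range φ = {x | ∃ t : ℝ, x = a + t • b}) :
    ∃ g : ℝ → ℝ, Function.Bijective g ∧ g 0 = 0 ∧ g 1 = 1 ∧ ∀ t, φ t = φ 0 + g t • (φ 1 - φ 0) := by
  have h1 : ∀ t, ∃ s : ℝ, φ t = a + s • b := by
    intro t
    have : φ t ∈ Set.range φ := ⟨t, rfl⟩
    rw [h] at this; exact this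
  choose s hs using h1
  have hsinj : Function.Injective s := by
    intro t t' e
    apply hφ
    rw [hs, hs, e]
  have hssurj : Function.Surjective s := by
    intro c
    have : a + c • b ∈ Set.range φ := by rw [h]; exact ⟨c, rfl⟩
    obtain ⟨t, ht⟩ := this
    refine ⟨t, ?_⟩
    rw [hs] at ht
    have := add_left_cancel ht
    exact smul_left_injective ℝ hb this
  have hne : s 1 - s 0 ≠ 0 := sub_ne_zero.2 fun e => one_ne_zero (hsinj e)
  refine ⟨fun t => (s t - s 0) / (s 1 - s 0), ⟨?_, ?_⟩, by simp, by simp [hne], ?_⟩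
  · intro t t' e
    apply hsinj
    have := (div_left_inj' hne).1 e
    linarith
  · intro c
    obtain ⟨t, ht⟩ := hssurj (s 0 + c * (s 1 - s 0))
    refine ⟨t, ?_⟩
    simp only [ht]
    field_simp
    ring
  · intro t
    have e : φ 1 - φ 0 = (s 1 - s 0) • b := by rw [hs 1, hs 0]; module
    rw [e, smul_smul, div_mul_cancel₀ _ hne, hs t, hs 0]; module

theorem multi_affine {V : Type*} [AddCommGroup V] [Module ℝ V] : ∀ {n : ℕ} (H : (Fin n → ℝ) → V)
    (hH : ∀ z i t, H (Function.update z i t) = H (Function.update z i 0) + t • (H (Function.update z i 1) - H (Function.update z i 0))),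
    ∃ u : (Fin n → Bool) → V, ∀ z, H z = ∑ δ : Fin n → Bool, (∏ i, if δ i then z i else 1) • u δ := by
  intro n
  induction n with
  | zero =>
    intro H hH
    refine ⟨fun _ => H 0, fun z => ?_⟩
    simp
    congr 1
    exact Subsingleton.elim _ _
  | succ n ih =>
    intro H hH
    have hc : ∀ (c : ℝ) z i t, H (Fin.cons c (Function.update z i t) : Fin (n + 1) → ℝ)
        = H (Fin.cons c (Function.update z i 0) : Fin (n + 1) → ℝ) + t • (H (Fin.cons c (Function.update z i 1) : Fin (n + 1) → ℝ) - H (Fin.cons c (Function.update z i 0) : Fin (n + 1) → ℝ)) := by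
      intro c z i t
      simp only [Fin.cons_update]
      exact hH _ _ _
    obtain ⟨u0, hu0⟩ := ih (fun z => H (Fin.cons 0 z : Fin (n + 1) → ℝ)) (fun z i t => hc 0 z i t)
    obtain ⟨u1, hu1⟩ := ih (fun z => H (Fin.cons 1 z : Fin (n + 1) → ℝ) - H (Fin.cons 0 z : Fin (n + 1) → ℝ)) (fun z i t => by
      rw [hc 0 z i t, hc 1 z i t]; module)
    refine ⟨fun δ => if δ 0 then u1 (Fin.tail δ) else u0 (Fin.tail δ), fun z => ?_⟩
    have h1 : H z = H (Fin.cons 0 (Fin.tail z) : Fin (n + 1) → ℝ) + z 0 • (H (Fin.cons 1 (Fin.tail z) : Fin (n + 1) → ℝ) - H (Fin.cons 0 (Fin.tail z) : Fin (n + 1) → ℝ)) := by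
      have h2 := hH z 0 (z 0)
      have e : ∀ t, Function.update z 0 t = (Fin.cons t (Fin.tail z) : Fin (n + 1) → ℝ) := by
        intro t
        conv_lhs => rw [← Fin.cons_self_tail z]
        rw [Fin.update_cons_zero]
      rw [Function.update_eq_self, e, e] at h2
      exact h2
    have h2 := hu0 (Fin.tail z)
    have h3 := hu1 (Fin.tail z)
    rw [h1, h3, h2]
    rw [← (Fin.consEquiv (fun _ : Fin (n + 1) => Bool)).sum_comp, Fintype.sum_prod_type]
    simp only [Fintype.sum_bool, Fin.consEquiv_apply, Fin.prod_univ_succ, Fin.cons_zero, Fin.cons_succ, Fin.tail_cons]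
    simp only [if_true, Bool.false_eq_true, if_false, one_mul]
    rw [add_comm, Finset.smul_sum]
    congr 1
    refine Finset.sum_congr rfl fun δ _ => ?_
    rw [smul_smul]; rfl

theorem par_update {V : Type*} [AddCommGroup V] [Module ℝ V] {n : ℕ} (G : (Fin n → ℝ) → V) (hG : Function.Injective G)
    (hline : ∀ i α, ∃ g : ℝ → ℝ, Function.Bijective g ∧ g 0 = 0 ∧ g 1 = 1 ∧ ∀ t, G (Function.update α i t)
      = G (Function.update α i 0) + g t • (G (Function.update α i 1) - G (Function.update α i 0)))
    (i : Fin n) (g : ℝ → ℝ) (α : Fin n → ℝ)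
    (hg : ∀ t, G (Function.update α i t) = G (Function.update α i 0) + g t • (G (Function.update α i 1) - G (Function.update α i 0)))
    (j : Fin n) (s : ℝ) (t : ℝ) :
    G (Function.update (Function.update α j s) i t) = G (Function.update (Function.update α j s) i 0)
      + g t • (G (Function.update (Function.update α j s) i 1) - G (Function.update (Function.update α j s) i 0)) := by
  by_cases hij : i = j
  · subst hij
    simp only [Function.update_idem]
    exact hg t
  by_cases hs : s = α j
  · subst hs
    simp only [Function.update_eq_self]
    exact hg t
  let c : ℝ → ℝ := fun y => α j + y * (s - α j)
  have hs' : s - α j ≠ 0 := sub_ne_zero.2 hs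
  choose g' hg'b hg'0 hg'1 hg' using fun y => hline i (Function.update α j (c y))
  choose k' hk'b hk'0 hk'1 hk' using fun x => hline j (Function.update α i x)
  have hcomm : ∀ x y, Function.update (Function.update α i x) j y = Function.update (Function.update α j y) i x := by
    intro x y; rw [Function.update_comm hij]
  simp only [hcomm] at hk'
  have key := two_dim (fun x y => G (Function.update (Function.update α j (c y)) i x)) (by
    intro x y x' y' h
    have h1 := hG h
    have h2 := congrFun h1 i
    have h3 := congrFun h1 j
    simp only [Function.update_self] at h2
    rw [Function.update_of_ne (Ne.symm hij), Function.update_of_ne (Ne.symm hij), Function.update_self, Function.update_self] at h3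
    refine ⟨h2, ?_⟩
    have : y * (s - α j) = y' * (s - α j) := by simp only [c] at h3; linarith
    exact mul_right_cancel₀ hs' this) g'
    (fun x y => (k' x (c y) - k' x (c 0)) / (k' x (c 1) - k' x (c 0))) (fun y => (hg'b y).2) (by
    intro x z
    have hne : k' x (c 1) - k' x (c 0) ≠ 0 := by
      rw [sub_ne_zero]
      intro e
      have := (hk'b x).1 e
      simp only [c] at this
      exact hs' (by linarith)
    obtain ⟨w, hw⟩ := (hk'b x).2 (k' x (c 0) + z * (k' x (c 1) - k' x (c 0)))
    refine ⟨(w - α j) / (s - α j), ?_⟩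
    have e : c ((w - α j) / (s - α j)) = w := by simp only [c]; rw [div_mul_cancel₀ _ hs']; ring
    simp only [e, hw]
    field_simp
    ring) (fun x y => hg' y x) (by
    intro x y
    have hne : k' x (c 1) - k' x (c 0) ≠ 0 := by
      rw [sub_ne_zero]
      intro e
      have := (hk'b x).1 e
      simp only [c] at this
      exact hs' (by linarith)
    set A := G (Function.update (Function.update α j 0) i x)
    set B := G (Function.update (Function.update α j 1) i x)
    rw [hk' x (c y), hk' x (c 0), hk' x (c 1)]
    have e : (A + k' x (c 1) • (B - A) - (A + k' x (c 0) • (B - A))) = (k' x (c 1) - k' x (c 0)) • (B - A) := by module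
    rw [e, smul_smul, div_mul_cancel₀ _ hne]; module)
  have hc0 : c 0 = α j := by simp [c]
  have hc1 : c 1 = s := by simp [c]
  have e0 := hg' 0
  have e1 := hg' 1
  rw [hc0, Function.update_eq_self] at e0
  rw [hc1] at e1
  have hgg : ∀ t, g t = g' 0 t := by
    intro t
    have h1 := (hg t).symm.trans (e0 t)
    have h2 := add_left_cancel h1
    refine smul_left_injective ℝ ?_ h2
    intro h
    have h3 := congrFun (hG (sub_eq_zero.1 h)) i
    simp at h3
  rw [hgg, key]
  exact e1 t

theorem par_all {V : Type*} [AddCommGroup V] [Module ℝ V] {n : ℕ} (G : (Fin n → ℝ) → V) (hG : Function.Injective G)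
    (hline : ∀ i α, ∃ g : ℝ → ℝ, Function.Bijective g ∧ g 0 = 0 ∧ g 1 = 1 ∧ ∀ t, G (Function.update α i t)
      = G (Function.update α i 0) + g t • (G (Function.update α i 1) - G (Function.update α i 0))) :
    ∃ f : Fin n → ℝ → ℝ, (∀ i, Function.Bijective (f i) ∧ f i 0 = 0 ∧ f i 1 = 1) ∧ ∀ i α t, G (Function.update α i t)
      = G (Function.update α i 0) + f i t • (G (Function.update α i 1) - G (Function.update α i 0)) := by
  classical
  choose f hb h0 h1 hf using fun i => hline i 0
  refine ⟨f, fun i => ⟨hb i, h0 i, h1 i⟩, fun i α => ?_⟩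
  have : ∀ S : Finset (Fin n), ∀ t, G (Function.update (S.piecewise α 0) i t)
      = G (Function.update (S.piecewise α 0) i 0) + f i t • (G (Function.update (S.piecewise α 0) i 1) - G (Function.update (S.piecewise α 0) i 0)) := by
    intro S
    induction S using Finset.induction_on with
    | empty => simpa using hf i
    | insert j S hj ih =>
      rw [Finset.piecewise_insert]
      exact par_update G hG hline i (f i) _ ih j (α j)
  have h2 := this Finset.univ
  simpa using h2

theorem poly_form {V : Type*} [AddCommGroup V] [Module ℝ V] {n : ℕ} (G : (Fin n → ℝ) → V) (hG : Function.Injective G)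
    (hline : ∀ i α, ∃ g : ℝ → ℝ, Function.Bijective g ∧ g 0 = 0 ∧ g 1 = 1 ∧ ∀ t, G (Function.update α i t)
      = G (Function.update α i 0) + g t • (G (Function.update α i 1) - G (Function.update α i 0))) :
    ∃ (u : (Fin n → Bool) → V) (f : Fin n → ℝ → ℝ), (∀ i, Function.Bijective (f i) ∧ f i 0 = 0 ∧ f i 1 = 1) ∧
      ∀ α, G α = ∑ δ : Fin n → Bool, (∏ i, if δ i then f i (α i) else 1) • u δ := by
  obtain ⟨f, hf, hpar⟩ := par_all G hG hline
  let e : Fin n → ℝ ≃ ℝ := fun i => Equiv.ofBijective (f i) (hf i).1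
  have he : ∀ i t, e i t = f i t := fun i t => rfl
  have he0 : ∀ i, (e i).symm 0 = 0 := fun i => by rw [Equiv.symm_apply_eq, he, (hf i).2.1]
  have he1 : ∀ i, (e i).symm 1 = 1 := fun i => by rw [Equiv.symm_apply_eq, he, (hf i).2.2]
  have hup : ∀ (z : Fin n → ℝ) i t, (fun j => (e j).symm (Function.update z i t j)) = Function.update (fun j => (e j).symm (z j)) i ((e i).symm t) := by
    intro z i t
    funext j
    by_cases h : j = i
    · subst h; simp
    · simp [h]
  obtain ⟨u, hu⟩ := multi_affine (fun z => G (fun i => (e i).symm (z i))) (by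
    intro z i t
    simp only [hup, he0, he1]
    rw [hpar]
    congr 2
    rw [← he, Equiv.apply_symm_apply])
  refine ⟨u, f, hf, fun α => ?_⟩
  have := hu (fun i => e i (α i))
  simp only [Equiv.symm_apply_apply] at this
  exact this
end BBR


open Polynomial Topology Filter
set_option linter.all false
namespace BBR

theorem exists_poly {n m : ℕ} (u : (Fin n → Bool) → Fin m → ℝ) :
    ∃ q : Fin m → MvPolynomial (Fin n) ℝ, ∀ z, ev q z = ∑ δ : Fin n → Bool, (∏ i, if δ i then z i else 1) • u δ := by
  refine ⟨fun k => ∑ δ : Fin n → Bool, (∏ i, if δ i then MvPolynomial.X i else 1) * MvPolynomial.C (u δ k), fun z => ?_⟩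
  funext k
  simp only [ev, map_sum, map_mul, map_prod, MvPolynomial.eval_C, Finset.sum_apply, Pi.smul_apply, smul_eq_mul]
  refine Finset.sum_congr rfl fun δ _ => ?_
  congr 1
  refine Finset.prod_congr rfl fun i _ => ?_
  split_ifs <;> simp

theorem dim_le {n m : ℕ} (q : Fin m → MvPolynomial (Fin n) ℝ) (hq : Function.Injective (ev q)) : n ≤ m := by
  by_contra hlt
  rw [not_le] at hlt
  let q' : Fin n → MvPolynomial (Fin n) ℝ := fun k => if h : (k : ℕ) < m then q ⟨k, h⟩ else 0
  have hinj : Function.Injective (ev q') := by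
    intro z z' h
    apply hq
    funext k
    have h1 := congrFun h ⟨k, k.2.trans hlt⟩
    simpa [ev, q'] using h1
  obtain ⟨z, hz⟩ := bbr q' hinj (fun _ => 1)
  have h1 := congrFun hz ⟨m, hlt⟩
  simp [ev, q'] at h1

end BBR


/-- **Theorem (polynomial form for collineations in n directions).**
If `m, n ≥ 2`, `v₁,…,vₙ ∈ ℝⁿ` are linearly independent and `F : ℝⁿ → ℝᵐ` is an
injection mapping each line in `ℒ(v₁,…,vₙ)` onto a line, then (taking `uᵢ = vᵢ` as
the basis) there are coefficients `u_δ ∈ ℝᵐ` for `δ ∈ {0,1}ⁿ` and bijections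
`fᵢ : ℝ → ℝ` with `fᵢ 0 = 0`, `fᵢ 1 = 1`, such that
`F (∑ αᵢ vᵢ) = ∑_δ (∏ᵢ fᵢ(αᵢ)^{δᵢ}) u_δ`. Moreover `m ≥ n`, and if `m = n` then
`F` is a bijection. -/
theorem polynomial_form_of_collineation_n_directions
    {n m : ℕ} (hn : 2 ≤ n) (hm : 2 ≤ m)
    (v : Fin n → (Fin n → ℝ)) (hv : LinearIndependent ℝ v)
    (F : (Fin n → ℝ) → (Fin m → ℝ))
    (hinj : Function.Injective F)
    (honto : ∀ (i : Fin n) (a : Fin n → ℝ), IsLine (F '' lineThru a (v i))) :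
    (∃ (u : (Fin n → Bool) → (Fin m → ℝ)) (f : Fin n → ℝ → ℝ),
      (∀ i, Function.Bijective (f i) ∧ f i 0 = 0 ∧ f i 1 = 1) ∧
      ∀ α : Fin n → ℝ,
        F (∑ i, α i • v i) =
          ∑ δ : Fin n → Bool, (∏ i, if δ i then f i (α i) else 1) • u δ) ∧
    n ≤ m ∧ (m = n → Function.Surjective F) := by
  classical
  set G : (Fin n → ℝ) → (Fin m → ℝ) := fun α => F (∑ i, α i • v i) with hGdef
  have hG : Function.Injective G := by
    intro α β h
    have h1 := hinj h
    have h2 := Fintype.linearIndependent_iff.1 hv (fun i => α i - β i) (by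
      simp only [sub_smul, Finset.sum_sub_distrib, sub_eq_zero]; exact h1)
    funext i
    exact sub_eq_zero.1 (h2 i)
  have hup : ∀ (α : Fin n → ℝ) (i : Fin n) (t : ℝ),
      ∑ j, Function.update α i t j • v j = (∑ j, Function.update α i 0 j • v j) + t • v i := by
    intro α i t
    rw [← Finset.add_sum_erase _ _ (Finset.mem_univ i), ← Finset.add_sum_erase _ (fun j => Function.update α i 0 j • v j) (Finset.mem_univ i)]
    have e : ∀ c : ℝ, ∑ j ∈ Finset.univ.erase i, Function.update α i c j • v j = ∑ j ∈ Finset.univ.erase i, α j • v j := by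
      intro c
      refine Finset.sum_congr rfl fun j hj => ?_
      rw [Function.update_of_ne (Finset.ne_of_mem_erase hj)]
    rw [e t, e 0]
    simp only [Function.update_self, zero_smul, zero_add]
    rw [add_comm]
  have hline : ∀ i α, ∃ g : ℝ → ℝ, Function.Bijective g ∧ g 0 = 0 ∧ g 1 = 1 ∧ ∀ t, G (Function.update α i t)
      = G (Function.update α i 0) + g t • (G (Function.update α i 1) - G (Function.update α i 0)) := by
    intro i α
    obtain ⟨a, b, hb, hab⟩ := honto i (∑ j, Function.update α i 0 j • v j)
    refine BBR.line_param (fun t => G (Function.update α i t)) ?_ a b hb ?_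
    · intro t t' h
      have h1 := congrFun (hG h) i
      simpa using h1
    · have h2 : lineThru a b = {x | ∃ t : ℝ, x = a + t • b} := rfl
      rw [← h2, ← hab]
      ext x
      constructor
      · rintro ⟨t, rfl⟩
        exact ⟨_, ⟨t, rfl⟩, by simp only [hGdef]; rw [hup α i t]⟩
      · rintro ⟨y, ⟨t, rfl⟩, rfl⟩
        exact ⟨t, by simp only [hGdef]; rw [hup α i t]⟩
  obtain ⟨u, f, hf, hform⟩ := BBR.poly_form G hG hline
  obtain ⟨q, hq⟩ := BBR.exists_poly u
  let e : Fin n → ℝ ≃ ℝ := fun i => Equiv.ofBijective (f i) (hf i).1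
  have he : ∀ i t, f i ((e i).symm t) = t := fun i t => (e i).apply_symm_apply t
  have hqG : ∀ z, BBR.ev q z = G (fun i => (e i).symm (z i)) := by
    intro z
    rw [hq, hform]
    simp only [he]
  have hqinj : Function.Injective (BBR.ev q) := by
    intro z z' h
    rw [hqG, hqG] at h
    funext i
    exact (e i).symm.injective (congrFun (hG h) i)
  refine ⟨⟨u, f, hf, hform⟩, BBR.dim_le q hqinj, ?_⟩
  intro hmn
  subst hmn
  intro y
  obtain ⟨z, hz⟩ := BBR.bbr q hqinj y
  exact ⟨_, (hqG z).symm.trans hz⟩
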